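/- arXiv:1602.06372 — 4 statements merged into one kernel-verified Lean document; each statement's English description precedes it below -/
import Mathlib

section
/- Every convex quadrilateral in the Euclidean plane admits a periodic edge-to-edge monohedral tiling of the plane. -/
open EuclideanGeometry

noncomputable section

/-- The Euclidean plane. -/
abbrev Plane : Type := EuclideanSpace ℝ (Fin 2)

/-- Translate a subset of the plane by a vector. -/
def TranslateSet (v : Plane) (t : Set Plane) : Set Plane := (fun x => x + v) '' t

/-- `T` is a monohedral tiling of the plane by the prototile `P`: every tile is the
image of `P` under an isometry of the plane, the tiles cover the plane, and the
interiors of distinct tiles are disjoint. -/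
def IsMonohedralTiling (P : Set Plane) (T : Set (Set Plane)) : Prop :=
  (∀ t ∈ T, ∃ f : Plane ≃ᵢ Plane, t = f '' P) ∧
  (⋃₀ T = Set.univ) ∧
  T.Pairwise (fun s t => Disjoint (interior s) (interior t))

/-- `e` is an edge of the convex polygon `t`: a nondegenerate segment that is an
extreme subset (a face) of `t`. -/
def IsEdgeOf (e t : Set Plane) : Prop :=
  ∃ x y : Plane, x ≠ y ∧ e = segment ℝ x y ∧ IsExtreme ℝ t e

/-- A tiling is edge-to-edge if any two distinct tiles are disjoint, meet in exactly
one common vertex of both, or meet in exactly one entire common edge of both. -/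
def IsEdgeToEdge (T : Set (Set Plane)) : Prop :=
  ∀ s ∈ T, ∀ t ∈ T, s ≠ t →
    Disjoint s t ∨
    (∃ v : Plane, v ∈ Set.extremePoints ℝ s ∧ v ∈ Set.extremePoints ℝ t ∧ s ∩ t = {v}) ∨
    (∃ e : Set Plane, IsEdgeOf e s ∧ IsEdgeOf e t ∧ s ∩ t = e)

/-- A tiling is periodic if there are two linearly independent vectors such that
translation by each of them maps every tile onto a tile. -/
def IsPeriodicTiling (T : Set (Set Plane)) : Prop :=
  ∃ v w : Plane, LinearIndependent ℝ ![v, w] ∧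
    (∀ t ∈ T, TranslateSet v t ∈ T) ∧ (∀ t ∈ T, TranslateSet w t ∈ T)

/-- A convex polygon with exactly `n` vertices: a compact convex set with nonempty
interior having exactly `n` extreme points. -/
def IsConvexNGon (P : Set Plane) (n : ℕ) : Prop :=
  IsCompact P ∧ Convex ℝ P ∧ (interior P).Nonempty ∧ (Set.extremePoints ℝ P).ncard = n

/-!
The diagonals of a convex quadrilateral `Q` cross: they form a Radon partition of its four vertices.
An affine map carries them to unit segments on the coordinate axes, so that `Q` becomes the
quadrilateral `K` with vertices `(-a, 0)`, `(1 - a, 0)`, `(0, -b)`, `(0, 1 - b)`, where `a` and `b`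
lie strictly between `0` and `1`. Affine maps do not preserve congruence, but they carry
translations to translations and half-turns to half-turns, and these are isometries of the plane. It
is therefore enough to tile with the translates `K + d` and the half-turned copies
`(-a, -b) + d - K` for `d` in `ℤ × ℤ`; for `d` in `{0, 1} × {0, 1}` the latter are the images of `K`
under the half-turns about the midpoints of its edges.

Since `K` lies in the unit square `[-a, 1 - a] × [-b, 1 - b]` and has exactly one point on each side
of it, distinct translates meet in at most a common vertex. A half-turned copy that meets `K` is the
image of `K` under the half-turn about the midpoint of an edge, and the line through that edge
separates the two. To see that the tiles cover the plane, write `x - m = s (k - a)` and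
`y - n = t (l - b)` with integers `m`, `n`, with `k, l` in `{0, 1}` and `s, t` in `[0, 1]`. If
`s + t ≤ 1`, the point `(x, y)` lies in `K + (m, n)`; otherwise the half-turn given by
`d = (m + k, n + l)` replaces `s, t` by `1 - s, 1 - t`, whose sum is at most `1`.
-/

section Radon

variable {E : Type*} [AddCommGroup E] [Module ℝ E] {V I : Set E} {x : E}

theorem notMem_of_mem_convexHull_of_mem_convexHull_sdiff
    (hV : ∀ v ∈ V, v ∉ convexHull ℝ (V \ {v})) (hI : I ⊆ V)
    (hx : x ∈ convexHull ℝ I) (hx' : x ∈ convexHull ℝ (V \ I)) : x ∉ V := by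
  intro hxV
  by_cases hxI : x ∈ I
  · exact hV x hxV (convexHull_mono (Set.sdiff_subset_sdiff_right (by simpa)) hx')
  · exact hV x hxV (convexHull_mono (Set.subset_sdiff_singleton hI hxI) hx)

theorem nontrivial_of_mem_convexHull_of_notMem (hx : x ∈ convexHull ℝ I) (hxI : x ∉ I) :
    I.Nontrivial := by
  rw [← Set.not_subsingleton_iff]
  intro hI
  rw [hI.convex.convexHull_eq] at hx
  exact hxI hx

theorem exists_mem_convexHull_of_finrank_add_one_lt_ncard [FiniteDimensional ℝ E]
    (hV : Module.finrank ℝ E + 1 < V.ncard) :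
    ∃ I ⊆ V, ∃ x, x ∈ convexHull ℝ I ∧ x ∈ convexHull ℝ (V \ I) := by
  have : Fintype V := (Set.finite_of_ncard_pos (by omega)).fintype
  have hdep : ¬ AffineIndependent ℝ ((↑) : V → E) := by
    intro h
    have hcard := h.card_le_finrank_succ
    have hle := Submodule.finrank_le (vectorSpan ℝ (Set.range ((↑) : V → E)))
    rw [← Nat.card_eq_fintype_card, Nat.card_coe_set_eq] at hcard
    omega
  obtain ⟨J, x, hx, hx'⟩ := Convex.radon_partition hdep
  refine ⟨(↑) '' J, Subtype.coe_image_subset V J, x, hx, ?_⟩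
  rwa [Set.image_compl_eq_range_sdiff_image Subtype.val_injective, Subtype.range_coe] at hx'

theorem mem_openSegment_of_mem_convexHull_pair {x y z : E} (hx : x ≠ z) (hy : y ≠ z)
    (hz : z ∈ convexHull ℝ {x, y}) : z ∈ openSegment ℝ x y :=
  mem_openSegment_of_ne_left_right hx hy (convexHull_pair (𝕜 := ℝ) x y ▸ hz)

/-- The segments are the two diagonals: the parts of a Radon partition of `V` have at least two
points each, because no point of `V` lies in the convex hull of the others. -/
theorem exists_mem_openSegment_inter_of_ncard_eq_four [FiniteDimensional ℝ E]
    (hE : Module.finrank ℝ E ≤ 2) (hV : ConvexIndependent ℝ ((↑) : V → E)) (hcard : V.ncard = 4) :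
    ∃ A B C D : E, V = {A, C, B, D} ∧ (openSegment ℝ A C ∩ openSegment ℝ B D).Nonempty := by
  rw [convexIndependent_set_iff_notMem_convexHull_sdiff] at hV
  obtain ⟨I, hIV, O, hO, hO'⟩ :=
    exists_mem_convexHull_of_finrank_add_one_lt_ncard (V := V) (by omega)
  have hOV : O ∉ V := notMem_of_mem_convexHull_of_mem_convexHull_sdiff hV hIV hO hO'
  have hfin : V.Finite := Set.finite_of_ncard_pos (by omega)
  have hI : 1 < I.ncard := (Set.one_lt_ncard (hfin.subset hIV)).2
    (nontrivial_of_mem_convexHull_of_notMem hO fun h => hOV (hIV h))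
  have hI' : 1 < (V \ I).ncard := (Set.one_lt_ncard hfin.sdiff).2
    (nontrivial_of_mem_convexHull_of_notMem hO' fun h => hOV h.1)
  have hadd : (V \ I).ncard + I.ncard = V.ncard :=
    Set.ncard_sdiff_add_ncard_of_subset hIV hfin
  obtain ⟨A, C, -, rfl⟩ := Set.ncard_eq_two.1 (show I.ncard = 2 by omega)
  obtain ⟨B, D, -, hBD⟩ := Set.ncard_eq_two.1 (show (V \ {A, C}).ncard = 2 by omega)
  have hunion : V = {A, C, B, D} := by
    rw [← Set.union_sdiff_cancel hIV, hBD, Set.insert_union, Set.singleton_union]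
  have hne : ∀ v ∈ V, v ≠ O := fun v hv h => hOV (h ▸ hv)
  simp only [hunion, Set.forall_mem_insert, Set.mem_singleton_iff, forall_eq] at hne
  obtain ⟨hA, hC, hB, hD⟩ := hne
  exact ⟨A, B, C, D, hunion, O, mem_openSegment_of_mem_convexHull_pair hA hC hO,
    mem_openSegment_of_mem_convexHull_pair hB hD (hBD ▸ hO')⟩

end Radon

section FaceToFace

variable {E F : Type*} [AddCommGroup E] [Module ℝ E] [AddCommGroup F] [Module ℝ F]
  {s t : Set E} {ℓ : E →ₗ[ℝ] ℝ}

theorem isExtreme_setOf_map_eq {c : ℝ} (hs : ∀ z ∈ s, ℓ z ≤ c) :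
    IsExtreme ℝ s {z ∈ s | ℓ z = c} := by
  refine ⟨Set.sep_subset _ _, ?_⟩
  rintro x hx y hy _ ⟨-, hz⟩ ⟨p, q, hp, hq, hpq, rfl⟩
  refine ⟨hx, (hs x hx).antisymm (le_of_mul_le_mul_left ?_ hp)⟩
  have hy' : q * ℓ y ≤ q * c := mul_le_mul_of_nonneg_left (hs y hy) hq.le
  simp only [map_add, map_smul, smul_eq_mul] at hz
  linear_combination hy' - hz + c * hpq

theorem isExtreme_image (f : E ≃ᵃ[ℝ] F) {e : Set E} (h : IsExtreme ℝ s e) :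
    IsExtreme ℝ (f '' s) (f '' e) := by
  refine ⟨Set.image_mono h.subset, ?_⟩
  rintro _ ⟨x, hx, rfl⟩ _ ⟨y, hy, rfl⟩ _ ⟨z, hz, rfl⟩ hzxy
  have himg : f '' openSegment ℝ x y = openSegment ℝ (f x) (f y) :=
    image_openSegment ℝ f.toAffineMap x y
  rw [← himg, f.injective.mem_set_image] at hzxy
  exact Set.mem_image_of_mem f (h.left_mem_of_mem_openSegment hx hy hz hzxy)

/-- Two sets meet face to face if they are disjoint or their intersection is a common face of both
that is a segment. A segment `[x, x]` is allowed, so that this covers both a common vertex and a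
common edge of two polygons. -/
def FaceToFace (s t : Set E) : Prop :=
  Disjoint s t ∨ ∃ x y, s ∩ t = segment ℝ x y ∧
    IsExtreme ℝ s (segment ℝ x y) ∧ IsExtreme ℝ t (segment ℝ x y)

theorem FaceToFace.symm (h : FaceToFace s t) : FaceToFace t s := by
  obtain h | ⟨x, y, hst, hs, ht⟩ := h
  · exact Or.inl h.symm
  · exact Or.inr ⟨x, y, by rw [Set.inter_comm, hst], ht, hs⟩

theorem FaceToFace.image (f : E ≃ᵃ[ℝ] F) (h : FaceToFace s t) :
    FaceToFace (f '' s) (f '' t) := by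
  obtain h | ⟨x, y, hst, hs, ht⟩ := h
  · exact Or.inl ((Set.disjoint_image_iff f.injective).2 h)
  · have himg : f '' segment ℝ x y = segment ℝ (f x) (f y) := image_segment ℝ f.toAffineMap x y
    refine Or.inr ⟨f x, f y, ?_, ?_, ?_⟩
    · rw [← Set.image_inter f.injective, hst, himg]
    · exact himg ▸ isExtreme_image f hs
    · exact himg ▸ isExtreme_image f ht

theorem pairwise_faceToFace_image (f : E ≃ᵃ[ℝ] F) {T : Set (Set E)} (hT : T.Pairwise FaceToFace) :
    (Set.image f '' T).Pairwise FaceToFace := by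
  rintro _ ⟨s, hs, rfl⟩ _ ⟨t, ht, rfl⟩ hst
  exact (hT hs ht fun h => hst (by rw [h])).image f

theorem FaceToFace.image_add_right (d : E) (h : FaceToFace s t) :
    FaceToFace ((· + d) '' s) ((· + d) '' t) :=
  h.image (AffineEquiv.vaddConst ℝ d)

theorem FaceToFace.image_sub_left (u : E) (h : FaceToFace s t) :
    FaceToFace ((u - ·) '' s) ((u - ·) '' t) :=
  h.image (AffineEquiv.constVSub ℝ u)

theorem faceToFace_of_inter_subset_singleton {v w : E} (hv : v ∈ s.extremePoints ℝ)
    (hw : w ∈ t.extremePoints ℝ) (hstv : s ∩ t ⊆ {v}) (hstw : s ∩ t ⊆ {w}) : FaceToFace s t := by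
  by_cases hst : Disjoint s t
  · exact Or.inl hst
  obtain ⟨z, hz⟩ := Set.not_disjoint_iff_nonempty_inter.1 hst
  obtain rfl : z = v := hstv hz
  obtain rfl : z = w := hstw hz
  refine Or.inr ⟨z, z, ?_⟩
  rw [segment_same, isExtreme_singleton, isExtreme_singleton]
  exact ⟨hstv.antisymm (Set.singleton_subset_iff.2 hz), hv, hw⟩

theorem faceToFace_image_add_right_of_le {α β : ℝ} {v w d : E}
    (hs : ∀ z ∈ s, ℓ z ∈ Set.Icc α β) (hv : {z ∈ s | ℓ z = β} = {v})
    (hw : {z ∈ s | ℓ z = α} = {w}) (hd : β - α ≤ ℓ d) : FaceToFace s ((· + d) '' s) := by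
  have hv_ext : v ∈ s.extremePoints ℝ := by
    rw [← isExtreme_singleton, ← hv]
    exact isExtreme_setOf_map_eq fun z hz => (hs z hz).2
  have hw_ext : w ∈ s.extremePoints ℝ := by
    rw [← isExtreme_singleton, ← hw]
    simpa using isExtreme_setOf_map_eq (ℓ := -ℓ) (c := -α)
      fun z hz => neg_le_neg (hs z hz).1
  have hwd_ext : w + d ∈ ((· + d) '' s).extremePoints ℝ := by
    rw [← isExtreme_singleton] at hw_ext ⊢
    simpa using isExtreme_image (AffineEquiv.vaddConst ℝ d) hw_ext
  refine faceToFace_of_inter_subset_singleton hv_ext hwd_ext ?_ ?_ <;>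
    rintro _ ⟨hz, z, hzs, rfl⟩ <;>
    have hle : ℓ z + ℓ d ≤ β := map_add ℓ z d ▸ (hs _ hz).2
  · rw [← hv]
    exact ⟨hz, by rw [map_add]; linarith [(hs z hzs).1]⟩
  · have hzw : z ∈ ({w} : Set E) := hw ▸ ⟨hzs, by linarith [(hs z hzs).1]⟩
    rw [hzw]
    rfl

theorem faceToFace_image_add_right_of_le_abs {α β : ℝ} {v w d : E}
    (hs : ∀ z ∈ s, ℓ z ∈ Set.Icc α β) (hv : {z ∈ s | ℓ z = β} = {v})
    (hw : {z ∈ s | ℓ z = α} = {w}) (hd : β - α ≤ |ℓ d|) : FaceToFace s ((· + d) '' s) := by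
  obtain hd | hd := le_abs.1 hd
  · exact faceToFace_image_add_right_of_le hs hv hw hd
  · have h := faceToFace_image_add_right_of_le hs hv hw (d := -d) (by rwa [map_neg])
    simpa only [Set.image_image, neg_add_cancel_right, Set.image_id'] using
      (h.image_add_right d).symm

/-- The half-turn maps the half-plane `ℓ ≤ c` to the half-plane `c ≤ ℓ`, so `s` and its image can
only meet on the line `ℓ = c`. -/
theorem faceToFace_image_sub_left_of_setOf_map_eq {c : ℝ} {x y : E} (hs : ∀ z ∈ s, ℓ z ≤ c)
    (hc : ℓ (x + y) = 2 * c) (hxy : {z ∈ s | ℓ z = c} = segment ℝ x y) :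
    FaceToFace s ((x + y - ·) '' s) := by
  have hext : IsExtreme ℝ s (segment ℝ x y) := hxy ▸ isExtreme_setOf_map_eq hs
  have himg : (x + y - ·) '' segment ℝ x y = segment ℝ x y := by
    refine (image_segment ℝ (AffineEquiv.constVSub ℝ (x + y)).toAffineMap x y).trans ?_
    simp [segment_symm]
  have hext' : IsExtreme ℝ ((x + y - ·) '' s) (segment ℝ x y) := by
    rw [← himg]
    exact isExtreme_image (AffineEquiv.constVSub ℝ (x + y)) hext
  refine Or.inr ⟨x, y, (Set.subset_inter hext.subset hext'.subset).antisymm' ?_, hext, hext'⟩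
  rintro _ ⟨hz, z, hzs, rfl⟩
  rw [← hxy]
  refine ⟨hz, (hs _ hz).antisymm ?_⟩
  rw [map_sub, hc]
  linarith [hs z hzs]

end FaceToFace

section Interior

variable {E : Type*} [NormedAddCommGroup E] [NormedSpace ℝ E]

theorem interior_segment_eq_empty (hE : 1 < Module.finrank ℝ E) (x y : E) :
    interior (segment ℝ x y) = ∅ := by
  by_contra hne
  have hspan : affineSpan ℝ {x, y} = ⊤ := by
    rw [← affineSpan_convexHull, convexHull_pair]
    exact affineSpan_eq_top_of_nonempty_interior <| by
      rwa [(convex_segment x y).convexHull_eq, Set.nonempty_iff_ne_empty]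
  have hle := collinear_iff_finrank_le_one.1 (collinear_pair ℝ x y)
  rw [← direction_affineSpan, hspan, AffineSubspace.direction_top, finrank_top] at hle
  omega

theorem FaceToFace.disjoint_interior (hE : 1 < Module.finrank ℝ E) {s t : Set E}
    (h : FaceToFace s t) : Disjoint (interior s) (interior t) := by
  rw [Set.disjoint_iff_inter_eq_empty, ← interior_inter]
  obtain h | ⟨x, y, h, -, -⟩ := h
  · rw [h.inter_eq, interior_empty]
  · rw [h, interior_segment_eq_empty hE]

end Interior

theorem isEdgeToEdge_of_pairwise_faceToFace {T : Set (Set Plane)} (hT : T.Pairwise FaceToFace) :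
    IsEdgeToEdge T := by
  intro s hs t ht hst
  obtain h | ⟨x, y, h, hxs, hxt⟩ := hT hs ht hst
  · exact Or.inl h
  refine Or.inr ?_
  obtain rfl | hxy := eq_or_ne x y
  · rw [segment_same] at h hxs hxt
    exact Or.inl ⟨x, isExtreme_singleton.1 hxs, isExtreme_singleton.1 hxt, h⟩
  · exact Or.inr ⟨_, ⟨x, y, hxy, rfl, hxs⟩, ⟨x, y, hxy, rfl, hxt⟩, h⟩

section HalfTurnTiling

variable {E F : Type*} [AddCommGroup E] [AddCommGroup F]

/-- The images of `K` under the translations by vectors of `L` and under the half-turns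
`z ↦ c + d - z` with `d ∈ L`: the orbit of `K` under the group generated by `L` and one
half-turn. -/
def halfTurnTiling (L : AddSubgroup E) (c : E) (K : Set E) : Set (Set E) :=
  {t | ∃ d ∈ L, t = (· + d) '' K ∨ t = (c + d - ·) '' K}

variable {L : AddSubgroup E} {c : E} {K s t : Set E}

theorem image_add_right_mem_halfTurnTiling {d : E} (hd : d ∈ L) (ht : t ∈ halfTurnTiling L c K) :
    (· + d) '' t ∈ halfTurnTiling L c K := by
  obtain ⟨d', hd', rfl | rfl⟩ := ht <;> refine ⟨d' + d, L.add_mem hd' hd, ?_⟩ <;>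
    rw [Set.image_image]
  · exact Or.inl (Set.image_congr fun z _ => by abel)
  · exact Or.inr (Set.image_congr fun z _ => by abel)

variable [Module ℝ E] [Module ℝ F]

/-- The isometries producing the tiles form a group, so it suffices to compare `K` with the other
tiles. -/
theorem pairwise_faceToFace_halfTurnTiling
    (htrans : ∀ d ∈ L, d ≠ 0 → FaceToFace K ((· + d) '' K))
    (hturn : ∀ d ∈ L, FaceToFace K ((c + d - ·) '' K)) :
    (halfTurnTiling L c K).Pairwise FaceToFace := by
  have hmixed : ∀ d ∈ L, ∀ d' ∈ L, FaceToFace ((· + d) '' K) ((c + d' - ·) '' K) := by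
    intro d hd d' hd'
    convert (hturn (d' - d) (L.sub_mem hd' hd)).image_add_right d using 1
    rw [Set.image_image]
    exact Set.image_congr fun z _ => by abel
  rintro _ ⟨d, hd, rfl | rfl⟩ _ ⟨d', hd', rfl | rfl⟩ hne
  · have hdd' : d' - d ≠ 0 := fun h => hne (by rw [sub_eq_zero.1 h])
    convert (htrans (d' - d) (L.sub_mem hd' hd) hdd').image_add_right d using 1
    rw [Set.image_image]
    exact Set.image_congr fun z _ => by abel
  · exact hmixed d hd d' hd'
  · exact (hmixed d' hd' d hd).symm
  · have hdd' : d - d' ≠ 0 := fun h => hne (by rw [sub_eq_zero.1 h])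
    convert (htrans (d - d') (L.sub_mem hd hd') hdd').image_sub_left (c + d) using 1
    rw [Set.image_image]
    exact Set.image_congr fun z _ => by abel

theorem image_halfTurnTiling (f : E ≃ᵃ[ℝ] F) :
    Set.image f '' halfTurnTiling L c K =
      halfTurnTiling (L.map f.linear.toLinearMap.toAddMonoidHom) (f c + f 0) (f '' K) := by
  have hf (z : E) : f z = f.linear z + f 0 := congrFun (AffineMap.decomp f.toAffineMap) z
  have htrans (d : E) : f '' ((· + d) '' K) = (· + f.linear d) '' (f '' K) := by
    simp only [Set.image_image]
    exact Set.image_congr fun z _ => by rw [hf (z + d), hf z, map_add]; abel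
  have hturn (d : E) : f '' ((c + d - ·) '' K) = (f c + f 0 + f.linear d - ·) '' (f '' K) := by
    simp only [Set.image_image]
    exact Set.image_congr fun z _ => by rw [hf (c + d - z), hf c, hf z, map_sub, map_add]; abel
  ext t
  constructor
  · rintro ⟨_, ⟨d, hd, rfl | rfl⟩, rfl⟩
    · exact ⟨f.linear d, AddSubgroup.mem_map_of_mem _ hd, Or.inl (htrans d)⟩
    · exact ⟨f.linear d, AddSubgroup.mem_map_of_mem _ hd, Or.inr (hturn d)⟩
  · rintro ⟨_, ⟨d, hd, rfl⟩, rfl | rfl⟩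
    · exact ⟨_, ⟨d, hd, Or.inl rfl⟩, htrans d⟩
    · exact ⟨_, ⟨d, hd, Or.inr rfl⟩, hturn d⟩

end HalfTurnTiling

theorem isPeriodicTiling_halfTurnTiling {L : AddSubgroup Plane} {v w : Plane}
    (hvw : LinearIndependent ℝ ![v, w]) (hv : v ∈ L) (hw : w ∈ L) (c : Plane) (K : Set Plane) :
    IsPeriodicTiling (halfTurnTiling L c K) :=
  ⟨v, w, hvw, fun _ => image_add_right_mem_halfTurnTiling hv,
    fun _ => image_add_right_mem_halfTurnTiling hw⟩

theorem exists_isometryEquiv_of_mem_halfTurnTiling {E : Type*} [SeminormedAddCommGroup E]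
    {L : AddSubgroup E} {c : E} {K t : Set E} (ht : t ∈ halfTurnTiling L c K) :
    ∃ g : E ≃ᵢ E, t = g '' K := by
  obtain ⟨d, -, rfl | rfl⟩ := ht
  · exact ⟨IsometryEquiv.addRight d, rfl⟩
  · exact ⟨IsometryEquiv.subLeft (c + d), rfl⟩

/-- The lattice `ℤ × ℤ` in `ℝ × ℝ`. -/
def intLattice : AddSubgroup (ℝ × ℝ) :=
  (Int.castAddHom ℝ).range.prod (Int.castAddHom ℝ).range

theorem mem_intLattice_iff {d : ℝ × ℝ} : d ∈ intLattice ↔ ∃ m n : ℤ, d = (↑m, ↑n) := by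
  constructor
  · rintro ⟨⟨m, hm⟩, ⟨n, hn⟩⟩
    exact ⟨m, n, Prod.ext hm.symm hn.symm⟩
  · rintro ⟨m, n, rfl⟩
    exact ⟨⟨m, rfl⟩, ⟨n, rfl⟩⟩

section DiagonalQuad

variable {a b x s t : ℝ} {k l : ℤ} {z : ℝ × ℝ}

theorem cast_sub_ne_zero (ha : a ∈ Set.Ioo (0 : ℝ) 1) (hk : k ∈ ({0, 1} : Set ℤ)) :
    (k : ℝ) - a ≠ 0 := by
  obtain ⟨ha₀, ha₁⟩ := ha
  obtain rfl | rfl := hk <;> push_cast <;> grind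

theorem sub_div_sub_le_one (ha : a ∈ Set.Ioo (0 : ℝ) 1) (hk : k ∈ ({0, 1} : Set ℤ))
    (hl : l ∈ ({0, 1} : Set ℤ)) : ((k : ℝ) - a) / (l - a) ≤ 1 := by
  have h₀ : ((0 : ℤ) : ℝ) - a ≤ 0 := by simpa using ha.1.le
  have h₁ : 0 ≤ ((1 : ℤ) : ℝ) - a := by simpa using ha.2.le
  obtain rfl | rfl := hk <;> obtain rfl | rfl := hl
  · exact div_self_le_one _
  · exact (div_nonpos_of_nonpos_of_nonneg h₀ h₁).trans zero_le_one
  · exact (div_nonpos_of_nonneg_of_nonpos h₁ h₀).trans zero_le_one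
  · exact div_self_le_one _

theorem exists_div_sub_nonneg (ha : a ∈ Set.Ioo (0 : ℝ) 1) (x : ℝ) :
    ∃ k ∈ ({0, 1} : Set ℤ), 0 ≤ x / (k - a) := by
  obtain ⟨ha₀, ha₁⟩ := ha
  obtain hx | hx := le_total 0 x
  · exact ⟨1, by simp, div_nonneg hx (by push_cast; linarith)⟩
  · exact ⟨0, by simp, div_nonneg_of_nonpos hx (by push_cast; linarith)⟩

theorem eq_zero_of_forall_div_sub_nonpos (ha : a ∈ Set.Ioo (0 : ℝ) 1)
    (hx : ∀ k ∈ ({0, 1} : Set ℤ), x / (k - a) ≤ 0) : x = 0 := by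
  obtain ⟨ha₀, ha₁⟩ := ha
  have hx₀ := hx 0 (by simp)
  have hx₁ := hx 1 (by simp)
  rw [Int.cast_zero, zero_sub, div_neg, neg_nonpos, le_div_iff₀ ha₀, zero_mul] at hx₀
  rw [Int.cast_one, div_le_iff₀ (sub_pos.2 ha₁), zero_mul] at hx₁
  exact hx₁.antisymm hx₀

theorem exists_eq_mul_sub_of_mem_Icc (ha : a ∈ Set.Ioo (0 : ℝ) 1) (hx : x ∈ Set.Icc (-a) (1 - a)) :
    ∃ k ∈ ({0, 1} : Set ℤ), ∃ s ∈ Set.Icc (0 : ℝ) 1, x = s * (k - a) := by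
  obtain ⟨ha₀, ha₁⟩ := ha
  have ha₁' : 0 < 1 - a := sub_pos.2 ha₁
  obtain h | h := le_total 0 x
  · refine ⟨1, by simp, x / (1 - a), ⟨by positivity, (div_le_one ha₁').2 hx.2⟩, ?_⟩
    rw [Int.cast_one, div_mul_cancel₀ _ ha₁'.ne']
  · refine ⟨0, by simp, -x / a, ⟨div_nonneg (neg_nonneg.2 h) ha₀.le, ?_⟩, ?_⟩
    · exact (div_le_one ha₀).2 (neg_le.1 hx.1)
    · rw [Int.cast_zero, zero_sub, mul_neg, div_mul_cancel₀ _ ha₀.ne', neg_neg]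

theorem exists_int_sub_eq_mul_sub (ha : a ∈ Set.Ioo (0 : ℝ) 1) (x : ℝ) :
    ∃ m : ℤ, ∃ k ∈ ({0, 1} : Set ℤ), ∃ s ∈ Set.Icc (0 : ℝ) 1, x - m = s * (k - a) := by
  refine ⟨⌊x + a⌋, exists_eq_mul_sub_of_mem_Icc ha ⟨?_, ?_⟩⟩
  · linarith [Int.floor_le (x + a)]
  · linarith [Int.lt_floor_add_one (x + a)]

/-- The linear form that equals `1` on the line through `(k - a, 0)` and `(0, l - b)`. -/
def edgeForm (a b : ℝ) (k l : ℤ) : ℝ × ℝ →ₗ[ℝ] ℝ :=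
  ((k : ℝ) - a)⁻¹ • LinearMap.fst ℝ ℝ ℝ + ((l : ℝ) - b)⁻¹ • LinearMap.snd ℝ ℝ ℝ

theorem edgeForm_apply : edgeForm a b k l z = z.1 / (k - a) + z.2 / (l - b) := by
  simp [edgeForm, div_eq_inv_mul]

/-- The quadrilateral with vertices `(-a, 0)`, `(0, -b)`, `(1 - a, 0)` and `(0, 1 - b)`, encoded as
the intersection of four half-planes. Its diagonals are unit segments on the coordinate axes. Each
vertex is `(k - a, 0)` or `(0, k - b)` with `k ∈ {0, 1}`. -/
def diagonalQuad (a b : ℝ) : Set (ℝ × ℝ) :=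
  {z | ∀ k ∈ ({0, 1} : Set ℤ), ∀ l ∈ ({0, 1} : Set ℤ), edgeForm a b k l z ≤ 1}

theorem convex_diagonalQuad (a b : ℝ) : Convex ℝ (diagonalQuad a b) := by
  simp only [diagonalQuad, Set.ofPred_forall]
  exact convex_iInter₂ fun k _ => convex_iInter₂ fun l _ =>
    convex_halfSpace_le (edgeForm a b k l).isLinear 1

theorem mk_mem_diagonalQuad_iff (ha : a ∈ Set.Ioo (0 : ℝ) 1) (hb : b ∈ Set.Ioo (0 : ℝ) 1)
    (hk : k ∈ ({0, 1} : Set ℤ)) (hl : l ∈ ({0, 1} : Set ℤ)) (hs : 0 ≤ s) (ht : 0 ≤ t) :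
    (s * (k - a), t * (l - b)) ∈ diagonalQuad a b ↔ s + t ≤ 1 := by
  constructor
  · intro h
    simpa [edgeForm_apply, cast_sub_ne_zero ha hk, cast_sub_ne_zero hb hl] using h k hk l hl
  · intro hst k' hk' l' hl'
    rw [edgeForm_apply, mul_div_assoc, mul_div_assoc]
    have hs' := mul_le_of_le_one_right hs (sub_div_sub_le_one ha hk hk')
    have ht' := mul_le_of_le_one_right ht (sub_div_sub_le_one hb hl hl')
    exact (add_le_add hs' ht').trans hst

theorem swap_mem_diagonalQuad (hz : z ∈ diagonalQuad a b) : z.swap ∈ diagonalQuad b a := by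
  intro k hk l hl
  simpa only [edgeForm_apply, Prod.fst_swap, Prod.snd_swap, add_comm] using hz l hl k hk

theorem div_sub_le_one_of_mem_diagonalQuad (hb : b ∈ Set.Ioo (0 : ℝ) 1)
    (hz : z ∈ diagonalQuad a b) (hk : k ∈ ({0, 1} : Set ℤ)) : z.1 / (k - a) ≤ 1 := by
  obtain ⟨l, hl, hle⟩ := exists_div_sub_nonneg hb z.2
  have hkl := hz k hk l hl
  rw [edgeForm_apply] at hkl
  linarith

theorem fst_mem_Icc_of_mem_diagonalQuad (ha : a ∈ Set.Ioo (0 : ℝ) 1) (hb : b ∈ Set.Ioo (0 : ℝ) 1)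
    (hz : z ∈ diagonalQuad a b) : z.1 ∈ Set.Icc (-a) (1 - a) := by
  have h₀ := div_sub_le_one_of_mem_diagonalQuad hb hz (k := 0) (by simp)
  have h₁ := div_sub_le_one_of_mem_diagonalQuad hb hz (k := 1) (by simp)
  rw [Int.cast_zero, zero_sub, div_le_one_of_neg (neg_lt_zero.2 ha.1)] at h₀
  rw [Int.cast_one, div_le_one (sub_pos.2 ha.2)] at h₁
  exact ⟨h₀, h₁⟩

theorem snd_mem_Icc_of_mem_diagonalQuad (ha : a ∈ Set.Ioo (0 : ℝ) 1) (hb : b ∈ Set.Ioo (0 : ℝ) 1)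
    (hz : z ∈ diagonalQuad a b) : z.2 ∈ Set.Icc (-b) (1 - b) :=
  fst_mem_Icc_of_mem_diagonalQuad hb ha (swap_mem_diagonalQuad hz)

theorem mk_zero_mem_diagonalQuad (ha : a ∈ Set.Ioo (0 : ℝ) 1) (hb : b ∈ Set.Ioo (0 : ℝ) 1)
    (hk : k ∈ ({0, 1} : Set ℤ)) : ((k : ℝ) - a, 0) ∈ diagonalQuad a b := by
  simpa using (mk_mem_diagonalQuad_iff ha hb hk hk zero_le_one le_rfl).2 (by simp)

theorem zero_mk_mem_diagonalQuad (ha : a ∈ Set.Ioo (0 : ℝ) 1) (hb : b ∈ Set.Ioo (0 : ℝ) 1)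
    (hl : l ∈ ({0, 1} : Set ℤ)) : (0, (l : ℝ) - b) ∈ diagonalQuad a b :=
  swap_mem_diagonalQuad (mk_zero_mem_diagonalQuad hb ha hl)

theorem setOf_fst_eq_diagonalQuad (ha : a ∈ Set.Ioo (0 : ℝ) 1) (hb : b ∈ Set.Ioo (0 : ℝ) 1)
    (hk : k ∈ ({0, 1} : Set ℤ)) :
    {z ∈ diagonalQuad a b | LinearMap.fst ℝ ℝ ℝ z = k - a} = {((k : ℝ) - a, 0)} := by
  refine Set.Subset.antisymm ?_ ?_
  · rintro z ⟨hz, hzk⟩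
    refine Prod.ext hzk (eq_zero_of_forall_div_sub_nonpos hb fun l hl => ?_)
    have hkl := hz k hk l hl
    rw [LinearMap.fst_apply] at hzk
    rwa [edgeForm_apply, hzk, div_self (cast_sub_ne_zero ha hk), add_le_iff_nonpos_right] at hkl
  · exact Set.singleton_subset_iff.2 ⟨mk_zero_mem_diagonalQuad ha hb hk, rfl⟩

theorem setOf_snd_eq_diagonalQuad (ha : a ∈ Set.Ioo (0 : ℝ) 1) (hb : b ∈ Set.Ioo (0 : ℝ) 1)
    (hl : l ∈ ({0, 1} : Set ℤ)) :
    {z ∈ diagonalQuad a b | LinearMap.snd ℝ ℝ ℝ z = l - b} = {(0, (l : ℝ) - b)} := by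
  refine Set.Subset.antisymm ?_ ?_
  · rintro z ⟨hz, hzl⟩
    have hmem : z.swap ∈ ({((l : ℝ) - b, 0)} : Set (ℝ × ℝ)) :=
      setOf_fst_eq_diagonalQuad hb ha hl ▸ ⟨swap_mem_diagonalQuad hz, hzl⟩
    exact Prod.swap_injective hmem
  · exact Set.singleton_subset_iff.2 ⟨zero_mk_mem_diagonalQuad ha hb hl, rfl⟩

theorem setOf_edgeForm_eq_one_diagonalQuad (ha : a ∈ Set.Ioo (0 : ℝ) 1)
    (hb : b ∈ Set.Ioo (0 : ℝ) 1) (hk : k ∈ ({0, 1} : Set ℤ)) (hl : l ∈ ({0, 1} : Set ℤ)) :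
    {z ∈ diagonalQuad a b | edgeForm a b k l z = 1} =
      segment ℝ ((k : ℝ) - a, 0) (0, (l : ℝ) - b) := by
  have hka := cast_sub_ne_zero ha hk
  have hlb := cast_sub_ne_zero hb hl
  refine Set.Subset.antisymm ?_ ?_
  · rintro z ⟨hz, hzkl⟩
    rw [edgeForm_apply] at hzkl
    obtain ⟨k', hk', hzk'⟩ := exists_div_sub_nonneg ha z.1
    obtain ⟨l', hl', hzl'⟩ := exists_div_sub_nonneg hb z.2
    have hright := hz k hk l' hl'
    have hleft := hz k' hk' l hl
    rw [edgeForm_apply] at hright hleft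
    have hfst : 0 ≤ z.1 / (k - a) := by linarith
    have hsnd : 0 ≤ z.2 / (l - b) := by linarith
    refine ⟨z.1 / (k - a), z.2 / (l - b), hfst, hsnd, hzkl, ?_⟩
    ext <;> simp [hka, hlb]
  · rintro _ ⟨s, t, hs, ht, hst, rfl⟩
    have hz : s • ((k : ℝ) - a, (0 : ℝ)) + t • (0, (l : ℝ) - b) = (s * (k - a), t * (l - b)) := by
      simp
    rw [hz]
    refine ⟨(mk_mem_diagonalQuad_iff ha hb hk hl hs ht).2 hst.le, ?_⟩
    rw [edgeForm_apply, mul_div_cancel_right₀ _ hka, mul_div_cancel_right₀ _ hlb, hst]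

theorem faceToFace_diagonalQuad_image_add_right (ha : a ∈ Set.Ioo (0 : ℝ) 1)
    (hb : b ∈ Set.Ioo (0 : ℝ) 1) {d : ℝ × ℝ} (hd : d ∈ intLattice) (hd₀ : d ≠ 0) :
    FaceToFace (diagonalQuad a b) ((· + d) '' diagonalQuad a b) := by
  obtain ⟨m, n, rfl⟩ := mem_intLattice_iff.1 hd
  have one_le_abs {i : ℤ} (hi : i ≠ 0) : (1 : ℝ) ≤ |(i : ℝ)| := by
    exact_mod_cast Int.one_le_abs hi
  by_cases hm : m = 0
  · have hn : n ≠ 0 := by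
      rintro rfl
      exact hd₀ (by simp [hm])
    refine faceToFace_image_add_right_of_le_abs (ℓ := LinearMap.snd ℝ ℝ ℝ)
      (fun z hz => snd_mem_Icc_of_mem_diagonalQuad ha hb hz)
      (by simpa using setOf_snd_eq_diagonalQuad ha hb (l := 1) (by simp))
      (by simpa using setOf_snd_eq_diagonalQuad ha hb (l := 0) (by simp)) ?_
    simpa using one_le_abs hn
  · refine faceToFace_image_add_right_of_le_abs (ℓ := LinearMap.fst ℝ ℝ ℝ)
      (fun z hz => fst_mem_Icc_of_mem_diagonalQuad ha hb hz)
      (by simpa using setOf_fst_eq_diagonalQuad ha hb (k := 1) (by simp))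
      (by simpa using setOf_fst_eq_diagonalQuad ha hb (k := 0) (by simp)) ?_
    simpa using one_le_abs hm

theorem mem_zero_one_of_mem_Icc_of_sub_mem_Icc {m : ℤ} (ha : a ∈ Set.Ioo (0 : ℝ) 1)
    (hx : x ∈ Set.Icc (-a) (1 - a)) (hmx : m - a - x ∈ Set.Icc (-a) (1 - a)) :
    m ∈ ({0, 1} : Set ℤ) := by
  have hlow : -1 < m := by
    have : (-1 : ℝ) < m := by linarith [ha.2, hx.1, hmx.1]
    exact_mod_cast this
  have hhigh : m < 2 := by
    have : (m : ℝ) < 2 := by linarith [ha.1, hx.2, hmx.2]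
    exact_mod_cast this
  simp only [Set.mem_insert_iff, Set.mem_singleton_iff]
  omega

theorem faceToFace_diagonalQuad_image_sub_left (ha : a ∈ Set.Ioo (0 : ℝ) 1)
    (hb : b ∈ Set.Ioo (0 : ℝ) 1) {d : ℝ × ℝ} (hd : d ∈ intLattice) :
    FaceToFace (diagonalQuad a b) (((-a, -b) + d - ·) '' diagonalQuad a b) := by
  obtain ⟨m, n, rfl⟩ := mem_intLattice_iff.1 hd
  have hcenter : ((-a, -b) : ℝ × ℝ) + ((m : ℝ), (n : ℝ)) = ((m : ℝ) - a, 0) + (0, (n : ℝ) - b) := by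
    ext <;> simp [neg_add_eq_sub]
  rw [hcenter]
  by_cases hdisj : Disjoint (diagonalQuad a b)
    ((((m : ℝ) - a, (0 : ℝ)) + (0, (n : ℝ) - b) - ·) '' diagonalQuad a b)
  · exact Or.inl hdisj
  obtain ⟨_, hz, z, hz', rfl⟩ := Set.not_disjoint_iff.1 hdisj
  have hm : m ∈ ({0, 1} : Set ℤ) :=
    mem_zero_one_of_mem_Icc_of_sub_mem_Icc ha (fst_mem_Icc_of_mem_diagonalQuad ha hb hz')
      (by simpa using fst_mem_Icc_of_mem_diagonalQuad ha hb hz)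
  have hn : n ∈ ({0, 1} : Set ℤ) :=
    mem_zero_one_of_mem_Icc_of_sub_mem_Icc hb (snd_mem_Icc_of_mem_diagonalQuad ha hb hz')
      (by simpa using snd_mem_Icc_of_mem_diagonalQuad ha hb hz)
  refine faceToFace_image_sub_left_of_setOf_map_eq (fun z hz => hz m hm n hn) ?_
    (setOf_edgeForm_eq_one_diagonalQuad ha hb hm hn)
  rw [edgeForm_apply]
  simp [cast_sub_ne_zero ha hm, cast_sub_ne_zero hb hn, one_add_one_eq_two]

theorem sUnion_halfTurnTiling_diagonalQuad (ha : a ∈ Set.Ioo (0 : ℝ) 1)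
    (hb : b ∈ Set.Ioo (0 : ℝ) 1) :
    ⋃₀ halfTurnTiling intLattice (-a, -b) (diagonalQuad a b) = Set.univ := by
  refine Set.eq_univ_of_forall fun ⟨x, y⟩ => ?_
  obtain ⟨m, k, hk, s, hs, hx⟩ := exists_int_sub_eq_mul_sub ha x
  obtain ⟨n, l, hl, t, ht, hy⟩ := exists_int_sub_eq_mul_sub hb y
  obtain hst | hst := le_total (s + t) 1
  · have hmem := (mk_mem_diagonalQuad_iff ha hb hk hl hs.1 ht.1).2 hst
    refine ⟨_, ⟨(↑m, ↑n), mem_intLattice_iff.2 ⟨m, n, rfl⟩, Or.inl rfl⟩, _, hmem, ?_⟩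
    ext <;> simp <;> linarith
  · have hmem := (mk_mem_diagonalQuad_iff ha hb hk hl (s := 1 - s) (t := 1 - t)
      (sub_nonneg.2 hs.2) (sub_nonneg.2 ht.2)).2 (by linarith)
    refine ⟨_, ⟨(↑(m + k), ↑(n + l)), mem_intLattice_iff.2 ⟨_, _, rfl⟩, Or.inr rfl⟩, _, hmem, ?_⟩
    ext <;> simp <;> linarith

theorem smul_add_smul_mem_of_zero_mem {E : Type*} [AddCommGroup E] [Module ℝ E] {S : Set E}
    {u v : E} (hS : Convex ℝ S) (h₀ : 0 ∈ S) (hu : u ∈ S) (hv : v ∈ S) (hs : 0 ≤ s) (ht : 0 ≤ t)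
    (hst : s + t ≤ 1) : s • u + t • v ∈ S := by
  have hsum := hS.sum_mem (t := Finset.univ) (w := ![s, t, 1 - (s + t)]) (z := ![u, v, 0])
    (by simpa [Fin.forall_fin_succ, hs, ht] using hst) (by simp [Fin.sum_univ_three])
    (by simp [Fin.forall_fin_succ, hu, hv, h₀])
  simpa [Fin.sum_univ_three] using hsum

theorem diagonalQuad_eq_convexHull (ha : a ∈ Set.Ioo (0 : ℝ) 1) (hb : b ∈ Set.Ioo (0 : ℝ) 1) :
    diagonalQuad a b = convexHull ℝ {(-a, 0), (1 - a, 0), (0, -b), (0, 1 - b)} := by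
  set V : Set (ℝ × ℝ) := {(-a, 0), (1 - a, 0), (0, -b), (0, 1 - b)} with hV
  refine Set.Subset.antisymm ?_ (convexHull_min ?_ (convex_diagonalQuad a b))
  · intro z hz
    obtain ⟨k, hk, s, hs, hzs⟩ :=
      exists_eq_mul_sub_of_mem_Icc ha (fst_mem_Icc_of_mem_diagonalQuad ha hb hz)
    obtain ⟨l, hl, t, ht, hzt⟩ :=
      exists_eq_mul_sub_of_mem_Icc hb (snd_mem_Icc_of_mem_diagonalQuad ha hb hz)
    obtain rfl : z = (s * (k - a), t * (l - b)) := Prod.ext hzs hzt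
    have hst : s + t ≤ 1 := (mk_mem_diagonalQuad_iff ha hb hk hl hs.1 ht.1).1 hz
    have hkV : ((k : ℝ) - a, (0 : ℝ)) ∈ V := by obtain rfl | rfl := hk <;> simp [hV]
    have hlV : ((0 : ℝ), (l : ℝ) - b) ∈ V := by obtain rfl | rfl := hl <;> simp [hV]
    have h₀ : (0 : ℝ × ℝ) ∈ convexHull ℝ V := by
      refine segment_subset_convexHull (x := (-a, 0)) (y := (1 - a, 0)) (by simp [hV])
        (by simp [hV]) ⟨1 - a, a, sub_nonneg.2 ha.2.le, ha.1.le, by ring, ?_⟩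
      ext
      · simp
        ring
      · simp
    have hsum := smul_add_smul_mem_of_zero_mem (convex_convexHull ℝ V) h₀
      (subset_convexHull ℝ V hkV) (subset_convexHull ℝ V hlV) hs.1 ht.1 hst
    simpa using hsum
  · have h₀ : (0 : ℤ) ∈ ({0, 1} : Set ℤ) := by simp
    have h₁ : (1 : ℤ) ∈ ({0, 1} : Set ℤ) := by simp
    simp only [hV, Set.insert_subset_iff, Set.singleton_subset_iff]
    exact ⟨by simpa using mk_zero_mem_diagonalQuad ha hb h₀,
      by simpa using mk_zero_mem_diagonalQuad ha hb h₁,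
      by simpa using zero_mk_mem_diagonalQuad ha hb h₀,
      by simpa using zero_mk_mem_diagonalQuad ha hb h₁⟩

theorem exists_affineMap_image_diagonalQuad {E : Type*} [AddCommGroup E] [Module ℝ E]
    {A B C D : E} (h : (openSegment ℝ A C ∩ openSegment ℝ B D).Nonempty) :
    ∃ a ∈ Set.Ioo (0 : ℝ) 1, ∃ b ∈ Set.Ioo (0 : ℝ) 1, ∃ f : ℝ × ℝ →ᵃ[ℝ] E,
      f '' diagonalQuad a b = convexHull ℝ {A, C, B, D} := by
  obtain ⟨O, hAC, hBD⟩ := h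
  rw [openSegment_eq_image_lineMap] at hAC hBD
  obtain ⟨a, ha, hOa⟩ := hAC
  obtain ⟨b, hb, hOb⟩ := hBD
  let f : ℝ × ℝ →ᵃ[ℝ] E :=
    ((LinearMap.toSpanSingleton ℝ E (C - A)).coprod
      (LinearMap.toSpanSingleton ℝ E (D - B))).toAffineMap + AffineMap.const ℝ (ℝ × ℝ) O
  have hf (x y : ℝ) : f (x, y) = x • (C - A) + y • (D - B) + O := by simp [f]
  rw [AffineMap.lineMap_apply_module'] at hOa hOb
  have hA : f (-a, 0) = A := by rw [hf, ← hOa]; module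
  have hC : f (1 - a, 0) = C := by rw [hf, ← hOa]; module
  have hB : f (0, -b) = B := by rw [hf, ← hOb]; module
  have hD : f (0, 1 - b) = D := by rw [hf, ← hOb]; module
  refine ⟨a, ha, b, hb, f, ?_⟩
  rw [diagonalQuad_eq_convexHull ha hb, f.image_convexHull]
  simp only [Set.image_insert_eq, Set.image_singleton, hA, hB, hC, hD]

end DiagonalQuad

theorem bijective_of_nonempty_interior_image {E F : Type*} [AddCommGroup E] [Module ℝ E]
    [FiniteDimensional ℝ E] [NormedAddCommGroup F] [NormedSpace ℝ F] [FiniteDimensional ℝ F]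
    (hEF : Module.finrank ℝ E = Module.finrank ℝ F) (f : E →ᵃ[ℝ] F) {s : Set E}
    (hs : (interior (f '' s)).Nonempty) : Function.Bijective f := by
  have hspan : affineSpan ℝ (f '' s) = ⊤ :=
    affineSpan_eq_top_of_nonempty_interior (hs.mono (interior_mono (subset_convexHull ℝ _)))
  have hsurj : Function.Surjective f := by
    intro y
    have hy : y ∈ (affineSpan ℝ s).map f := by
      rw [AffineSubspace.map_span, hspan]
      exact AffineSubspace.mem_top ℝ F y
    obtain ⟨x, -, hx⟩ := hy
    exact ⟨x, hx⟩
  refine ⟨?_, hsurj⟩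
  rw [← AffineMap.linear_surjective_iff] at hsurj
  rw [← AffineMap.linear_injective_iff]
  exact (LinearMap.injective_iff_surjective_of_finrank_eq_finrank hEF).2 hsurj

theorem IsConvexNGon.exists_affineEquiv_image_diagonalQuad {Q : Set Plane}
    (hQ : IsConvexNGon Q 4) :
    ∃ a ∈ Set.Ioo (0 : ℝ) 1, ∃ b ∈ Set.Ioo (0 : ℝ) 1, ∃ f : ℝ × ℝ ≃ᵃ[ℝ] Plane,
      f '' diagonalQuad a b = Q := by
  obtain ⟨hcompact, hconvex, hinterior, hcard⟩ := hQ
  have hhull : convexHull ℝ (Q.extremePoints ℝ) = Q := by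
    have hfin : (Q.extremePoints ℝ).Finite := Set.finite_of_ncard_pos (by omega)
    rw [← (hfin.isClosed_convexHull ℝ).closure_eq,
      closure_convexHull_extremePoints hcompact hconvex]
  obtain ⟨A, B, C, D, hABCD, hinter⟩ := exists_mem_openSegment_inter_of_ncard_eq_four
    finrank_euclideanSpace_fin.le hconvex.convexIndependent_extremePoints hcard
  obtain ⟨a, ha, b, hb, f, hf⟩ := exists_affineMap_image_diagonalQuad hinter
  rw [← hABCD, hhull] at hf
  have hbij : Function.Bijective f :=
    bijective_of_nonempty_interior_image (by simp) f (hf ▸ hinterior)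
  exact ⟨a, ha, b, hb, AffineEquiv.ofBijective hbij, hf⟩

/-- Every convex quadrilateral admits a periodic edge-to-edge monohedral tiling of
the plane. -/
theorem convexQuadrilateral_admits_periodic_edgeToEdge_tiling
    (Q : Set Plane) (hQ : IsConvexNGon Q 4) :
    ∃ T : Set (Set Plane),
      IsMonohedralTiling Q T ∧ IsEdgeToEdge T ∧ IsPeriodicTiling T := by
  obtain ⟨a, ha, b, hb, f, rfl⟩ := hQ.exists_affineEquiv_image_diagonalQuad
  have hfaces := pairwise_faceToFace_image f <| pairwise_faceToFace_halfTurnTiling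
    (fun _ => faceToFace_diagonalQuad_image_add_right ha hb)
    (fun _ => faceToFace_diagonalQuad_image_sub_left ha hb)
  have hcover : ⋃₀ (Set.image f '' halfTurnTiling intLattice (-a, -b) (diagonalQuad a b)) =
      Set.univ := by
    rw [← Set.image_sUnion, sUnion_halfTurnTiling_diagonalQuad ha hb,
      Set.image_univ_of_surjective f.surjective]
  rw [image_halfTurnTiling] at hfaces hcover
  have hindep : LinearIndependent ℝ ![f.linear (1, 0), f.linear (0, 1)] :=
    LinearIndependent.pair_iff.2 fun s t h => by simpa [← map_smul, ← map_add] using h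
  refine ⟨_, ⟨fun _ => exists_isometryEquiv_of_mem_halfTurnTiling, hcover,
    hfaces.imp fun _ _ h => h.disjoint_interior (by simp)⟩,
    isEdgeToEdge_of_pairwise_faceToFace hfaces,
    isPeriodicTiling_halfTurnTiling hindep ?_ ?_ _ _⟩
  · exact AddSubgroup.mem_map_of_mem _ (mem_intLattice_iff.2 ⟨1, 0, by simp⟩)
  · exact AddSubgroup.mem_map_of_mem _ (mem_intLattice_iff.2 ⟨0, 1, by simp⟩)
end
end

section
/- Every convex hexagon in ℝ² whose three pairs of opposite edges are parallel and of equal length (a centrally symmetric convex hexagon) admits a periodic monohedral tiling of the plane in which every tile is a translate of the hexagon. -/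
/-!
Up to translation, a centrally symmetric hexagon `ABCDEF` is the zonotope with generators
`g = (B - A, B - C, D - C)`. The lines `AB` and `CD` support the hexagon, so
`C - B = s (B - A) + t (D - C)` with `s, t > 0`; hence the generators satisfy a relation
`∑ pᵢ gᵢ = 0` with all `pᵢ > 0`, unique up to scaling. The tiles are the translates by the lattice
of the vectors `∑ nᵢ gᵢ` with integers `nᵢ` of sum zero, spanned by the diagonals `C - A`, `D - B`.

Covering: for a point `∑ cᵢ gᵢ`, let `n` minimise `∑ (cᵢ - nᵢ)² / pᵢ` among integer vectors of sum
zero. Moving a unit from one coordinate to another does not improve `n`, which yields a real `t`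
with `|cᵢ - nᵢ - t pᵢ| ≤ 1 / 2` for all `i`, and the correction `t p` vanishes by the relation.

Packing: if interior points of the zonotope differ by `∑ nᵢ gᵢ`, then `|nᵢ - t pᵢ| < 1` for some
`t`. If `t ≥ 0` then all `nᵢ > -1`, so `nᵢ ≥ 0`, and the zero sum forces `n = 0`; the case `t ≤ 0`
is symmetric.
-/

open EuclideanGeometry

noncomputable section

/-- A convex hexagon with vertices `A,B,C,D,E,F` listed in cyclic order along the
boundary, so that consecutive listed vertices span the edges. -/
def IsConvexHexagonWithVertices (A B C D E F : Plane) (H : Set Plane) : Prop :=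
  H = convexHull ℝ {A, B, C, D, E, F} ∧
  Set.extremePoints ℝ H = {A, B, C, D, E, F} ∧
  ({A, B, C, D, E, F} : Set Plane).ncard = 6 ∧
  IsEdgeOf (segment ℝ A B) H ∧ IsEdgeOf (segment ℝ B C) H ∧ IsEdgeOf (segment ℝ C D) H ∧
  IsEdgeOf (segment ℝ D E) H ∧ IsEdgeOf (segment ℝ E F) H ∧ IsEdgeOf (segment ℝ F A) H

lemma nodup_of_ncard_eq_length {α : Type*} {l : List α} (h : {x | x ∈ l}.ncard = l.length) :
    l.Nodup := by
  classical
  rw [← List.coe_toFinset, Set.ncard_coe_finset] at h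
  exact Multiset.toFinset_card_eq_card_iff_nodup.1 h

section Apportionment

variable {ι : Type*} [Fintype ι] {p : ι → ℝ}

lemma finite_setOf_sum_sq_div_le (hp : ∀ i, 0 < p i) (c : ι → ℝ) (M : ℝ) :
    {n : ι → ℤ | ∑ i, (c i - n i) ^ 2 / p i ≤ M}.Finite := by
  have hfin (i : ι) : (((↑) : ℤ → ℝ) ⁻¹' Metric.closedBall (c i) √(M * p i)).Finite := by
    rw [Real.closedBall_eq_Icc, Int.preimage_Icc]
    exact Set.finite_Icc _ _
  refine (Set.Finite.pi hfin).subset fun n hn i _ ↦ ?_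
  have hterm : (c i - n i) ^ 2 / p i ≤ M :=
    (Finset.single_le_sum (f := fun i ↦ (c i - n i) ^ 2 / p i)
      (fun j _ ↦ div_nonneg (sq_nonneg _) (hp j).le) (Finset.mem_univ i)).trans hn
  rw [Set.mem_preimage, Metric.mem_closedBall, dist_comm, Real.dist_eq]
  exact Real.abs_le_sqrt ((div_le_iff₀ (hp i)).1 hterm)

lemma exists_int_sum_eq_zero_forall_le (hp : ∀ i, 0 < p i) (c : ι → ℝ) :
    ∃ n : ι → ℤ, ∑ i, n i = 0 ∧ ∀ m : ι → ℤ, ∑ i, m i = 0 →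
      ∑ i, (c i - n i) ^ 2 / p i ≤ ∑ i, (c i - m i) ^ 2 / p i := by
  have : Northcott fun n : ι → ℤ ↦ ∑ i, (c i - n i) ^ 2 / p i :=
    ⟨finite_setOf_sum_sq_div_le hp c⟩
  exact Northcott.exists_min_image _ {n : ι → ℤ | ∑ i, n i = 0} ⟨0, by simp⟩

-- Moving one unit from `j` to `i` cannot decrease the sum of squares.
lemma sub_half_div_le_add_half_div_of_forall_le (hp : ∀ i, 0 < p i) {c : ι → ℝ} {n : ι → ℤ}
    (hn : ∑ i, n i = 0)
    (hmin : ∀ m : ι → ℤ, ∑ i, m i = 0 →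
      ∑ i, (c i - n i) ^ 2 / p i ≤ ∑ i, (c i - m i) ^ 2 / p i) (i j : ι) :
    (c i - n i - 1 / 2) / p i ≤ (c j - n j + 1 / 2) / p j := by
  classical
  obtain rfl | hij := eq_or_ne i j
  · have := hp i
    gcongr
    linarith
  let m : ι → ℤ := n + Pi.single i 1 - Pi.single j 1
  have hm : ∑ k, m k = 0 := by
    simp [m, Finset.sum_add_distrib, hn]
  have hdiff : ∑ k, ((c k - m k) ^ 2 / p k - (c k - n k) ^ 2 / p k) =
      ((c i - n i - 1) ^ 2 / p i - (c i - n i) ^ 2 / p i) +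
        ((c j - n j + 1) ^ 2 / p j - (c j - n j) ^ 2 / p j) := by
    rw [Fintype.sum_eq_add i j hij fun k hk ↦ by simp [m, hk.1, hk.2]]
    simp [m, hij, hij.symm, sub_sub, sub_add]
  have hnonneg := sub_nonneg.2 (hmin m hm)
  rw [← Finset.sum_sub_distrib, hdiff] at hnonneg
  have hsq (x y : ℝ) : ((x - 1) ^ 2 / y - x ^ 2 / y) = -2 * ((x - 1 / 2) / y) := by ring
  have hsq' (x y : ℝ) : ((x + 1) ^ 2 / y - x ^ 2 / y) = 2 * ((x + 1 / 2) / y) := by ring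
  rw [hsq, hsq'] at hnonneg
  linarith

lemma exists_int_sum_eq_zero_abs_sub_le_half (hp : ∀ i, 0 < p i) (c : ι → ℝ) :
    ∃ (n : ι → ℤ) (t : ℝ), ∑ i, n i = 0 ∧ ∀ i, |c i - n i - t * p i| ≤ 1 / 2 := by
  cases isEmpty_or_nonempty ι
  · exact ⟨0, 0, by simp⟩
  obtain ⟨n, hn, hmin⟩ := exists_int_sum_eq_zero_forall_le hp c
  obtain ⟨i₀, hi₀⟩ := Finite.exists_max fun i ↦ (c i - n i - 1 / 2) / p i
  refine ⟨n, (c i₀ - n i₀ - 1 / 2) / p i₀, hn, fun i ↦ ?_⟩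
  have hlower := (div_le_iff₀ (hp i)).1 (hi₀ i)
  have hupper := (le_div_iff₀ (hp i)).1 (sub_half_div_le_add_half_div_of_forall_le hp hn hmin i₀ i)
  rw [abs_le]
  constructor <;> linarith

lemma eq_zero_of_abs_sub_lt_one (hp : ∀ i, 0 ≤ p i) {n : ι → ℤ} (hn : ∑ i, n i = 0) {t : ℝ}
    (h : ∀ i, |n i - t * p i| < 1) : n = 0 := by
  wlog ht : 0 ≤ t generalizing n t
  · refine neg_eq_zero.1 (this (n := -n) (t := -t) (by simp [hn]) (fun i ↦ ?_) (by linarith))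
    rw [← abs_neg]
    simpa [neg_add_eq_sub] using h i
  have hnonneg (i : ι) : 0 ≤ n i := by
    have hlt : (-1 : ℝ) < n i := by linarith [(abs_lt.1 (h i)).1, mul_nonneg ht (hp i)]
    have : -1 < n i := by exact_mod_cast hlt
    omega
  exact (Fintype.sum_eq_zero_iff_of_nonneg hnonneg).1 hn

end Apportionment

section DifferenceLattice

variable {ι E : Type*} [Fintype ι] [AddCommGroup E]

/-- The group generated by the differences `g i - g j`, encoded as the integer combinations of the
`g i` with coefficient sum zero. -/
def differenceLattice (g : ι → E) : AddSubgroup E where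
  carrier := {v | ∃ n : ι → ℤ, ∑ i, n i = 0 ∧ ∑ i, n i • g i = v}
  zero_mem' := ⟨0, by simp⟩
  add_mem' := by
    rintro _ _ ⟨m, hm, rfl⟩ ⟨n, hn, rfl⟩
    exact ⟨m + n, by simp [Finset.sum_add_distrib, hm, hn],
      by simp [add_smul, Finset.sum_add_distrib]⟩
  neg_mem' := by
    rintro _ ⟨n, hn, rfl⟩
    exact ⟨-n, by simp [hn], by simp⟩

lemma sub_mem_differenceLattice (g : ι → E) (i j : ι) : g i - g j ∈ differenceLattice g := by
  classical
  exact ⟨Pi.single i 1 - Pi.single j 1, by simp,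
    by simp [sub_smul, Finset.sum_sub_distrib, Pi.single_apply, ite_smul]⟩

end DifferenceLattice

section Zonotope

variable {ι E : Type*} [Fintype ι] [AddCommGroup E] [Module ℝ E] {g : ι → E} {p : ι → ℝ}

/-- The zonotope with generators `g i`, centred at the origin: the Minkowski sum of the segments
from `-(1 / 2) • g i` to `(1 / 2) • g i`. -/
def zonotope (g : ι → E) : Set E :=
  {x | ∃ θ : ι → ℝ, (∀ i, |θ i| ≤ 1 / 2) ∧ ∑ i, θ i • g i = x}

lemma zonotope_eq_convexHull (g : ι → E) :
    zonotope g =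
      convexHull ℝ (Fintype.linearCombination ℝ g '' Set.univ.pi fun _ ↦ {-(1 / 2), 1 / 2}) := by
  rw [← LinearMap.image_convexHull, convexHull_pi, convexHull_pair,
    segment_eq_Icc (by norm_num)]
  ext x
  simp [zonotope, Fintype.linearCombination_apply, abs_le, Pi.le_def, forall_and]

lemma convex_zonotope (g : ι → E) : Convex ℝ (zonotope g) := by
  rw [zonotope_eq_convexHull]
  exact convex_convexHull ..

lemma zonotope_subset_iff {S : Set E} (hS : Convex ℝ S) :
    zonotope g ⊆ S ↔ ∀ θ : ι → ℝ, (∀ i, θ i = -(1 / 2) ∨ θ i = 1 / 2) → ∑ i, θ i • g i ∈ S := by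
  rw [zonotope_eq_convexHull, hS.convexHull_subset_iff, Set.image_subset_iff]
  simp [Set.subset_def, Set.mem_pi, Fintype.linearCombination_apply]

lemma exists_mem_differenceLattice_sub_mem_zonotope (hp : ∀ i, 0 < p i)
    (hrel : ∑ i, p i • g i = 0) (hspan : Submodule.span ℝ (Set.range g) = ⊤) (x : E) :
    ∃ v ∈ differenceLattice g, x - v ∈ zonotope g := by
  obtain ⟨c, rfl⟩ : ∃ c : ι → ℝ, ∑ i, c i • g i = x :=
    (Submodule.mem_span_range_iff_exists_fun ℝ).1 (hspan ▸ Submodule.mem_top)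
  obtain ⟨n, t, hn, hc⟩ := exists_int_sum_eq_zero_abs_sub_le_half hp c
  refine ⟨_, ⟨n, hn, rfl⟩, fun i ↦ c i - n i - t * p i, hc, ?_⟩
  simp [sub_smul, mul_smul, Finset.sum_sub_distrib, ← Finset.smul_sum, hrel, Int.cast_smul_eq_zsmul]

lemma exists_abs_lt_half_of_mem_interior_zonotope [TopologicalSpace E] [ContinuousSMul ℝ E] {x : E}
    (hx : x ∈ interior (zonotope g)) :
    ∃ θ : ι → ℝ, (∀ i, |θ i| < 1 / 2) ∧ ∑ i, θ i • g i = x := by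
  have hdilate : ∀ᶠ r : ℝ in nhdsWithin 1 (Set.Ioi 1), r • x ∈ zonotope g := by
    have hcont : Filter.Tendsto (fun r : ℝ ↦ r • x) (nhds 1) (nhds x) := by
      have : Continuous fun r : ℝ ↦ r • x := by fun_prop
      simpa using this.tendsto 1
    exact (hcont.mono_left nhdsWithin_le_nhds).eventually (mem_interior_iff_mem_nhds.1 hx)
  obtain ⟨r, ⟨θ, hθ, hθx⟩, hr⟩ := (hdilate.and self_mem_nhdsWithin).exists
  have hr : 1 < r := hr
  have hr₀ : 0 < r := one_pos.trans hr
  refine ⟨fun i ↦ r⁻¹ * θ i, fun i ↦ ?_, ?_⟩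
  · rw [abs_mul, abs_of_pos (inv_pos.2 hr₀), inv_mul_lt_iff₀ hr₀]
    linarith [hθ i]
  · simp only [mul_smul, ← Finset.smul_sum, hθx, inv_smul_smul₀ hr₀.ne']

lemma eq_of_mem_interior_zonotope_of_sub_mem_differenceLattice [TopologicalSpace E]
    [ContinuousSMul ℝ E] (hp : ∀ i, 0 ≤ p i)
    (hker : ∀ c : ι → ℝ, ∑ i, c i • g i = 0 → ∃ t : ℝ, c = t • p) {x y : E}
    (hx : x ∈ interior (zonotope g)) (hy : y ∈ interior (zonotope g))
    (hxy : x - y ∈ differenceLattice g) : x = y := by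
  obtain ⟨θ, hθ, rfl⟩ := exists_abs_lt_half_of_mem_interior_zonotope hx
  obtain ⟨η, hη, rfl⟩ := exists_abs_lt_half_of_mem_interior_zonotope hy
  obtain ⟨n, hn, hng⟩ := hxy
  obtain ⟨t, ht⟩ := hker (fun i ↦ n i - (θ i - η i)) (by
    simp [sub_smul, Finset.sum_sub_distrib, Int.cast_smul_eq_zsmul, hng])
  have hn₀ : n = 0 := by
    refine eq_zero_of_abs_sub_lt_one hp hn (t := t) fun i ↦ ?_
    have hti : n i - t * p i = θ i - η i := by
      linarith [show n i - (θ i - η i) = t * p i from congrFun ht i]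
    rw [hti]
    linarith [abs_sub (θ i) (η i), hθ i, hη i]
  rw [← sub_eq_zero, ← hng]
  simp [hn₀]

lemma mem_convexHull_range_add_of_sum_smul_eq_zero (hp : ∀ i, 0 ≤ p i) (hsum : 0 < ∑ i, p i)
    (hrel : ∑ i, p i • g i = 0) (x : E) : x ∈ convexHull ℝ (Set.range fun i ↦ x + g i) := by
  have hcenter : Finset.univ.centerMass p (fun i ↦ x + g i) = x := by
    simp [Finset.centerMass, smul_add, Finset.sum_add_distrib, ← Finset.sum_smul, hrel, hsum.ne',
      smul_smul]
  have hmem : Finset.univ.centerMass p (fun i ↦ x + g i) ∈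
      convexHull ℝ (Set.range fun i ↦ x + g i) :=
    Finset.centerMass_mem_convexHull _ (fun i _ ↦ hp i) hsum fun i _ ↦ Set.mem_range_self i
  rwa [hcenter] at hmem

lemma linearIndependent_sub_sub {g : Fin 3 → E} {p : Fin 3 → ℝ} (hp : ∀ i, 0 < p i)
    (hker : ∀ c : Fin 3 → ℝ, ∑ i, c i • g i = 0 → ∃ t : ℝ, c = t • p) :
    LinearIndependent ℝ ![g 0 - g 1, g 2 - g 1] := by
  rw [LinearIndependent.pair_iff]
  intro s t hst
  obtain ⟨r, hr⟩ := hker ![s, -s - t, t] (by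
    rw [← hst]
    simp only [Fin.sum_univ_three, Matrix.cons_val]
    module)
  have h₀ : s = r * p 0 := congrFun hr 0
  have h₁ : -s - t = r * p 1 := congrFun hr 1
  have h₂ : t = r * p 2 := congrFun hr 2
  have hr₀ : r = 0 := by
    have hsum : r * (p 0 + p 1 + p 2) = 0 := by linear_combination -h₀ - h₁ - h₂
    exact (mul_eq_zero.1 hsum).resolve_right (by linarith [hp 0, hp 1, hp 2])
  simp [h₀, h₂, hr₀]

end Zonotope

section SupportingLines

variable {V : Type*} [AddCommGroup V] [Module ℝ V] {S : Set V} {x y z : V}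

lemma forall_lt_or_forall_gt_of_isExtreme {F : Set V} (hS : Convex ℝ S) (hF : IsExtreme ℝ S F)
    (f : V →ₗ[ℝ] ℝ) {k : ℝ} (hk : ∀ z ∈ S, f z = k → z ∈ F) :
    (∀ z ∈ S \ F, f z < k) ∨ ∀ z ∈ S \ F, k < f z := by
  by_contra! h
  obtain ⟨⟨y, hy, hky⟩, ⟨x, hx, hxk⟩⟩ := h
  have himage : (f '' (S \ F)).OrdConnected := ((hF.convex_sdiff hS).linear_image f).ordConnected
  obtain ⟨z, hz, rfl⟩ := himage.out (Set.mem_image_of_mem f hx) (Set.mem_image_of_mem f hy)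
    ⟨hxk, hky⟩
  exact hz.2 (hk z hz.1 rfl)

lemma mem_segment_of_wbtw_of_isExtreme (hxy : x ≠ y) (h : IsExtreme ℝ S (segment ℝ x y))
    (hz : z ∈ S) (hzxy : Wbtw ℝ z x y) : z ∈ segment ℝ x y := by
  obtain rfl | hzx := eq_or_ne z x
  · exact left_mem_segment ..
  · exact h.left_mem_of_mem_openSegment hz (h.subset (right_mem_segment ..)) (left_mem_segment ..)
      (mem_openSegment_of_ne_left_right hzx hxy.symm hzxy.mem_segment)

lemma mem_segment_of_mem_line_of_isExtreme (hxy : x ≠ y) (h : IsExtreme ℝ S (segment ℝ x y))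
    (hz : z ∈ S) (hline : z ∈ line[ℝ, x, y]) : z ∈ segment ℝ x y := by
  rcases (collinear_insert_of_mem_affineSpan_pair hline).wbtw_or_wbtw_or_wbtw with
    hzxy | hxyz | hyzx
  · exact mem_segment_of_wbtw_of_isExtreme hxy h hz hzxy
  · rw [segment_symm] at h ⊢
    exact mem_segment_of_wbtw_of_isExtreme hxy.symm h hz hxyz.symm
  · exact hyzx.symm.mem_segment

lemma exists_linearMap_ker_eq_span_singleton (hV : Module.finrank ℝ V = 2) {v : V} (hv : v ≠ 0) :
    ∃ f : V →ₗ[ℝ] ℝ, LinearMap.ker f = Submodule.span ℝ {v} := by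
  have : FiniteDimensional ℝ V := Module.finite_of_finrank_eq_succ hV
  have hlt : Submodule.span ℝ {v} < ⊤ :=
    Submodule.lt_top_of_finrank_lt_finrank (by rw [finrank_span_singleton hv, hV]; norm_num)
  obtain ⟨f, hf, hle⟩ := Submodule.exists_le_ker_of_lt_top _ hlt
  have hker := Module.Dual.finrank_ker_add_one_of_ne_zero hf
  refine ⟨f, (Submodule.eq_of_le_of_finrank_eq hle ?_).symm⟩
  rw [finrank_span_singleton hv]
  omega

lemma exists_linearMap_lt_of_isExtreme_segment (hV : Module.finrank ℝ V = 2) (hS : Convex ℝ S)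
    (hxy : x ≠ y) (h : IsExtreme ℝ S (segment ℝ x y)) :
    ∃ f : V →ₗ[ℝ] ℝ, f x = f y ∧ ∀ z ∈ S.extremePoints ℝ, z ≠ x → z ≠ y → f z < f x := by
  obtain ⟨f, hf⟩ := exists_linearMap_ker_eq_span_singleton hV (sub_ne_zero.2 hxy.symm)
  have hfxy : f x = f y := by
    rw [eq_comm, ← sub_eq_zero, ← map_sub, ← LinearMap.mem_ker, hf]
    exact Submodule.mem_span_singleton_self _
  have hlevel : ∀ z ∈ S, f z = f x → z ∈ segment ℝ x y := by
    intro z hz hzx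
    rw [← sub_eq_zero, ← map_sub, ← LinearMap.mem_ker, hf, Submodule.mem_span_singleton] at hzx
    obtain ⟨t, ht⟩ := hzx
    refine mem_segment_of_mem_line_of_isExtreme hxy h hz ?_
    rw [← sub_add_cancel z x, ← ht]
    exact smul_vsub_vadd_mem_affineSpan_pair t x y
  have hdiff : ∀ z ∈ S.extremePoints ℝ, z ≠ x → z ≠ y → z ∈ S \ segment ℝ x y := by
    intro z hz hzx hzy
    rw [mem_extremePoints_iff_forall_segment] at hz
    refine ⟨hz.1, fun hmem ↦ ?_⟩
    rcases hz.2 x (h.subset (left_mem_segment ..)) y (h.subset (right_mem_segment ..)) hmem with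
      hx | hy
    exacts [hzx hx.symm, hzy hy.symm]
  rcases forall_lt_or_forall_gt_of_isExtreme hS h f hlevel with hlt | hgt
  · exact ⟨f, hfxy, fun z hz hzx hzy ↦ hlt z (hdiff z hz hzx hzy)⟩
  · exact ⟨-f, by simpa using hfxy, fun z hz hzx hzy ↦ by simpa using hgt z (hdiff z hz hzx hzy)⟩

lemma linearIndependent_pair_of_apply_eq_zero {f g : V →ₗ[ℝ] ℝ} (hfx : f x = 0) (hfy : f y ≠ 0)
    (hgy : g y = 0) (hgx : g x ≠ 0) : LinearIndependent ℝ ![x, y] := by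
  rw [LinearIndependent.pair_iff]
  intro s t hst
  have hf : t * f y = 0 := by simpa [hfx] using congrArg f hst
  have hg : s * g x = 0 := by simpa [hgy] using congrArg g hst
  exact ⟨(mul_eq_zero.1 hg).resolve_right hgx, (mul_eq_zero.1 hf).resolve_right hfy⟩

lemma exists_pos_smul_add_smul_eq {f g : V →ₗ[ℝ] ℝ} (hV : Module.finrank ℝ V = 2)
    (hfx : f x = 0) (hfy : 0 < f y) (hfz : 0 < f z) (hgy : g y = 0) (hgx : 0 < g x)
    (hgz : 0 < g z) : ∃ s t : ℝ, 0 < s ∧ 0 < t ∧ z = s • x + t • y := by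
  have hspan : Submodule.span ℝ (Set.range ![x, y]) = ⊤ :=
    (linearIndependent_pair_of_apply_eq_zero hfx hfy.ne' hgy hgx.ne').span_eq_top_of_card_eq_finrank
      (by simp [hV])
  have hz : z ∈ Submodule.span ℝ (Set.range ![x, y]) := hspan ▸ Submodule.mem_top
  rw [Matrix.range_cons_cons_empty, Submodule.mem_span_pair] at hz
  obtain ⟨s, t, rfl⟩ := hz
  simp only [map_add, map_smul, hfx, hgy, smul_eq_mul, mul_zero, zero_add, add_zero] at hfz hgz
  exact ⟨s, t, pos_of_mul_pos_left hgz hgx.le, pos_of_mul_pos_left hfz hfy.le, rfl⟩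

end SupportingLines

section Hexagon

variable {V : Type*} [AddCommGroup V] [Module ℝ V] {S : Set V} {A B C D x y z : V} {s t : ℝ}

lemma sum_smul_eq_zero_of_smul_add_eq_zero (hz : s • x + z + t • y = 0) :
    ∑ i, ![s, 1, t] i • ![x, z, y] i = 0 := by
  simpa [Fin.sum_univ_three] using hz

lemma exists_eq_smul_of_sum_smul_eq_zero (hxy : LinearIndependent ℝ ![x, y])
    (hz : s • x + z + t • y = 0) {c : Fin 3 → ℝ} (hc : ∑ i, c i • ![x, z, y] i = 0) :
    ∃ r : ℝ, c = r • ![s, 1, t] := by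
  have hcomb : (c 0 - c 1 * s) • x + (c 2 - c 1 * t) • y = 0 := by
    simp only [Fin.sum_univ_three, Matrix.cons_val] at hc
    linear_combination (norm := module) hc - c 1 • hz
  obtain ⟨h₀, h₂⟩ := LinearIndependent.pair_iff.1 hxy _ _ hcomb
  refine ⟨c 1, funext fun i ↦ ?_⟩
  fin_cases i
  · simpa using sub_eq_zero.1 h₀
  · simp
  · simpa using sub_eq_zero.1 h₂

lemma span_range_triple_eq_top (hV : Module.finrank ℝ V = 2) (hxy : LinearIndependent ℝ ![x, y])
    (z : V) : Submodule.span ℝ (Set.range ![x, z, y]) = ⊤ := by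
  have hpair : Submodule.span ℝ (Set.range ![x, y]) = ⊤ :=
    hxy.span_eq_top_of_card_eq_finrank (by simp [hV])
  refine top_unique (hpair ▸ Submodule.span_mono ?_)
  rw [Matrix.range_cons_cons_empty]
  exact Set.insert_subset ⟨0, rfl⟩ (Set.singleton_subset_iff.2 ⟨2, rfl⟩)

lemma exists_linearMap_lt_lt_of_isExtreme_segment (hV : Module.finrank ℝ V = 2)
    (hS : Convex ℝ S) (hedge : IsExtreme ℝ S (segment ℝ A B)) (hAB : A ≠ B)
    (hC : C ∈ S.extremePoints ℝ) (hF : A + D - C ∈ S.extremePoints ℝ) (hAC : A ≠ C) (hBC : B ≠ C)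
    (hCD : C ≠ D) (hsum : A + D ≠ B + C) :
    ∃ f : V →ₗ[ℝ] ℝ, f A = f B ∧ f C < f B ∧ f D < f C := by
  obtain ⟨f, hfAB, hf⟩ := exists_linearMap_lt_of_isExtreme_segment hV hS hAB hedge
  have hfF := hf _ hF (by simpa [add_sub_assoc, sub_eq_zero] using hCD.symm)
    (by simpa [sub_eq_iff_eq_add] using hsum)
  rw [map_sub, map_add] at hfF
  exact ⟨f, hfAB, hfAB ▸ hf C hC hAC.symm hBC.symm, by linarith⟩

lemma hexagon_subset_translate_zonotope (A B C D : V) :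
    {A, B, C, D, A + D - B, A + D - C} ⊆
      (· + midpoint ℝ A D) '' zonotope ![B - A, B - C, D - C] := by
  have hcorner {P : V} (θ : Fin 3 → ℝ) (hθ : ∀ i, |θ i| = 1 / 2)
      (hP : θ 0 • (B - A) + θ 1 • (B - C) + θ 2 • (D - C) + (1 / 2 : ℝ) • (A + D) = P) :
      P ∈ (· + midpoint ℝ A D) '' zonotope ![B - A, B - C, D - C] :=
    ⟨_, ⟨θ, fun i ↦ (hθ i).le, rfl⟩, by
      simpa [Fin.sum_univ_three, midpoint_eq_smul_add] using hP⟩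
  rintro P (rfl | rfl | rfl | rfl | rfl | rfl)
  · exact hcorner ![-(1 / 2), 1 / 2, -(1 / 2)] (by simp [Fin.forall_fin_succ])
      (by simp only [Matrix.cons_val]; module)
  · exact hcorner ![1 / 2, 1 / 2, -(1 / 2)] (by simp [Fin.forall_fin_succ])
      (by simp only [Matrix.cons_val]; module)
  · exact hcorner ![1 / 2, -(1 / 2), -(1 / 2)] (by simp [Fin.forall_fin_succ])
      (by simp only [Matrix.cons_val]; module)
  · exact hcorner ![1 / 2, -(1 / 2), 1 / 2] (by simp [Fin.forall_fin_succ])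
      (by simp only [Matrix.cons_val]; module)
  · exact hcorner ![-(1 / 2), -(1 / 2), 1 / 2] (by simp [Fin.forall_fin_succ])
      (by simp only [Matrix.cons_val]; module)
  · exact hcorner ![-(1 / 2), 1 / 2, 1 / 2] (by simp [Fin.forall_fin_succ])
      (by simp only [Matrix.cons_val]; module)

lemma add_sub_mem_of_smul_add_eq_zero (hS : Convex ℝ S) (hs : 0 < s) (ht : 0 < t)
    (hrel : s • (B - A) + (B - C) + t • (D - C) = 0) (hA : A ∈ S) (hC : C ∈ S)
    (hE : A + D - B ∈ S) : A + C - B ∈ S := by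
  have hp : ∀ i, 0 ≤ ![s, 1, t] i := by simp [Fin.forall_fin_succ, hs.le, ht.le]
  have hsum : 0 < ∑ i, ![s, 1, t] i := by
    simp only [Fin.sum_univ_three, Matrix.cons_val]
    positivity
  refine hS.convexHull_subset_iff.2 (Set.range_subset_iff.2 fun i ↦ ?_)
    (mem_convexHull_range_add_of_sum_smul_eq_zero hp hsum
      (sum_smul_eq_zero_of_smul_add_eq_zero hrel) (A + C - B))
  fin_cases i
  · simpa using hC
  · simpa using hA
  · have hD : A + C - B + (D - C) = A + D - B := by abel
    simpa [hD] using hE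

lemma translate_zonotope_subset_of_hexagon_subset (hS : Convex ℝ S) (hs : 0 < s) (ht : 0 < t)
    (hrel : s • (B - A) + (B - C) + t • (D - C) = 0)
    (hvertex : {A, B, C, D, A + D - B, A + D - C} ⊆ S) :
    (· + midpoint ℝ A D) '' zonotope ![B - A, B - C, D - C] ⊆ S := by
  simp only [Set.insert_subset_iff, Set.singleton_subset_iff] at hvertex
  obtain ⟨hA, hB, hC, hD, hE, hF⟩ := hvertex
  -- These two points come from the constant sign vectors; the other six sign vectors give vertices.
  have hACB : A + C - B ∈ S := add_sub_mem_of_smul_add_eq_zero hS hs ht hrel hA hC hE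
  have hDBC : D + B - C ∈ S := by
    refine add_sub_mem_of_smul_add_eq_zero hS ht hs ?_ hD hB (add_comm A D ▸ hF)
    linear_combination (norm := module) (-1 : ℝ) • hrel
  rw [Set.image_subset_iff, zonotope_subset_iff (hS.translate_preimage_left _)]
  intro θ hθ
  rcases hθ 0 with h₀ | h₀ <;> rcases hθ 1 with h₁ | h₁ <;> rcases hθ 2 with h₂ | h₂ <;>
    simp only [Set.mem_preimage, Fin.sum_univ_three, h₀, h₁, h₂, Matrix.cons_val,
      midpoint_eq_smul_add, invOf_eq_inv]
  · convert hACB using 1; module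
  · convert hE using 1; module
  · convert hA using 1; module
  · convert hF using 1; module
  · convert hC using 1; module
  · convert hD using 1; module
  · convert hB using 1; module
  · convert hDBC using 1; module

lemma convexHull_hexagon_eq_translate_zonotope (hs : 0 < s) (ht : 0 < t)
    (hrel : s • (B - A) + (B - C) + t • (D - C) = 0) :
    convexHull ℝ {A, B, C, D, A + D - B, A + D - C} =
      (· + midpoint ℝ A D) '' zonotope ![B - A, B - C, D - C] := by
  have hconvex : Convex ℝ ((· + midpoint ℝ A D) '' zonotope ![B - A, B - C, D - C]) := by
    rw [Set.image_add_right]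
    exact (convex_zonotope _).translate_preimage_left _
  exact (convexHull_min (hexagon_subset_translate_zonotope A B C D) hconvex).antisymm
    (translate_zonotope_subset_of_hexagon_subset (convex_convexHull ..) hs ht hrel
      (subset_convexHull ..))

lemma linearIndependent_and_exists_pos_smul_add_eq_zero (hV : Module.finrank ℝ V = 2)
    (hS : Convex ℝ S) (hedgeAB : IsExtreme ℝ S (segment ℝ A B))
    (hedgeCD : IsExtreme ℝ S (segment ℝ C D))
    (hvertex : {B, C, A + D - B, A + D - C} ⊆ S.extremePoints ℝ)
    (hnodup : [A, B, C, D, A + D - B, A + D - C].Nodup) :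
    LinearIndependent ℝ ![B - A, D - C] ∧
      ∃ s t : ℝ, 0 < s ∧ 0 < t ∧ s • (B - A) + (B - C) + t • (D - C) = 0 := by
  simp only [Set.insert_subset_iff, Set.singleton_subset_iff] at hvertex
  obtain ⟨hB, hC, hE, hF⟩ := hvertex
  obtain ⟨hAB, hAC, hBC, hBD, hCD⟩ : A ≠ B ∧ A ≠ C ∧ B ≠ C ∧ B ≠ D ∧ C ≠ D := by grind
  have hsum : A + D ≠ B + C := fun h ↦ by simp [h] at hnodup
  obtain ⟨f, hfAB, hfC, hfD⟩ :=
    exists_linearMap_lt_lt_of_isExtreme_segment hV hS hedgeAB hAB hC hF hAC hBC hCD hsum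
  obtain ⟨g, hgDC, hgB, hgA⟩ :=
    exists_linearMap_lt_lt_of_isExtreme_segment hV hS (segment_symm ℝ C D ▸ hedgeCD) hCD.symm hB
      (add_comm A D ▸ hE) hBD.symm hBC.symm hAB.symm (by rwa [add_comm D, add_comm C])
  have hf₀ : (-f) (B - A) = 0 := by simp [hfAB]
  have hf₁ : 0 < (-f) (D - C) := by simpa using hfD
  have hf₂ : 0 < (-f) (C - B) := by simpa using hfC
  have hg₀ : g (D - C) = 0 := by simp [hgDC]
  have hg₁ : 0 < g (B - A) := by simpa using hgA
  have hg₂ : 0 < g (C - B) := by simpa using hgB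
  obtain ⟨s, t, hs, ht, hst⟩ := exists_pos_smul_add_smul_eq hV hf₀ hf₁ hf₂ hg₀ hg₁ hg₂
  refine ⟨linearIndependent_pair_of_apply_eq_zero hf₀ hf₁.ne' hg₀ hg₁.ne', s, t, hs, ht, ?_⟩
  linear_combination (norm := module) -hst

end Hexagon

section TranslateTiling

variable {Λ : AddSubgroup Plane} {S : Set Plane} {v w x : Plane}

lemma mem_translateSet : x ∈ TranslateSet v S ↔ x - v ∈ S := by
  simp [TranslateSet, sub_eq_add_neg]

lemma interior_translateSet (v : Plane) (S : Set Plane) :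
    interior (TranslateSet v S) = TranslateSet v (interior S) :=
  ((Homeomorph.addRight v).image_interior S).symm

lemma translateSet_translateSet (v w : Plane) (S : Set Plane) :
    TranslateSet v (TranslateSet w S) = TranslateSet (w + v) S := by
  simp only [TranslateSet, Set.image_image, add_assoc]

/-- The family of the translates of `S` by the vectors of `Λ`. -/
def translateTiling (Λ : AddSubgroup Plane) (S : Set Plane) : Set (Set Plane) :=
  (TranslateSet · S) '' Λ

lemma translateSet_mem_translateTiling (hv : v ∈ Λ) {t : Set Plane} (ht : t ∈ translateTiling Λ S) :
    TranslateSet v t ∈ translateTiling Λ S := by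
  obtain ⟨w, hw, rfl⟩ := ht
  exact ⟨w + v, add_mem hw hv, (translateSet_translateSet v w S).symm⟩

lemma isPeriodicTiling_translateTiling (hv : v ∈ Λ) (hw : w ∈ Λ)
    (hvw : LinearIndependent ℝ ![v, w]) : IsPeriodicTiling (translateTiling Λ S) :=
  ⟨v, w, hvw, fun _ ↦ translateSet_mem_translateTiling hv,
    fun _ ↦ translateSet_mem_translateTiling hw⟩

lemma isMonohedralTiling_translateTiling (hcover : ∀ x, ∃ v ∈ Λ, x - v ∈ S)
    (hpack : ∀ x ∈ interior S, ∀ y ∈ interior S, x - y ∈ Λ → x = y) :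
    IsMonohedralTiling S (translateTiling Λ S) := by
  refine ⟨?_, Set.eq_univ_of_forall fun x ↦ ?_, ?_⟩
  · rintro _ ⟨v, -, rfl⟩
    exact ⟨IsometryEquiv.addRight v, rfl⟩
  · obtain ⟨v, hv, hx⟩ := hcover x
    exact ⟨_, Set.mem_image_of_mem _ hv, mem_translateSet.2 hx⟩
  · rintro _ ⟨v, hv, rfl⟩ _ ⟨w, hw, rfl⟩ hvw
    refine Set.disjoint_left.2 fun x hxv hxw ↦ hvw ?_
    rw [interior_translateSet, mem_translateSet] at hxv hxw
    have hdiff : x - v - (x - w) ∈ Λ := by simpa using sub_mem hw hv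
    rw [sub_right_injective (hpack _ hxv _ hxw hdiff)]

lemma isMonohedralTiling_translateTiling_zonotope {ι : Type*} [Fintype ι] {g : ι → Plane}
    {p : ι → ℝ} (hp : ∀ i, 0 < p i) (hrel : ∑ i, p i • g i = 0)
    (hspan : Submodule.span ℝ (Set.range g) = ⊤)
    (hker : ∀ c : ι → ℝ, ∑ i, c i • g i = 0 → ∃ t : ℝ, c = t • p) (O : Plane) :
    IsMonohedralTiling (TranslateSet O (zonotope g))
      (translateTiling (differenceLattice g) (TranslateSet O (zonotope g))) := by
  refine isMonohedralTiling_translateTiling (fun x ↦ ?_) fun x hx y hy hxy ↦ ?_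
  · obtain ⟨v, hv, hx⟩ := exists_mem_differenceLattice_sub_mem_zonotope hp hrel hspan (x - O)
    exact ⟨v, hv, mem_translateSet.2 (by rwa [sub_right_comm])⟩
  · rw [interior_translateSet, mem_translateSet] at hx hy
    exact sub_left_injective <| eq_of_mem_interior_zonotope_of_sub_mem_differenceLattice
      (fun i ↦ (hp i).le) hker hx hy (by rwa [sub_sub_sub_cancel_right])

end TranslateTiling

/-- Every centrally symmetric convex hexagon (three pairs of opposite edges
parallel and of equal length) admits a periodic monohedral tiling of the plane in
which every tile is a translate of the hexagon. -/
theorem centrallySymmetric_hexagon_admits_periodic_translate_tiling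
    (A B C D E F : Plane) (H : Set Plane)
    (hH : IsConvexHexagonWithVertices A B C D E F H)
    (h1 : B - A = -(E - D)) (h2 : C - B = -(F - E)) (h3 : D - C = -(A - F)) :
    ∃ T : Set (Set Plane), IsMonohedralTiling H T ∧
      (∀ t ∈ T, ∃ v : Plane, t = TranslateSet v H) ∧ IsPeriodicTiling T := by
  obtain ⟨hhull, hext, hcard, ⟨-, -, -, -, hedgeAB⟩, -, ⟨-, -, -, -, hedgeCD⟩, -⟩ := hH
  obtain rfl : E = A + D - B := by linear_combination (norm := module) h1
  obtain rfl : F = A + D - C := by linear_combination (norm := module) -h3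
  have hplane : Module.finrank ℝ Plane = 2 := finrank_euclideanSpace_fin
  have hconvex : Convex ℝ H := hhull ▸ convex_convexHull ..
  have hnodup : [A, B, C, D, A + D - B, A + D - C].Nodup :=
    nodup_of_ncard_eq_length (by simpa [Set.insert_def] using hcard)
  obtain ⟨hli, s, t, hs, ht, hrel⟩ := linearIndependent_and_exists_pos_smul_add_eq_zero hplane
    hconvex hedgeAB hedgeCD (by simp [hext, Set.insert_subset_iff]) hnodup
  rw [convexHull_hexagon_eq_translate_zonotope hs ht hrel] at hhull
  have hp : ∀ i, 0 < ![s, 1, t] i := by simp [Fin.forall_fin_succ, hs, ht]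
  have hker (c : Fin 3 → ℝ) (hc : ∑ i, c i • ![B - A, B - C, D - C] i = 0) :
      ∃ r : ℝ, c = r • ![s, 1, t] := exists_eq_smul_of_sum_smul_eq_zero hli hrel hc
  refine ⟨translateTiling (differenceLattice ![B - A, B - C, D - C]) H, ?_, ?_, ?_⟩
  · rw [hhull]
    exact isMonohedralTiling_translateTiling_zonotope hp
      (sum_smul_eq_zero_of_smul_add_eq_zero hrel) (span_range_triple_eq_top hplane hli _) hker _
  · rintro _ ⟨v, -, rfl⟩
    exact ⟨v, rfl⟩
  · exact isPeriodicTiling_translateTiling (sub_mem_differenceLattice _ 0 1)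
      (sub_mem_differenceLattice _ 2 1) (linearIndependent_sub_sub hp hker)
end
end

section
/- No convex polygon with seven or more vertices admits a monohedral tiling of the plane. -/
/-!
The angles of a convex polygon with `n` vertices sum to `(n - 2) / 2` turns. Only the lower bound
is needed, and it follows by averaging over directions: the line through a vertex `v` in a random
direction enters the interior angle at `v` on one of its two sides, so with probability at most
twice the angle at `v`; it certainly does so unless `v` is one of the two extreme vertices for the
linear form vanishing on that direction.

In a tiling, the corners meeting at a point have on average at most a third of a turn each. Hence
`m` corners at points of a disc, belonging to `N` tiles, satisfy `m ≤ 6 N`. If every tile has at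
least seven vertices and diameter at most `D`, the numbers `N R` of tiles meeting the disc of
radius `R` satisfy `7 N R ≤ 6 N (R + D)` and grow exponentially, whereas tiles of area bounded
below only allow for quadratic growth.
-/

open EuclideanGeometry

noncomputable section

open MeasureTheory Metric Module ProbabilityTheory Set
open scoped Finset Topology

theorem sum_measureReal_le_of_ae_card_le {α ι : Type*} [MeasurableSpace α] {μ : Measure α}
    [IsProbabilityMeasure μ] {S : Finset ι} {A : ι → Set α} {_ : ∀ a, DecidablePred (a ∈ A ·)}
    {k : ℕ} (hA : ∀ i ∈ S, NullMeasurableSet (A i) μ) (hk : ∀ᵐ a ∂μ, #{i ∈ S | a ∈ A i} ≤ k) :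
    ∑ i ∈ S, μ.real (A i) ≤ k := by
  have hint : ∀ i ∈ S, Integrable ((A i).indicator (1 : α → ℝ)) μ := fun i hi =>
    (integrable_const (1 : ℝ)).indicator₀ (hA i hi)
  calc ∑ i ∈ S, μ.real (A i)
      = ∫ a, ∑ i ∈ S, (A i).indicator (1 : α → ℝ) a ∂μ := by
        rw [integral_finsetSum _ hint]
        exact Finset.sum_congr rfl fun i hi => by
          rw [integral_indicator₀ (hA i hi)]
          simp
    _ ≤ ∫ _, (k : ℝ) ∂μ := by
        refine integral_mono_ae (integrable_finsetSum _ hint) (integrable_const _) ?_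
        filter_upwards [hk] with a ha
        have : ∑ i ∈ S, (A i).indicator (1 : α → ℝ) a = #{i ∈ S | a ∈ A i} := by
          simp [indicator_apply]
        exact this ▸ Nat.cast_le.2 ha
    _ = k := by simp

/-! ### Radial cones -/

section RadialCone

variable {E : Type*} [AddCommGroup E] [Module ℝ E] {t : Set E} {p x : E}

/-- The radial cone, or cone of feasible directions, of `t` at `p`: the convex cone generated by
the vectors from `p` to the points of `t`. Unlike the tangent cone of a convex set, it need not be
closed. -/
def radialCone (t : Set E) (p : E) : ConvexCone ℝ E :=
  ConvexCone.hull ℝ ((p + ·) ⁻¹' t)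

theorem mem_radialCone_of_add_smul_mem {c : ℝ} (hc : 0 < c) (h : p + c • x ∈ t) :
    x ∈ radialCone t p :=
  ((radialCone t p).smul_mem_iff hc).1 (ConvexCone.subset_hull h)

theorem sub_mem_radialCone (hx : x ∈ t) : x - p ∈ radialCone t p :=
  mem_radialCone_of_add_smul_mem one_pos (by simpa using hx)

theorem radialCone_le {C : ConvexCone ℝ E} (h : ∀ x ∈ t, x - p ∈ C) : radialCone t p ≤ C :=
  ConvexCone.hull_min fun x hx => by simpa using h _ hx

theorem mem_radialCone_iff (ht : Convex ℝ t) :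
    x ∈ radialCone t p ↔ ∃ c : ℝ, 0 < c ∧ p + c • x ∈ t := by
  refine ⟨fun hx => ?_, fun ⟨c, hc, h⟩ => mem_radialCone_of_add_smul_mem hc h⟩
  obtain ⟨r, hr, y, hy, rfl⟩ :=
    (ConvexCone.mem_hull_of_convex (ht.translate_preimage_right p)).1 hx
  exact ⟨r⁻¹, inv_pos.2 hr, by simpa [smul_smul, inv_mul_cancel₀ hr.ne'] using hy⟩

theorem add_smul_mem_of_le_of_convex (ht : Convex ℝ t) (hp : p ∈ t) {c d : ℝ} (hd : 0 < d)
    (hdc : d ≤ c) (h : p + c • x ∈ t) : p + d • x ∈ t := by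
  have hc : 0 < c := hd.trans_le hdc
  simpa [smul_smul, div_mul_cancel₀ _ hc.ne'] using
    ht.add_smul_mem hp h (t := d / c) ⟨by positivity, (div_le_one hc).2 hdc⟩

theorem smul_mem_radialCone_of_mem_openSegment {y : E} (hx : x ∈ t) (hy : y ∈ t)
    (hp : p ∈ openSegment ℝ x y) (r : ℝ) : r • (x - p) ∈ radialCone t p := by
  obtain ⟨a, b, ha, hb, hab, rfl⟩ := hp
  set p := a • x + b • y
  have hzero : a • (x - p) + b • (y - p) = 0 := by
    rw [smul_sub, smul_sub, sub_add_sub_comm, ← add_smul, hab, one_smul, sub_self]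
  have hx' : x - p ∈ radialCone t p := sub_mem_radialCone hx
  have hy' : y - p ∈ radialCone t p := sub_mem_radialCone hy
  have hzero_mem : (0 : E) ∈ radialCone t p := hzero ▸ (radialCone t p).add_mem
    ((radialCone t p).smul_mem ha hx') ((radialCone t p).smul_mem hb hy')
  rcases lt_trichotomy r 0 with hr | rfl | hr
  · have : r • (x - p) = (-r / a * b) • (y - p) := by
      rw [mul_smul, eq_neg_of_add_eq_zero_right hzero, smul_neg, smul_smul,
        div_mul_cancel₀ _ ha.ne', neg_smul, neg_neg]
    rw [this]
    exact (radialCone t p).smul_mem (mul_pos (div_pos (neg_pos.2 hr) ha) hb) hy'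
  · simpa using hzero_mem
  · exact (radialCone t p).smul_mem hr hx'

variable [TopologicalSpace E] [IsTopologicalAddGroup E] [ContinuousSMul ℝ E]

theorem exists_pos_add_smul_mem_of_mem_nhds {U : Set E} (hU : U ∈ 𝓝 p) (x : E) :
    ∃ c : ℝ, 0 < c ∧ p + c • x ∈ U := by
  have hlim : Filter.Tendsto (fun c : ℝ => p + c • x) (𝓝[>] 0) (𝓝 p) :=
    (Continuous.tendsto' (by fun_prop) 0 p (by simp)).mono_left nhdsWithin_le_nhds
  obtain ⟨c, hcU, hc⟩ := ((hlim.eventually hU).and self_mem_nhdsWithin).exists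
  exact ⟨c, hc, hcU⟩

theorem radialCone_eq_top_of_mem_interior (hp : p ∈ interior t) : radialCone t p = ⊤ :=
  top_unique fun x _ =>
    let ⟨_, hc, h⟩ := exists_pos_add_smul_mem_of_mem_nhds (mem_interior_iff_mem_nhds.1 hp) x
    mem_radialCone_of_add_smul_mem hc h

end RadialCone

/-! ### Solid angles -/

section BishopPhelpsCone

variable {E : Type*} [SeminormedAddCommGroup E] [NormedSpace ℝ E] {f : E →L[ℝ] ℝ} {x : E}

/-- The Bishop–Phelps cone of `f`, a closed convex cone on which `f` dominates the norm. -/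
def bishopPhelpsCone (f : E →L[ℝ] ℝ) : ConvexCone ℝ E where
  carrier := {x | ‖x‖ ≤ f x}
  smul_mem' c hc x hx := by
    simpa [norm_smul, abs_of_pos hc] using mul_le_mul_of_nonneg_left hx hc.le
  add_mem' x hx y hy := (norm_add_le x y).trans (by simpa using add_le_add hx hy)

theorem mem_bishopPhelpsCone : x ∈ bishopPhelpsCone f ↔ ‖x‖ ≤ f x :=
  Iff.rfl

theorem isClosed_bishopPhelpsCone : IsClosed (bishopPhelpsCone f : Set E) :=
  isClosed_le continuous_norm f.continuous

end BishopPhelpsCone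

section SolidAngle

/-- The uniform probability distribution on the unit ball. The measure of a cone with apex `0` is
the proportion of all directions that it contains. -/
def directionMeasure (E : Type*) [SeminormedAddCommGroup E] [MeasureSpace E] : Measure E :=
  volume[|ball 0 1]

theorem directionMeasure_absolutelyContinuous {E : Type*} [SeminormedAddCommGroup E]
    [MeasureSpace E] : directionMeasure E ≪ volume :=
  cond_absolutelyContinuous

variable {E : Type*} [NormedAddCommGroup E] [NormedSpace ℝ E] [MeasureSpace E] {t : Set E} {p : E}

/-- The solid angle of `t` at `p`, measured in full turns. -/
def solidAngle (t : Set E) (p : E) : ℝ :=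
  (directionMeasure E).real (radialCone t p)

variable [FiniteDimensional ℝ E] [(volume : Measure E).IsAddHaarMeasure]

instance : IsProbabilityMeasure (directionMeasure E) :=
  cond_isProbabilityMeasure_of_finite (measure_ball_pos _ _ one_pos).ne' measure_ball_lt_top.ne

theorem solidAngle_of_mem_interior (hp : p ∈ interior t) : solidAngle t p = 1 := by
  simp [solidAngle, radialCone_eq_top_of_mem_interior hp]

variable [BorelSpace E]

instance : (directionMeasure E).IsNegInvariant where
  neg_eq_self := by
    ext s _
    rw [Measure.neg_apply, directionMeasure, cond_apply measurableSet_ball,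
      cond_apply measurableSet_ball, ← Measure.measure_neg volume (ball 0 1 ∩ -s), inter_neg,
      neg_neg, neg_ball, neg_zero]

theorem nullMeasurableSet_directionMeasure_of_convex (ht : Convex ℝ t) :
    NullMeasurableSet t (directionMeasure E) :=
  (ht.nullMeasurableSet volume).mono_ac directionMeasure_absolutelyContinuous

theorem directionMeasure_submodule_eq_zero {s : Submodule ℝ E} (hs : s ≠ ⊤) :
    directionMeasure E s = 0 :=
  directionMeasure_absolutelyContinuous (Measure.addHaar_submodule volume s hs)

theorem directionMeasure_real_neg (s : Set E) :
    (directionMeasure E).real (-s) = (directionMeasure E).real s := by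
  rw [measureReal_def, Measure.measure_neg, measureReal_def]

theorem directionMeasure_real_pos_of_isOpen {U : Set E} (hU : IsOpen U)
    (hne : (U ∩ ball 0 1).Nonempty) : 0 < (directionMeasure E).real U := by
  refine ENNReal.toReal_pos ?_ (measure_ne_top _ _)
  rw [directionMeasure, cond_apply measurableSet_ball, inter_comm]
  exact mul_ne_zero (ENNReal.inv_ne_zero.2 measure_ball_lt_top.ne)
    ((hU.inter isOpen_ball).measure_pos volume hne).ne'

theorem directionMeasure_real_eq_half {f : E →L[ℝ] ℝ} (hf : f ≠ 0) {s : Set E}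
    (hpos : {x | 0 < f x} ⊆ s) (hnonneg : s ⊆ {x | 0 ≤ f x}) :
    (directionMeasure E).real s = 1 / 2 := by
  have hker : directionMeasure E f.ker = 0 :=
    directionMeasure_submodule_eq_zero fun h => hf <| by
      ext x
      exact LinearMap.mem_ker.1 (h ▸ Submodule.mem_top)
  have hae : ∀ {r : Set E}, {x | 0 < f x} ⊆ r → r ⊆ {x | 0 ≤ f x} →
      (directionMeasure E).real r = (directionMeasure E).real {x | 0 < f x} := fun hr hr' =>
    measureReal_congr <| (hr.eventuallyLE.antisymm <| ae_le_set.2 <| measure_mono_null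
      (fun x hx => le_antisymm (not_lt.1 hx.2) (hr' hx.1)) hker).symm
  have hcompl : {x | 0 ≤ f x}ᶜ = -{x | 0 < f x} := by
    ext x
    simp
  have hsum := probReal_compl_eq_one_sub (μ := directionMeasure E)
    (s := {x | 0 ≤ f x}) (isClosed_le (by fun_prop) (by fun_prop)).measurableSet
  rw [hcompl, directionMeasure_real_neg, hae (r := {x | 0 ≤ f x})
    (fun x (hx : 0 < f x) => hx.le) subset_rfl] at hsum
  rw [hae hpos hnonneg]
  linarith

theorem directionMeasure_real_bishopPhelpsCone_lt_half (hE : 1 < finrank ℝ E) (f : E →L[ℝ] ℝ) :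
    (directionMeasure E).real (bishopPhelpsCone f) < 1 / 2 := by
  set K : Set E := ↑(bishopPhelpsCone f)
  set V : Set E := {x | |f x| < ‖x‖}
  have : Nontrivial E := Module.nontrivial_of_finrank_pos (R := ℝ) (by lia)
  have hVopen : IsOpen V := isOpen_lt (by fun_prop) (by fun_prop)
  have hVpos : 0 < (directionMeasure E).real V := by
    obtain ⟨u, hu, hu0⟩ : ∃ u ∈ f.ker, u ≠ 0 := Submodule.exists_mem_ne_zero_of_ne_bot <|
      LinearMap.ker_ne_bot_of_finrank_lt (by simpa using hE)
    obtain ⟨c, hc, hcu⟩ :=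
      exists_pos_add_smul_mem_of_mem_nhds (ball_mem_nhds (0 : E) one_pos) u
    refine directionMeasure_real_pos_of_isOpen hVopen ⟨c • u, ?_, by simpa using hcu⟩
    have hfu : f u = 0 := hu
    simp [V, hfu, hc.ne', hu0]
  have hzero : directionMeasure E {0} = 0 := by
    simpa using directionMeasure_submodule_eq_zero (bot_ne_top (α := Submodule ℝ E))
  have hcompl : -K \ {0} ∪ V ⊆ Kᶜ := by
    rintro x (⟨hx, hx0⟩ | hx) hxK
    · have hx : ‖x‖ ≤ -f x := by simpa [K, mem_bishopPhelpsCone] using hx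
      exact hx0 (norm_le_zero_iff.1 (by linarith [show ‖x‖ ≤ f x from hxK]))
    · exact (lt_of_le_of_lt (le_abs_self (f x)) hx).not_ge hxK
  have hdisj : Disjoint (-K \ {0}) V := by
    rw [disjoint_left]
    rintro x ⟨hx, -⟩ hxV
    have hx : ‖x‖ ≤ -f x := by simpa [K, mem_bishopPhelpsCone] using hx
    exact (lt_of_le_of_lt (neg_le_abs (f x)) hxV).not_ge hx
  have hle := measureReal_mono (μ := directionMeasure E) hcompl
  rw [measureReal_union hdisj hVopen.measurableSet, measureReal_def (s := -K \ {0}),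
    measure_sdiff_null hzero, ← measureReal_def, directionMeasure_real_neg,
    probReal_compl_eq_one_sub isClosed_bishopPhelpsCone.measurableSet] at hle
  linarith

end SolidAngle

/-! ### Angles of planar convex sets -/

section Planar

variable {E : Type*} [NormedAddCommGroup E] [NormedSpace ℝ E] {t : Set E} {u v p : E}

theorem exists_radialCone_le_bishopPhelpsCone (ht : Convex ℝ t) (hcompact : IsCompact t)
    (hfin : (extremePoints ℝ t).Finite) (hv : v ∈ extremePoints ℝ t) :
    ∃ f : E →L[ℝ] ℝ, radialCone t v ≤ bishopPhelpsCone f := by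
  set W := extremePoints ℝ t \ {v}
  have hW : W.Finite := hfin.sdiff
  have hvW : v ∉ convexHull ℝ W := fun h =>
    ((ht.mem_extremePoints_iff_mem_sdiff_convexHull_sdiff).1 hv).2
      (convexHull_mono (sdiff_subset_sdiff_left extremePoints_subset) h)
  obtain ⟨f, a, hfv, hfW⟩ :=
    geometric_hahn_banach_point_closed (convex_convexHull ℝ W) (hW.isClosed_convexHull ℝ) hvW
  obtain ⟨c, hc⟩ := (hW.image fun x => ‖x - v‖ / f (x - v)).bddAbove
  have hWcone : ∀ x ∈ W, x - v ∈ bishopPhelpsCone (c • f) := fun x hx => by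
    have hpos : 0 < f (x - v) := by
      have := hfW x (subset_convexHull ℝ W hx)
      rw [map_sub]
      linarith
    exact (div_le_iff₀ hpos).1 (hc (mem_image_of_mem _ hx))
  have hhull : t = convexHull ℝ (extremePoints ℝ t) := by
    rw [← (hfin.isClosed_convexHull ℝ).closure_eq, closure_convexHull_extremePoints hcompact ht]
  refine ⟨c • f, radialCone_le fun x hx => ?_⟩
  rw [hhull] at hx
  have hconv : Convex ℝ {x | x - v ∈ bishopPhelpsCone (c • f)} := by
    simp only [sub_eq_add_neg]
    exact (bishopPhelpsCone (c • f)).convex.translate_preimage_left (-v)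
  refine convexHull_min (fun y hy => ?_) hconv hx
  by_cases hyv : y = v
  · simp [hyv, mem_bishopPhelpsCone]
  · exact hWcone y ⟨hy, hyv⟩

theorem solidAngle_lt_half_of_mem_extremePoints [FiniteDimensional ℝ E] [MeasureSpace E]
    [BorelSpace E] [(volume : Measure E).IsAddHaarMeasure] (hE : 1 < finrank ℝ E)
    (ht : Convex ℝ t) (hcompact : IsCompact t) (hfin : (extremePoints ℝ t).Finite)
    (hv : v ∈ extremePoints ℝ t) : solidAngle t v < 1 / 2 := by
  obtain ⟨f, hf⟩ := exists_radialCone_le_bishopPhelpsCone ht hcompact hfin hv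
  exact (measureReal_mono hf).trans_lt (directionMeasure_real_bishopPhelpsCone_lt_half hE f)

theorem exists_smul_eq_of_apply_eq_zero (hE : finrank ℝ E = 2) {f : E →L[ℝ] ℝ} (hf : f ≠ 0)
    (hu : u ≠ 0) (hfu : f u = 0) {x : E} (hfx : f x = 0) : ∃ r : ℝ, r • u = x := by
  have : FiniteDimensional ℝ E := Module.finite_of_finrank_eq_succ hE
  have hker : finrank ℝ f.ker = 1 := by
    have := Module.Dual.finrank_ker_add_one_of_ne_zero (f := (f : E →ₗ[ℝ] ℝ))
      (fun h => hf (ContinuousLinearMap.coe_injective h))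
    lia
  obtain ⟨r, hr⟩ := exists_smul_eq_of_finrank_eq_one hker (x := ⟨u, hfu⟩)
    (fun h => hu (congrArg Subtype.val h)) ⟨x, hfx⟩
  exact ⟨r, congrArg Subtype.val hr⟩

theorem span_singleton_ne_top (hE : 1 < finrank ℝ E) (u : E) : Submodule.span ℝ {u} ≠ ⊤ := by
  intro h
  have := finrank_span_le_card (R := ℝ) ({u} : Set E)
  rw [h, finrank_top, toFinset_singleton, Finset.card_singleton] at this
  lia

theorem exists_ne_zero_apply_eq_zero (hE : 1 < finrank ℝ E) (u : E) :
    ∃ f : E →L[ℝ] ℝ, f ≠ 0 ∧ f u = 0 := by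
  have : FiniteDimensional ℝ E := Module.finite_of_finrank_pos (by lia)
  obtain ⟨f, hf, hker⟩ :=
    Submodule.exists_le_ker_of_lt_top _ (span_singleton_ne_top hE u).lt_top
  refine ⟨LinearMap.toContinuousLinearMap f, by simpa using hf, ?_⟩
  simpa using hker (Submodule.mem_span_singleton_self u)

theorem setOf_pos_subset_radialCone (hE : finrank ℝ E = 2) {f : E →L[ℝ] ℝ}
    (hnonneg : ∀ x ∈ t, f p ≤ f x) {a : E} (ha : a ∈ t) (hfa : f p < f a) (hp : p ∈ t)
    (hpe : p ∉ extremePoints ℝ t) : {z | 0 < f z} ⊆ radialCone t p := by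
  obtain ⟨x, hx, y, hy, hpxy, hxp⟩ : ∃ x ∈ t, ∃ y ∈ t, p ∈ openSegment ℝ x y ∧ x ≠ p := by
    simpa [mem_extremePoints_iff_left, hp] using hpe
  have hfx : f (x - p) = 0 := by
    obtain ⟨b, c, hb, hc, hbc, h⟩ := hpxy
    have hfp : b * f x + c * f y = f p := by simpa using congrArg f h
    have hfy := mul_le_mul_of_nonneg_left (hnonneg y hy) hc.le
    have hfx : b * f x ≤ b * f p := by linear_combination hfy + hfp - f p * hbc
    rw [map_sub, sub_eq_zero]
    exact (le_of_mul_le_mul_left hfx hb).antisymm (hnonneg x hx)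
  intro z (hz : 0 < f z)
  have hfap : 0 < f (a - p) := by simpa using hfa
  obtain ⟨r, hr⟩ := exists_smul_eq_of_apply_eq_zero hE (by rintro rfl; simp at hz)
    (sub_ne_zero.2 hxp) hfx (x := z - (f z / f (a - p)) • (a - p))
    (by rw [map_sub, map_smul, smul_eq_mul, div_mul_cancel₀ _ hfap.ne', sub_self])
  rw [eq_sub_iff_add_eq] at hr
  exact hr ▸ (radialCone t p).add_mem (smul_mem_radialCone_of_mem_openSegment hx hy hpxy r)
    ((radialCone t p).smul_mem (div_pos hz hfap) (sub_mem_radialCone ha))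

theorem smul_mem_radialCone_of_lt_of_lt (hE : finrank ℝ E = 2) (ht : Convex ℝ t)
    {f : E →L[ℝ] ℝ} (hu : u ≠ 0) (hfu : f u = 0) (hv : v ∈ extremePoints ℝ t) {x y : E}
    (hx : x ∈ t) (hy : y ∈ t) (hxv : f x < f v) (hvy : f v < f y) :
    u ∈ radialCone t v ∨ -u ∈ radialCone t v := by
  obtain ⟨q, hq, hfq⟩ : ∃ q ∈ openSegment ℝ x y, f q = f v := by
    have : f v ∈ f '' openSegment ℝ x y := by
      have himage := image_openSegment ℝ (f : E →ₗ[ℝ] ℝ).toAffineMap x y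
      simp only [LinearMap.coe_toAffineMap, ContinuousLinearMap.coe_coe] at himage
      rw [himage, openSegment_eq_Ioo (hxv.trans hvy)]
      exact ⟨hxv, hvy⟩
    exact this
  have hqt : q ∈ t := ht.openSegment_subset hx hy hq
  obtain ⟨r, hr⟩ := exists_smul_eq_of_apply_eq_zero hE (by rintro rfl; simp at hxv) hu hfu
    (x := q - v) (by rw [map_sub, hfq, sub_self])
  have hqv : r • u ∈ radialCone t v := hr ▸ sub_mem_radialCone hqt
  rcases lt_trichotomy r 0 with hr0 | rfl | hr0
  · exact .inr (((radialCone t v).smul_mem_iff (neg_pos.2 hr0)).1 (by simpa using hqv))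
  · have hqv : q = v := sub_eq_zero.1 (by simpa using hr.symm)
    have : x = v := mem_extremePoints_iff_left.1 hv |>.2 x hx y hy (hqv ▸ hq)
    exact absurd (congrArg f this) hxv.ne
  · exact .inl (((radialCone t v).smul_mem_iff hr0).1 hqv)

variable [MeasureSpace E] [BorelSpace E] [FiniteDimensional ℝ E]
  [(volume : Measure E).IsAddHaarMeasure]

theorem solidAngle_eq_half_of_notMem_extremePoints (hE : finrank ℝ E = 2) (ht : Convex ℝ t)
    (hint : (interior t).Nonempty) (hp : p ∈ t) (hpint : p ∉ interior t)
    (hpe : p ∉ extremePoints ℝ t) : solidAngle t p = 1 / 2 := by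
  obtain ⟨f, hf⟩ := geometric_hahn_banach_point_open ht.interior isOpen_interior hpint
  obtain ⟨a, ha⟩ := hint
  have hnonneg : ∀ x ∈ t, f p ≤ f x := fun x hx =>
    closure_minimal (fun y hy => (hf y hy).le) (isClosed_le continuous_const f.continuous)
      (ht.closure_interior_eq_closure_of_nonempty_interior ⟨a, ha⟩ ▸ subset_closure hx)
  refine directionMeasure_real_eq_half (f := f) (fun h => (hf a ha).ne (by simp [h]))
    (setOf_pos_subset_radialCone hE hnonneg (interior_subset ha) (hf a ha) hp hpe)
    fun x hx => ?_
  obtain ⟨c, hc, hx⟩ := (mem_radialCone_iff ht).1 hx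
  have := hnonneg _ hx
  rw [map_add, map_smul, smul_eq_mul] at this
  exact nonneg_of_mul_nonneg_right (by linarith) hc

theorem ae_exists_apply_eq_zero_injOn (hE : finrank ℝ E = 2) {S : Set E} (hS : S.Countable) :
    ∀ᵐ u ∂directionMeasure E, u ≠ 0 ∧ ∃ f : E →L[ℝ] ℝ, f u = 0 ∧ InjOn f S := by
  have hspan : ∀ w : E, ∀ᵐ u ∂directionMeasure E, u ∉ Submodule.span ℝ {w} := fun w =>
    measure_eq_zero_iff_ae_notMem.1 <| directionMeasure_submodule_eq_zero
      (span_singleton_ne_top (by lia) w)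
  have hpairs : ∀ᵐ u ∂directionMeasure E, ∀ v ∈ S, ∀ w ∈ S, u ∉ Submodule.span ℝ {v - w} :=
    (ae_ball_iff hS).2 fun v _ => (ae_ball_iff hS).2 fun w _ => hspan (v - w)
  filter_upwards [hpairs, hspan 0] with u hu hu0
  have hu0 : u ≠ 0 := by simpa using hu0
  obtain ⟨f, hf, hfu⟩ := exists_ne_zero_apply_eq_zero (by lia) u
  refine ⟨hu0, f, hfu, fun v hv w hw hvw => ?_⟩
  obtain ⟨r, hr⟩ := exists_smul_eq_of_apply_eq_zero hE hf hu0 hfu (x := v - w)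
    (by rw [map_sub, hvw, sub_self])
  by_contra hne
  have hr0 : r ≠ 0 := by
    rintro rfl
    exact hne (sub_eq_zero.1 (by simpa using hr.symm))
  exact hu v hv w hw (Submodule.mem_span_singleton.2 ⟨r⁻¹, by rw [← hr, inv_smul_smul₀ hr0]⟩)

open scoped Classical in
theorem ae_card_notMem_radialCone_le_two (hE : finrank ℝ E = 2) (ht : Convex ℝ t) {S : Finset E}
    (hS : ↑S ⊆ extremePoints ℝ t) : ∀ᵐ u ∂directionMeasure E,
      #{v ∈ S | u ∈ ((radialCone t v ∪ -radialCone t v : Set E))ᶜ} ≤ 2 := by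
  filter_upwards [ae_exists_apply_eq_zero_injOn hE S.countable_toSet] with u ⟨hu0, f, hfu, hinj⟩
  have hmax : #{v ∈ S | ∀ x ∈ t, f x ≤ f v} ≤ 1 := by
    refine Finset.card_le_one.2 fun v hv w hw => ?_
    rw [Finset.mem_filter] at hv hw
    exact hinj hv.1 hw.1 ((hw.2 v (hS hv.1).1).antisymm (hv.2 w (hS hw.1).1))
  have hmin : #{v ∈ S | ∀ x ∈ t, f v ≤ f x} ≤ 1 := by
    refine Finset.card_le_one.2 fun v hv w hw => ?_
    rw [Finset.mem_filter] at hv hw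
    exact hinj hv.1 hw.1 ((hv.2 w (hS hw.1).1).antisymm (hw.2 v (hS hv.1).1))
  refine ((Finset.card_le_card fun v hv => ?_).trans (Finset.card_union_le _ _)).trans
    (add_le_add hmin hmax)
  rw [Finset.mem_filter] at hv
  rw [Finset.mem_union, Finset.mem_filter, Finset.mem_filter]
  by_contra! h
  obtain ⟨x, hx, hxv⟩ := h.1 hv.1
  obtain ⟨y, hy, hvy⟩ := h.2 hv.1
  exact hv.2 (smul_mem_radialCone_of_lt_of_lt hE ht hu0 hfu (hS hv.1) hx hy hxv hvy)

theorem card_le_two_mul_sum_solidAngle_add_two (hE : finrank ℝ E = 2) (ht : Convex ℝ t)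
    {S : Finset E} (hS : ↑S ⊆ extremePoints ℝ t) :
    (#S : ℝ) ≤ 2 * ∑ v ∈ S, solidAngle t v + 2 := by
  have hcone : ∀ v, NullMeasurableSet (radialCone t v : Set E) (directionMeasure E) := fun v =>
    nullMeasurableSet_directionMeasure_of_convex (radialCone t v).convex
  have hnegcone : ∀ v, NullMeasurableSet (-radialCone t v : Set E) (directionMeasure E) := fun v =>
    nullMeasurableSet_directionMeasure_of_convex (radialCone t v).convex.neg
  have hsum := sum_measureReal_le_of_ae_card_le
    (A := fun v => (radialCone t v ∪ -radialCone t v : Set E)ᶜ)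
    (fun v _ => ((hcone v).union (hnegcone v)).compl) (ae_card_notMem_radialCone_le_two hE ht hS)
  have hle : ∀ v ∈ S, 1 - 2 * solidAngle t v ≤
      (directionMeasure E).real (radialCone t v ∪ -radialCone t v : Set E)ᶜ := fun v _ => by
    have := measureReal_union_le (μ := directionMeasure E) (radialCone t v : Set E)
      (-radialCone t v)
    rw [directionMeasure_real_neg] at this
    rw [probReal_compl_eq_one_sub₀ ((hcone v).union (hnegcone v)), solidAngle]
    linarith
  have := (Finset.sum_le_sum hle).trans hsum
  rw [Finset.sum_sub_distrib, ← Finset.mul_sum, Finset.sum_const, nsmul_one] at this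
  push_cast at this
  linarith

end Planar

/-! ### Tilings by convex sets -/

section ConvexTiling

variable {E : Type*} [NormedAddCommGroup E] [NormedSpace ℝ E] {T : Set (Set E)} {s t : Set E}
  {p : E}

/-- A tiling of `E` by convex bodies, not necessarily congruent. -/
structure IsConvexTiling (T : Set (Set E)) : Prop where
  isCompact : ∀ t ∈ T, IsCompact t
  convex : ∀ t ∈ T, Convex ℝ t
  interior_nonempty : ∀ t ∈ T, (interior t).Nonempty
  sUnion_eq_univ : ⋃₀ T = univ
  pairwise_disjoint_interior : T.Pairwise fun s t => Disjoint (interior s) (interior t)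

theorem IsConvexTiling.exists_mem (hT : IsConvexTiling T) (p : E) : ∃ t ∈ T, p ∈ t :=
  mem_sUnion.1 (hT.sUnion_eq_univ ▸ mem_univ p)

theorem IsConvexTiling.exists_mem_radialCone (hT : IsConvexTiling T)
    (hlf : LocallyFinite fun t : T => (t : Set E)) (p x : E) :
    ∃ t ∈ T, p ∈ t ∧ x ∈ radialCone t p := by
  obtain ⟨c, hc, hx⟩ := exists_pos_add_smul_mem_of_mem_nhds
    (hlf.iInter_compl_mem_nhds (fun t => (hT.isCompact t t.2).isClosed) p) x
  obtain ⟨t, ht, hxt⟩ := hT.exists_mem (p + c • x)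
  have hpt : p ∈ t := by
    by_contra hpt
    exact mem_iInter₂.1 hx ⟨t, ht⟩ hpt hxt
  exact ⟨t, ht, hpt, mem_radialCone_of_add_smul_mem hc hxt⟩

variable [MeasureSpace E] [BorelSpace E] [FiniteDimensional ℝ E]
  [(volume : Measure E).IsAddHaarMeasure]

theorem volume_inter_eq_zero_of_disjoint_interior (hs : Convex ℝ s) (ht : Convex ℝ t)
    (hst : Disjoint (interior s) (interior t)) : volume (s ∩ t) = 0 := by
  refine measure_mono_null (t := frontier s ∪ frontier t) ?_
    (measure_union_null (hs.addHaar_frontier volume) (ht.addHaar_frontier volume))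
  rintro x ⟨hxs, hxt⟩
  by_cases hx : x ∈ interior s
  · exact .inr ⟨subset_closure hxt, fun hx' => disjoint_left.1 hst hx hx'⟩
  · exact .inl ⟨subset_closure hxs, hx⟩

theorem aedisjoint_radialCone (hs : Convex ℝ s) (ht : Convex ℝ t) (hps : p ∈ s) (hpt : p ∈ t)
    (hst : volume (s ∩ t) = 0) :
    AEDisjoint (directionMeasure E) (radialCone s p) (radialCone t p) := by
  refine directionMeasure_absolutelyContinuous <| measure_mono_null
    (t := ⋃ k : ℕ, (fun x : E => (1 / ((k : ℝ) + 1)) • x) ⁻¹' ((p + ·) ⁻¹' (s ∩ t))) ?_ ?_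
  · rintro x ⟨hxs, hxt⟩
    obtain ⟨c, hc, hxs⟩ := (mem_radialCone_iff hs).1 hxs
    obtain ⟨d, hd, hxt⟩ := (mem_radialCone_iff ht).1 hxt
    obtain ⟨k, hk⟩ := exists_nat_one_div_lt (lt_min hc hd)
    exact mem_iUnion.2 ⟨k,
      add_smul_mem_of_le_of_convex hs hps (by positivity) (hk.le.trans (min_le_left _ _)) hxs,
      add_smul_mem_of_le_of_convex ht hpt (by positivity) (hk.le.trans (min_le_right _ _)) hxt⟩
  · refine measure_iUnion_null fun k => ?_
    rw [Measure.addHaar_preimage_smul _ (by positivity), measure_preimage_add, hst, mul_zero]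

namespace IsConvexTiling

theorem volume_inter_eq_zero (hT : IsConvexTiling T) (hs : s ∈ T) (ht : t ∈ T) (hst : s ≠ t) :
    volume (s ∩ t) = 0 :=
  volume_inter_eq_zero_of_disjoint_interior (hT.convex s hs) (hT.convex t ht)
    (hT.pairwise_disjoint_interior hs ht hst)

theorem sum_solidAngle_eq_one (hT : IsConvexTiling T)
    (hlf : LocallyFinite fun t : T => (t : Set E)) {F : Finset (Set E)}
    (hF : ∀ t, t ∈ F ↔ t ∈ T ∧ p ∈ t) : ∑ t ∈ F, solidAngle t p = 1 := by
  have hcover : ⋃ t ∈ F, (radialCone t p : Set E) = univ :=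
    eq_univ_of_forall fun x =>
      let ⟨t, ht, hpt, hx⟩ := hT.exists_mem_radialCone hlf p x
      mem_biUnion ((hF t).2 ⟨ht, hpt⟩) hx
  rw [← probReal_univ (μ := directionMeasure E), ← hcover, measureReal_biUnion_finset₀]
  · rfl
  · intro s hs t ht hst
    obtain ⟨hsT, hps⟩ := (hF s).1 hs
    obtain ⟨htT, hpt⟩ := (hF t).1 ht
    exact aedisjoint_radialCone (hT.convex s hsT) (hT.convex t htT) hps hpt
      (hT.volume_inter_eq_zero hsT htT hst)
  · exact fun t _ => nullMeasurableSet_directionMeasure_of_convex (radialCone t p).convex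

theorem exists_sum_solidAngle_eq_nat_div_two (hE : finrank ℝ E = 2) (hT : IsConvexTiling T)
    {F : Finset (Set E)} (hF : ∀ t ∈ F, t ∈ T ∧ p ∈ t ∧ p ∉ extremePoints ℝ t) :
    ∃ m : ℕ, ∑ t ∈ F, solidAngle t p = m / 2 := by
  have hangle : ∀ t ∈ F, ∃ m : ℕ, solidAngle t p = m / 2 := by
    intro t ht
    obtain ⟨htT, hpt, hpe⟩ := hF t ht
    by_cases hint : p ∈ interior t
    · exact ⟨2, by rw [solidAngle_of_mem_interior hint]; norm_num⟩
    · exact ⟨1, by rw [solidAngle_eq_half_of_notMem_extremePoints hE (hT.convex t htT)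
        (hT.interior_nonempty t htT) hpt hint hpe, Nat.cast_one]⟩
  choose! m hm using hangle
  exact ⟨∑ t ∈ F, m t, by rw [Finset.sum_congr rfl hm, Nat.cast_sum, Finset.sum_div]⟩

open scoped Classical in
/-- The tiles through `p` which do not have `p` as a vertex use up `m` half turns. What remains is
filled by corners of less than half a turn, so that there are at least `3 - m` of them. -/
theorem three_mul_sum_solidAngle_le_card (hE : finrank ℝ E = 2) (hT : IsConvexTiling T)
    (hlf : LocallyFinite fun t : T => (t : Set E))
    (hfin : ∀ t ∈ T, (extremePoints ℝ t).Finite) {F : Finset (Set E)}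
    (hF : ∀ t, t ∈ F ↔ t ∈ T ∧ p ∈ extremePoints ℝ t) : 3 * ∑ t ∈ F, solidAngle t p ≤ #F := by
  rcases F.eq_empty_or_nonempty with rfl | hne
  · simp
  have hthrough : {t ∈ T | p ∈ t}.Finite :=
    ((hlf.point_finite p).image Subtype.val).subset fun t ht => ⟨⟨t, ht.1⟩, ht.2, rfl⟩
  set G := hthrough.toFinset
  have hG : ∀ t, t ∈ G ↔ t ∈ T ∧ p ∈ t := fun t => hthrough.mem_toFinset
  have hFG : F ⊆ G := fun t ht => (hG t).2 (((hF t).1 ht).imp_right (extremePoints_subset ·))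
  obtain ⟨m, hm⟩ := exists_sum_solidAngle_eq_nat_div_two (p := p) hE hT (F := G \ F) fun t ht => by
    simp only [Finset.mem_sdiff, hG, hF] at ht
    exact ⟨ht.1.1, ht.1.2, fun h => ht.2 ⟨ht.1.1, h⟩⟩
  have hsum := hT.sum_solidAngle_eq_one hlf hG
  rw [← Finset.sum_sdiff hFG, hm] at hsum
  have hlt : ∑ t ∈ F, solidAngle t p < ∑ _t ∈ F, (1 / 2 : ℝ) :=
    Finset.sum_lt_sum_of_nonempty hne fun t ht =>
      let ⟨htT, hpt⟩ := (hF t).1 ht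
      solidAngle_lt_half_of_mem_extremePoints (by lia) (hT.convex t htT) (hT.isCompact t htT)
        (hfin t htT) hpt
  rw [Finset.sum_const, nsmul_eq_mul] at hlt
  have hcard : 3 ≤ m + #F := by
    have : (2 : ℝ) < m + #F := by linarith
    exact_mod_cast this
  have hcard_real : (3 : ℝ) ≤ m + #F := mod_cast hcard
  linarith [m.cast_nonneg (α := ℝ)]

open scoped Classical in
/-- With `α` the angles and `N` the number of corners, `N ≤ 2 ∑ α + 2 #F` by the angle sums of the
tiles in `F`, and `3 ∑ α ≤ N` by the angle sums around the points of `X`. -/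
theorem sum_card_extremePoints_le (hE : finrank ℝ E = 2) (hT : IsConvexTiling T)
    (hlf : LocallyFinite fun t : T => (t : Set E))
    (hfin : ∀ t ∈ T, (extremePoints ℝ t).Finite) {F : Finset (Set E)} (hFT : ↑F ⊆ T)
    {X : Finset E} (hX : ∀ t ∈ T, ∀ v ∈ X, v ∈ extremePoints ℝ t → t ∈ F) :
    ∑ t ∈ F, #{v ∈ X | v ∈ extremePoints ℝ t} ≤ 6 * #F := by
  have hswap : ∀ a : Set E → E → ℝ, ∑ t ∈ F, ∑ v ∈ X with v ∈ extremePoints ℝ t, a t v =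
      ∑ v ∈ X, ∑ t ∈ F with v ∈ extremePoints ℝ t, a t v := fun a => by
    simp only [Finset.sum_filter]
    exact Finset.sum_comm
  set N : ℝ := ∑ t ∈ F, (#{v ∈ X | v ∈ extremePoints ℝ t} : ℝ)
  have htiles : N ≤ 2 * ∑ t ∈ F, ∑ v ∈ X with v ∈ extremePoints ℝ t, solidAngle t v + 2 * #F := by
    have := Finset.sum_le_sum fun t ht => card_le_two_mul_sum_solidAngle_add_two hE
      (hT.convex t (hFT ht)) (S := {v ∈ X | v ∈ extremePoints ℝ t})
      fun v hv => (Finset.mem_filter.1 hv).2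
    rwa [Finset.sum_add_distrib, ← Finset.mul_sum, Finset.sum_const, nsmul_eq_mul,
      mul_comm _ (2 : ℝ)] at this
  have hpoints : 3 * ∑ t ∈ F, ∑ v ∈ X with v ∈ extremePoints ℝ t, solidAngle t v ≤ N := by
    rw [hswap, Finset.mul_sum]
    calc ∑ v ∈ X, 3 * ∑ t ∈ F with v ∈ extremePoints ℝ t, solidAngle t v
        ≤ ∑ v ∈ X, (#{t ∈ F | v ∈ extremePoints ℝ t} : ℝ) :=
          Finset.sum_le_sum fun v hv => hT.three_mul_sum_solidAngle_le_card hE hlf hfin fun t => by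
            rw [Finset.mem_filter]
            exact ⟨fun h => ⟨hFT h.1, h.2⟩, fun h => ⟨hX t h.1 v hv h.2, h.2⟩⟩
      _ = N := by simpa [N] using (hswap 1).symm
  have : N ≤ 6 * #F := by linarith
  simp only [N] at this
  exact_mod_cast this

end IsConvexTiling

end ConvexTiling

/-! ### Normal tilings -/

section NormalTiling

theorem exists_mul_pow_lt_of_mul_le_succ {a : ℕ → ℝ} {q : ℝ} (hq : 1 < q) (ha : 0 < a 0)
    (hstep : ∀ k, q * a k ≤ a (k + 1)) (K : ℝ) (d : ℕ) : ∃ k : ℕ, K * (k + 1) ^ d < a k := by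
  have hq0 : 0 < q := one_pos.trans hq
  have hlim : Filter.Tendsto (fun k : ℕ => ((k + 1 : ℕ) : ℝ) ^ d / q ^ (k + 1) * (q * K))
      Filter.atTop (𝓝 0) := by
    simpa using (((tendsto_pow_const_div_const_pow_of_one_lt d hq).comp
      (Filter.tendsto_add_atTop_nat 1)).mul_const (q * K))
  obtain ⟨k, hk⟩ := (hlim.eventually_lt_const ha).exists
  refine ⟨k, ?_⟩
  calc K * (k + 1) ^ d = q ^ k * (((k + 1 : ℕ) : ℝ) ^ d / q ^ (k + 1) * (q * K)) := by
        push_cast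
        field_simp
        ring
    _ < q ^ k * a 0 := by gcongr
    _ ≤ a k := geom_le hq0.le k fun j _ => hstep j

variable {E : Type*} [NormedAddCommGroup E] [NormedSpace ℝ E] [MeasureSpace E]
  {T : Set (Set E)} {t : Set E} {A D R : ℝ} {p : E}

/-- A normal tiling: the tiles are convex bodies of volume at least `A > 0` and diameter at most
`D`, hence neither arbitrarily small nor arbitrarily large. -/
structure IsNormalTiling (A D : ℝ) (T : Set (Set E)) : Prop extends IsConvexTiling T where
  pos : 0 < A
  le_volume : ∀ t ∈ T, A ≤ volume.real t
  diam_le : ∀ t ∈ T, diam t ≤ D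

/-- The tiles of `T` that meet the set `s`. -/
def tilesMeeting (T : Set (Set E)) (s : Set E) : Set (Set E) :=
  {t ∈ T | (t ∩ s).Nonempty}

namespace IsNormalTiling

theorem dist_le (hT : IsNormalTiling A D T) (ht : t ∈ T) {x y : E} (hx : x ∈ t) (hy : y ∈ t) :
    dist x y ≤ D :=
  (dist_le_diam_of_mem (hT.isCompact t ht).isBounded hx hy).trans (hT.diam_le t ht)

theorem nonneg (hT : IsNormalTiling A D T) : 0 ≤ D :=
  let ⟨t, ht, _⟩ := hT.exists_mem 0
  diam_nonneg.trans (hT.diam_le t ht)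

theorem subset_closedBall (hT : IsNormalTiling A D T)
    (ht : t ∈ tilesMeeting T (closedBall p R)) : t ⊆ closedBall p (R + D) := by
  obtain ⟨htT, y, hyt, hyR⟩ := ht
  intro x hx
  have := hT.dist_le htT hx hyt
  rw [mem_closedBall] at hyR ⊢
  linarith [dist_triangle x y p]

variable [BorelSpace E] [FiniteDimensional ℝ E] [(volume : Measure E).IsAddHaarMeasure]

theorem card_mul_le (hT : IsNormalTiling A D T) {F : Finset (Set E)}
    (hF : ↑F ⊆ tilesMeeting T (closedBall p R)) :
    #F * A ≤ volume.real (closedBall p (R + D)) :=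
  calc #F * A = ∑ _t ∈ F, A := by rw [Finset.sum_const, nsmul_eq_mul]
    _ ≤ ∑ t ∈ F, volume.real t := Finset.sum_le_sum fun t ht => hT.le_volume t (hF ht).1
    _ = volume.real (⋃ t ∈ F, t) := by
      refine (measureReal_biUnion_finset₀ (f := fun t : Set E => t)
        (fun s hs t ht hst => hT.volume_inter_eq_zero (hF hs).1 (hF ht).1 hst)
        (fun t ht => (hT.convex t (hF ht).1).nullMeasurableSet volume) fun t ht => ?_).symm
      exact (hT.isCompact t (hF ht).1).measure_ne_top
    _ ≤ volume.real (closedBall p (R + D)) :=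
      measureReal_mono (iUnion₂_subset fun t ht => hT.subset_closedBall (hF ht))
        measure_closedBall_lt_top.ne

theorem finite_tilesMeeting (hT : IsNormalTiling A D T) (p : E) (R : ℝ) :
    (tilesMeeting T (closedBall p R)).Finite := by
  by_contra hinf
  obtain ⟨k, hk⟩ := exists_nat_gt (volume.real (closedBall p (R + D)) / A)
  obtain ⟨F, hF, rfl⟩ := Set.Infinite.exists_subset_card_eq hinf k
  exact ((div_lt_iff₀ hT.pos).1 hk).not_ge (hT.card_mul_le hF)

theorem locallyFinite (hT : IsNormalTiling A D T) : LocallyFinite fun t : T => (t : Set E) :=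
  fun p => ⟨closedBall p 1, closedBall_mem_nhds p one_pos,
    Finite.of_finite_image (f := Subtype.val) ((hT.finite_tilesMeeting p 1).subset
      (image_subset_iff.2 fun t ht => ⟨t.2, ht⟩)) Subtype.val_injective.injOn⟩

theorem mul_ncard_tilesMeeting_le (hE : finrank ℝ E = 2) (hT : IsNormalTiling A D T)
    (hfin : ∀ t ∈ T, (extremePoints ℝ t).Finite) {n : ℕ}
    (hn : ∀ t ∈ T, n ≤ (extremePoints ℝ t).ncard) (R : ℝ) :
    n * (tilesMeeting T (closedBall 0 R)).ncard ≤
      6 * (tilesMeeting T (closedBall 0 (R + D))).ncard := by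
  classical
  have hinnerfin := hT.finite_tilesMeeting 0 R
  have houterfin := hT.finite_tilesMeeting 0 (R + D)
  have hsub : tilesMeeting T (closedBall 0 R) ⊆ tilesMeeting T (closedBall 0 (R + D)) :=
    fun t ht => ⟨ht.1, ht.2.mono (inter_subset_inter_right _
      (closedBall_subset_closedBall (by linarith [hT.nonneg])))⟩
  have hXfin : (⋃ t ∈ tilesMeeting T (closedBall 0 R), extremePoints ℝ t).Finite :=
    hinnerfin.biUnion fun t ht => hfin t ht.1
  rw [ncard_eq_toFinset_card _ hinnerfin, ncard_eq_toFinset_card _ houterfin]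
  set inner := hinnerfin.toFinset
  set outer := houterfin.toFinset
  set X := hXfin.toFinset
  have hX : ∀ v ∈ X, v ∈ closedBall 0 (R + D) := fun v hv => by
    obtain ⟨t, ht, hvt⟩ := mem_iUnion₂.1 (hXfin.mem_toFinset.1 hv)
    exact hT.subset_closedBall ht hvt.1
  have hcard : ∀ t ∈ inner, n ≤ #{v ∈ X | v ∈ extremePoints ℝ t} := fun t ht => by
    have ht := hinnerfin.mem_toFinset.1 ht
    refine (hn t ht.1).trans ?_
    rw [← ncard_coe_finset]
    exact ncard_le_ncard (fun v hv => by simpa [X] using ⟨⟨t, ht, hv⟩, hv⟩) (Finset.finite_toSet _)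
  calc n * #inner = ∑ _t ∈ inner, n := by rw [Finset.sum_const, smul_eq_mul, mul_comm]
    _ ≤ ∑ t ∈ inner, #{v ∈ X | v ∈ extremePoints ℝ t} := Finset.sum_le_sum hcard
    _ ≤ ∑ t ∈ outer, #{v ∈ X | v ∈ extremePoints ℝ t} :=
      Finset.sum_le_sum_of_subset (Finite.toFinset_subset_toFinset.2 hsub)
    _ ≤ 6 * #outer := hT.sum_card_extremePoints_le hE hT.locallyFinite hfin
      (fun t ht => (houterfin.mem_toFinset.1 ht).1) fun t ht v hv hvt =>
        houterfin.mem_toFinset.2 ⟨ht, v, hvt.1, hX v hv⟩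

theorem exists_ncard_tilesMeeting_le (hT : IsNormalTiling A D T) : ∃ K : ℝ, ∀ k : ℕ,
    ((tilesMeeting T (closedBall 0 (k * D))).ncard : ℝ) ≤ K * (k + 1) ^ finrank ℝ E := by
  refine ⟨D ^ finrank ℝ E * volume.real (ball (0 : E) 1) / A, fun k => ?_⟩
  have hfin := hT.finite_tilesMeeting 0 (k * D)
  have hle := hT.card_mul_le (F := hfin.toFinset) (p := 0) (R := k * D) (by simp)
  have hnonneg : 0 ≤ k * D + D := by have := hT.nonneg; positivity
  rw [Measure.addHaar_real_closedBall _ _ hnonneg, ← ncard_eq_toFinset_card _ hfin,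
    ← le_div_iff₀ hT.pos] at hle
  refine hle.trans_eq ?_
  rw [show k * D + D = D * (k + 1) by ring, mul_pow]
  ring

end IsNormalTiling

theorem no_convexPolygon_with_seven_or_more_vertices_tiles_general [BorelSpace E]
    [(volume : Measure E).IsAddHaarMeasure] (hE : finrank ℝ E = 2) (hT : IsNormalTiling A D T)
    (hfin : ∀ t ∈ T, (extremePoints ℝ t).Finite) : ∃ t ∈ T, (extremePoints ℝ t).ncard < 7 := by
  have : FiniteDimensional ℝ E := Module.finite_of_finrank_eq_succ hE
  by_contra! hseven
  let N (k : ℕ) : ℕ := (tilesMeeting T (closedBall 0 (k * D))).ncard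
  have hpos : 0 < N 0 := by
    obtain ⟨t, ht, h0⟩ := hT.exists_mem 0
    exact (ncard_pos (hT.finite_tilesMeeting 0 _)).2 ⟨t, ht, 0, h0, by simp⟩
  have hstep (k : ℕ) : 7 * N k ≤ 6 * N (k + 1) := by
    have hradius : (k + 1 : ℕ) * D = k * D + D := by push_cast; ring
    simpa only [N, hradius] using hT.mul_ncard_tilesMeeting_le hE hfin hseven (k * D)
  have hgrowth (k : ℕ) : 7 / 6 * (N k : ℝ) ≤ N (k + 1) := by
    have : (7 * N k : ℝ) ≤ 6 * N (k + 1) := mod_cast hstep k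
    linarith
  obtain ⟨K, hK⟩ := hT.exists_ncard_tilesMeeting_le
  obtain ⟨k, hk⟩ := exists_mul_pow_lt_of_mul_le_succ (a := fun k => (N k : ℝ)) (by norm_num)
    (Nat.cast_pos.2 hpos) hgrowth K (finrank ℝ E)
  exact (hK k).not_gt hk

end NormalTiling

/-! ### Congruent tiles -/

theorem extremePoints_image_of_injective {E F : Type*} [AddCommGroup E] [Module ℝ E]
    [AddCommGroup F] [Module ℝ F] {f : E →ᵃ[ℝ] F} (hf : Function.Injective f) (s : Set E) :
    extremePoints ℝ (f '' s) = f '' extremePoints ℝ s := by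
  have himage : ∀ x ∈ s, f x ∈ extremePoints ℝ (f '' s) ↔ x ∈ extremePoints ℝ s := fun x _ => by
    simp only [mem_extremePoints_iff_left, forall_mem_image, hf.mem_set_image,
      ← image_openSegment, hf.eq_iff]
  ext y
  constructor
  · intro hy
    obtain ⟨x, hx, rfl⟩ := extremePoints_subset hy
    exact mem_image_of_mem f ((himage x hx).1 hy)
  · rintro ⟨x, hx, rfl⟩
    exact (himage x hx.1).2 hx

theorem extremePoints_isometryEquiv_image {E : Type*} [NormedAddCommGroup E] [NormedSpace ℝ E]
    (f : E ≃ᵢ E) (s : Set E) : extremePoints ℝ (f '' s) = f '' extremePoints ℝ s := by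
  simpa using extremePoints_image_of_injective
    (f := f.toRealAffineIsometryEquiv.toAffineEquiv.toAffineMap)
    f.toRealAffineIsometryEquiv.injective s

theorem convex_isometryEquiv_image {E : Type*} [NormedAddCommGroup E] [NormedSpace ℝ E]
    (f : E ≃ᵢ E) {s : Set E} (hs : Convex ℝ s) : Convex ℝ (f '' s) := by
  simpa using hs.affine_image f.toRealAffineIsometryEquiv.toAffineEquiv.toAffineMap

theorem volume_real_isometryEquiv_image {V : Type*} [NormedAddCommGroup V] [InnerProductSpace ℝ V]
    [FiniteDimensional ℝ V] [MeasurableSpace V] [BorelSpace V] (f : V ≃ᵢ V) (s : Set V) :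
    volume.real (f '' s) = volume.real s := by
  rw [measureReal_def, measureReal_def, ← InnerProductSpace.euclideanHausdorffMeasure_eq_volume,
    f.isometry.euclideanHausdorffMeasure_image]

theorem IsMonohedralTiling.isNormalTiling {P : Set Plane} {T : Set (Set Plane)}
    (hT : IsMonohedralTiling P T) (hcomp : IsCompact P) (hconv : Convex ℝ P)
    (hint : (interior P).Nonempty) : IsNormalTiling (volume.real P) (diam P) T where
  isCompact t ht := by
    obtain ⟨f, rfl⟩ := hT.1 t ht
    exact hcomp.image f.continuous
  convex t ht := by
    obtain ⟨f, rfl⟩ := hT.1 t ht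
    exact convex_isometryEquiv_image f hconv
  interior_nonempty t ht := by
    obtain ⟨f, rfl⟩ := hT.1 t ht
    exact f.toHomeomorph.image_interior P ▸ hint.image f
  sUnion_eq_univ := hT.2.1
  pairwise_disjoint_interior := hT.2.2
  pos := ENNReal.toReal_pos (Measure.measure_pos_of_nonempty_interior volume hint).ne'
    hcomp.measure_ne_top
  le_volume t ht := by
    obtain ⟨f, rfl⟩ := hT.1 t ht
    exact (volume_real_isometryEquiv_image f P).ge
  diam_le t ht := by
    obtain ⟨f, rfl⟩ := hT.1 t ht
    exact (f.diam_image P).le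

theorem IsMonohedralTiling.exists_extremePoints_eq_image {P t : Set Plane} {T : Set (Set Plane)}
    (hT : IsMonohedralTiling P T) (ht : t ∈ T) :
    ∃ f : Plane ≃ᵢ Plane, extremePoints ℝ t = f '' extremePoints ℝ P := by
  obtain ⟨f, rfl⟩ := hT.1 t ht
  exact ⟨f, extremePoints_isometryEquiv_image f P⟩

/-- No convex polygon with seven or more vertices admits a monohedral tiling of
the plane. -/
theorem no_convexPolygon_with_seven_or_more_vertices_tiles
    (P : Set Plane) (hcomp : IsCompact P) (hconv : Convex ℝ P)
    (hint : (interior P).Nonempty) (hfin : (Set.extremePoints ℝ P).Finite)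
    (hn : 7 ≤ (Set.extremePoints ℝ P).ncard) :
    ¬ ∃ T : Set (Set Plane), IsMonohedralTiling P T := by
  rintro ⟨T, hT⟩
  obtain ⟨t, ht, hlt⟩ := no_convexPolygon_with_seven_or_more_vertices_tiles_general
    finrank_euclideanSpace_fin (hT.isNormalTiling hcomp hconv hint) fun t ht => by
      obtain ⟨f, hf⟩ := hT.exists_extremePoints_eq_image ht
      exact hf ▸ hfin.image f
  obtain ⟨f, hf⟩ := hT.exists_extremePoints_eq_image ht
  rw [hf, ncard_image_of_injective _ f.injective] at hlt
  exact hn.not_gt hlt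
end
end

section
/- Every convex pentagon ABCDE (vertices in cyclic order, with interior angles A, B, C, D, E) satisfying the type 1 condition A + B + C = 360° admits a periodic monohedral tiling of the plane. -/
/-!
The sides `EA` and `CD` of a type 1 pentagon are parallel and point to the same side of `ABC`: the
oriented angle from `EA` to `CD` is, modulo `2 * π`, the sum of the angles at `A`, `B` and `C`. An
affine map therefore turns the pentagon into the region over `[0, 1]` between the side `DE` and the
broken line `ABC`, and conjugation by it preserves translations and half-turns. Gluing the region
to its image under the half-turn about the midpoint of `DE` gives a centrally symmetric hexagon,
whose translates by `(m, 0)`, `m : ℤ`, form a row. The periodic continuation of `ABC` is symmetric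
under the half-turn about the midpoint of `AB`, so the lower boundary of the row is a translate of
its upper boundary, and the translates of the row tile the plane.
-/

open EuclideanGeometry

noncomputable section

/-- A convex pentagon with vertices `A,B,C,D,E` listed in cyclic order along the
boundary, so that consecutive listed vertices span the edges. -/
def IsConvexPentagonWithVertices (A B C D E : Plane) (P : Set Plane) : Prop :=
  P = convexHull ℝ {A, B, C, D, E} ∧
  Set.extremePoints ℝ P = {A, B, C, D, E} ∧
  ({A, B, C, D, E} : Set Plane).ncard = 5 ∧
  IsEdgeOf (segment ℝ A B) P ∧ IsEdgeOf (segment ℝ B C) P ∧ IsEdgeOf (segment ℝ C D) P ∧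
  IsEdgeOf (segment ℝ D E) P ∧ IsEdgeOf (segment ℝ E A) P

section Convexity

lemma linearIndependent_vsub_of_notMem_line {𝕜 V Q : Type*} [Field 𝕜] [AddCommGroup V] [Module 𝕜 V]
    [AddTorsor V Q] {A B X : Q} (hAB : A ≠ B) (hX : X ∉ line[𝕜, A, B]) :
    LinearIndependent 𝕜 ![B -ᵥ A, X -ᵥ A] := by
  refine (LinearIndependent.pair_iff' (vsub_ne_zero.mpr hAB.symm)).mpr fun r hr ↦ hX ?_
  rw [← vsub_vadd X A, ← hr]
  exact AffineMap.lineMap_mem_affineSpan_pair r A B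

lemma exists_linearEquiv_prod {𝕜 V : Type*} [Field 𝕜] [AddCommGroup V] [Module 𝕜 V]
    (hV : Module.finrank 𝕜 V = 2) {u v : V} (huv : LinearIndependent 𝕜 ![u, v]) :
    ∃ φ : (𝕜 × 𝕜) ≃ₗ[𝕜] V, ∀ x y, φ (x, y) = x • u + y • v := by
  let basis := basisOfLinearIndependentOfCardEqFinrank huv (by simp [hV])
  exact ⟨(LinearEquiv.finTwoArrow 𝕜 𝕜).symm.trans basis.equivFun.symm, fun x y ↦ by
    simp [basis, Module.Basis.equivFun_symm_apply]⟩

section OrderedField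

variable {𝕜 V Q : Type*} [Field 𝕜] [LinearOrder 𝕜] [IsStrictOrderedRing 𝕜]
  [AddCommGroup V] [Module 𝕜 V] [AddTorsor V Q]

lemma sSameSide_or_sOppSide_of_finrank_eq_two (hV : Module.finrank 𝕜 V = 2) {A B X Y : Q}
    (hAB : A ≠ B) (hX : X ∉ line[𝕜, A, B]) (hY : Y ∉ line[𝕜, A, B]) :
    line[𝕜, A, B].SSameSide X Y ∨ line[𝕜, A, B].SOppSide X Y := by
  obtain ⟨φ, hφ⟩ :=
    exists_linearEquiv_prod hV (linearIndependent_vsub_of_notMem_line hAB hX)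
  obtain ⟨⟨r, t⟩, hrt⟩ := φ.surjective (Y -ᵥ A)
  have hA : A ∈ line[𝕜, A, B] := left_mem_affineSpan_pair 𝕜 A B
  have hfoot : r • (B -ᵥ A) +ᵥ A ∈ line[𝕜, A, B] := AffineMap.lineMap_mem_affineSpan_pair r A B
  have hYeq : Y = t • (X -ᵥ A) +ᵥ (r • (B -ᵥ A) +ᵥ A) := by
    rw [vadd_vadd, add_comm, ← hφ, hrt, vsub_vadd]
  rcases lt_trichotomy t 0 with ht | rfl | ht
  · exact .inr (hYeq ▸ AffineSubspace.sOppSide_smul_vsub_vadd_right hX hA hfoot ht)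
  · exact absurd (by simpa [hYeq] using hfoot) hY
  · exact .inl (hYeq ▸ AffineSubspace.sSameSide_smul_vsub_vadd_right hX hA hfoot ht)

lemma pos_of_sSameSide_of_vsub_eq_smul_vsub {s : AffineSubspace 𝕜 Q} {X Y p q : Q} {t : 𝕜}
    (hp : p ∈ s) (hq : q ∈ s) (h : s.SSameSide X Y) (hY : Y -ᵥ q = t • (X -ᵥ p)) : 0 < t := by
  obtain rfl : Y = t • (X -ᵥ p) +ᵥ q := by rw [← hY, vsub_vadd]
  by_contra! ht
  rcases ht.lt_or_eq with ht | rfl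
  · exact h.not_sOppSide (AffineSubspace.sOppSide_smul_vsub_vadd_right h.left_notMem hp hq ht)
  · exact h.right_notMem (by simpa using hq)

variable {P : Set V} {A B X Y : V}

lemma mem_segment_of_isExtreme_of_mem_line (hAB : IsExtreme 𝕜 P (segment 𝕜 A B)) (hne : A ≠ B)
    {z : V} (hzP : z ∈ P) (hz : z ∈ line[𝕜, A, B]) : z ∈ segment 𝕜 A B := by
  have hA := left_mem_segment 𝕜 A B
  have hB := right_mem_segment 𝕜 A B
  have hcol : Collinear 𝕜 {z, A, B} := collinear_insert_of_mem_affineSpan_pair hz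
  rcases hcol.wbtw_or_wbtw_or_wbtw with h | h | h
  · by_cases hzA : z = A
    · exact hzA ▸ hA
    exact hAB.left_mem_of_mem_openSegment hzP (hAB.subset hB) hA
      (mem_openSegment_of_ne_left_right hzA hne.symm h.mem_segment)
  · by_cases hzB : z = B
    · exact hzB ▸ hB
    exact hAB.right_mem_of_mem_openSegment (hAB.subset hA) hzP hB
      (mem_openSegment_of_ne_left_right hne hzB h.mem_segment)
  · exact segment_symm 𝕜 A B ▸ h.mem_segment

lemma sSameSide_of_isExtreme_segment (hV : Module.finrank 𝕜 V = 2) (hP : Convex 𝕜 P)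
    (hAB : IsExtreme 𝕜 P (segment 𝕜 A B)) (hne : A ≠ B)
    (hX : X ∈ P \ segment 𝕜 A B) (hY : Y ∈ P \ segment 𝕜 A B) :
    line[𝕜, A, B].SSameSide X Y := by
  have hdisj : ∀ z ∈ P \ segment 𝕜 A B, z ∉ line[𝕜, A, B] := fun z hz hzl ↦
    hz.2 (mem_segment_of_isExtreme_of_mem_line hAB hne hz.1 hzl)
  refine (sSameSide_or_sOppSide_of_finrank_eq_two hV hne (hdisj X hX) (hdisj Y hY)).resolve_right
    fun hopp ↦ ?_
  obtain ⟨z, hz, hbtw⟩ := hopp.exists_sbtw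
  exact hdisj z ((hAB.convex_sdiff hP).segment_subset hX hY hbtw.wbtw.mem_segment) hz

end OrderedField

end Convexity

section ParallelSides

variable {V Q : Type*} [NormedAddCommGroup V] [InnerProductSpace ℝ V] [MetricSpace Q]
  [NormedAddTorsor V Q] {A B C D E : Q}

lemma sign_oangle_eq_of_sSameSide [Fact (Module.finrank ℝ V = 2)] [Module.Oriented ℝ V (Fin 2)]
    (h : line[ℝ, A, B].SSameSide E C) : (∡ A B C).sign = (∡ E A B).sign := by
  have hsign := h.oangle_sign_eq (left_mem_affineSpan_pair ℝ A B) (right_mem_affineSpan_pair ℝ A B)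
  rw [← oangle_swap₂₃_sign A B C, ← oangle_swap₁₂_sign E A B] at hsign
  exact neg_injective hsign

lemma sameRay_of_oangle_sum_eq_zero [Fact (Module.finrank ℝ V = 2)] [Module.Oriented ℝ V (Fin 2)]
    (hEA : E ≠ A) (hAB : A ≠ B) (hBC : B ≠ C) (hCD : C ≠ D)
    (h : ∡ E A B + ∡ A B C + ∡ B C D = 0) : SameRay ℝ (E -ᵥ A) (D -ᵥ C) := by
  let o : Orientation ℝ V (Fin 2) := Module.Oriented.positiveOrientation
  have hEA' : E -ᵥ A ≠ 0 := vsub_ne_zero.mpr hEA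
  have hBA' : B -ᵥ A ≠ 0 := vsub_ne_zero.mpr hAB.symm
  have hCB' : C -ᵥ B ≠ 0 := vsub_ne_zero.mpr hBC.symm
  have hDC' : D -ᵥ C ≠ 0 := vsub_ne_zero.mpr hCD.symm
  rw [← o.oangle_eq_zero_iff_sameRay]
  calc o.oangle (E -ᵥ A) (D -ᵥ C)
      = o.oangle (E -ᵥ A) (B -ᵥ A) + o.oangle (B -ᵥ A) (C -ᵥ B) +
          o.oangle (C -ᵥ B) (D -ᵥ C) := by
        rw [o.oangle_add hEA' hBA' hCB', o.oangle_add hEA' hCB' hDC']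
    _ = o.oangle (E -ᵥ A) (B -ᵥ A) + (o.oangle (B -ᵥ A) (C -ᵥ B) + Real.pi) +
          (o.oangle (C -ᵥ B) (D -ᵥ C) + Real.pi) := by
        rw [← add_zero (o.oangle _ _ + _ + _), ← Real.Angle.coe_pi_add_coe_pi]
        abel
    _ = ∡ E A B + ∡ A B C + ∡ B C D := by
        rw [← o.oangle_neg_left hBA' hCB', ← o.oangle_neg_left hCB' hDC', neg_vsub_eq_vsub_rev,
          neg_vsub_eq_vsub_rev]
        rfl
    _ = 0 := h

lemma sameRay_of_angle_sum_eq_two_pi [Fact (Module.finrank ℝ V = 2)]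
    (hEC : line[ℝ, A, B].SSameSide E C) (hAD : line[ℝ, B, C].SSameSide A D)
    (hsum : ∠ E A B + ∠ A B C + ∠ B C D = 2 * Real.pi) : SameRay ℝ (E -ᵥ A) (D -ᵥ C) := by
  have : FiniteDimensional ℝ V := .of_fact_finrank_eq_two
  let : Module.Oriented ℝ V (Fin 2) := ⟨(Module.finBasisOfFinrankEq ℝ V Fact.out).orientation⟩
  have hEA : E ≠ A := by rintro rfl; exact hEC.left_notMem (left_mem_affineSpan_pair ℝ E B)
  have hAB : A ≠ B := by rintro rfl; exact hAD.left_notMem (left_mem_affineSpan_pair ℝ A C)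
  have hBC : B ≠ C := by rintro rfl; exact hEC.right_notMem (right_mem_affineSpan_pair ℝ A B)
  have hCD : C ≠ D := by rintro rfl; exact hAD.right_notMem (right_mem_affineSpan_pair ℝ B C)
  have hB : (∡ A B C).sign = (∡ E A B).sign := sign_oangle_eq_of_sSameSide hEC
  have hC : (∡ B C D).sign = (∡ E A B).sign := (sign_oangle_eq_of_sSameSide hAD).trans hB
  have hA : (∡ E A B).sign ≠ 0 := by
    rw [ne_eq, oangle_sign_eq_zero_iff_collinear, ← affineIndependent_iff_not_collinear_set]
    exact affineIndependent_of_ne_of_notMem_of_mem_of_mem hAB hEC.left_notMem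
      (left_mem_affineSpan_pair ℝ A B) (right_mem_affineSpan_pair ℝ A B)
  have hsum' : (∠ E A B : Real.Angle) + (∠ A B C : Real.Angle) + (∠ B C D : Real.Angle) = 0 := by
    rw [← Real.Angle.coe_add, ← Real.Angle.coe_add, hsum, Real.Angle.coe_two_pi]
  refine sameRay_of_oangle_sum_eq_zero hEA hAB hBC hCD ?_
  rcases SignType.trichotomy (∡ E A B).sign with hs | hs | hs
  · rw [oangle_eq_neg_angle_of_sign_eq_neg_one hs,
      oangle_eq_neg_angle_of_sign_eq_neg_one (hB.trans hs),
      oangle_eq_neg_angle_of_sign_eq_neg_one (hC.trans hs), ← neg_add, ← neg_add, hsum', neg_zero]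
  · exact absurd hs hA
  · rw [oangle_eq_angle_of_sign_eq_one hs, oangle_eq_angle_of_sign_eq_one (hB.trans hs),
      oangle_eq_angle_of_sign_eq_one (hC.trans hs), hsum']

end ParallelSides

section NormalForm

open scoped Pointwise

/-- The pentagon with consecutive vertices `A = (0, 0)`, `B = (b, h)`, `C = (1, 0)`, `D = (1, -d)`
and `E = (0, -1)`, to which an affine map reduces every convex pentagon with parallel sides `EA`
and `CD`. -/
def normalPentagon (b h d : ℝ) : Set (ℝ × ℝ) :=
  convexHull ℝ {(0, 0), (b, h), (1, 0), (1, -d), (0, -1)}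

variable {V : Type*} [AddCommGroup V] [Module ℝ V] {A B C D E : V}

lemma apex_mem_of_sSameSide {b h d : ℝ} (hd : d ≠ 0) (hB : b • (C - A) + h • (A - E) = B - A)
    (hCD : d • (E - A) = D - C) (hEC : line[ℝ, A, B].SSameSide E C)
    (hAB : line[ℝ, C, D].SSameSide A B) (hCB : line[ℝ, E, A].SSameSide C B) :
    b ∈ Set.Ioo 0 1 ∧ 0 < h := by
  have hb0 : 0 < b := by
    have hfoot : h • (A - E) +ᵥ A ∈ line[ℝ, E, A] :=
      vadd_right_mem_affineSpan_pair.mpr ⟨-h, by rw [vsub_eq_sub]; module⟩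
    refine pos_of_sSameSide_of_vsub_eq_smul_vsub (right_mem_affineSpan_pair ℝ E A) hfoot hCB ?_
    simp only [vsub_eq_sub, vadd_eq_add]
    linear_combination (norm := module) -hB
  have hb1 : 0 < 1 - b := by
    have hfoot : h • (A - E) +ᵥ C ∈ line[ℝ, C, D] :=
      vadd_left_mem_affineSpan_pair.mpr ⟨-(h / d), by
        rw [vsub_eq_sub, ← hCD, smul_smul, neg_mul, div_mul_cancel₀ h hd]; module⟩
    refine pos_of_sSameSide_of_vsub_eq_smul_vsub (left_mem_affineSpan_pair ℝ C D) hfoot hAB ?_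
    simp only [vsub_eq_sub, vadd_eq_add]
    linear_combination (norm := module) -hB
  have hh : 0 < h / b := by
    have hfoot : (1 / b) • (B - A) +ᵥ A ∈ line[ℝ, A, B] :=
      vadd_left_mem_affineSpan_pair.mpr ⟨1 / b, rfl⟩
    refine pos_of_sSameSide_of_vsub_eq_smul_vsub (left_mem_affineSpan_pair ℝ A B) hfoot hEC ?_
    simp only [vsub_eq_sub, vadd_eq_add]
    rw [← hB]
    match_scalars <;> field_simp <;> ring
  exact ⟨⟨hb0, sub_pos.mp hb1⟩, (div_pos_iff_of_pos_right hb0).mp hh⟩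

lemma exists_eq_vadd_image_normalPentagon (hV : Module.finrank ℝ V = 2) (hCD : C ≠ D)
    (hEC : line[ℝ, A, B].SSameSide E C) (hAB : line[ℝ, C, D].SSameSide A B)
    (hCB : line[ℝ, E, A].SSameSide C B) (hpar : SameRay ℝ (E - A) (D - C)) :
    ∃ (φ : (ℝ × ℝ) ≃ₗ[ℝ] V) (b h d : ℝ), b ∈ Set.Ioo 0 1 ∧ 0 < h ∧ 0 < d ∧
      convexHull ℝ {A, B, C, D, E} = A +ᵥ φ '' normalPentagon b h d := by
  have hEA : E ≠ A := by rintro rfl; exact hEC.left_notMem (left_mem_affineSpan_pair ℝ E B)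
  obtain ⟨d, hd, hdCD⟩ := hpar.exists_pos_left (sub_ne_zero.mpr hEA) (sub_ne_zero.mpr hCD.symm)
  have hli : LinearIndependent ℝ ![C - A, A - E] := by
    have hC : C ∉ line[ℝ, A, E] := by rw [Set.pair_comm]; exact hCB.left_notMem
    rw [← neg_sub E A, LinearIndependent.pair_neg_right_iff, LinearIndependent.pair_symm_iff]
    simpa only [vsub_eq_sub] using linearIndependent_vsub_of_notMem_line hEA.symm hC
  obtain ⟨φ, hφ⟩ := exists_linearEquiv_prod hV hli
  obtain ⟨⟨b, h⟩, hB⟩ := φ.surjective (B - A)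
  rw [hφ] at hB
  obtain ⟨hb, hh⟩ := apex_mem_of_sSameSide hd.ne' hB hdCD hEC hAB hCB
  have hA' : A + φ (0, 0) = A := by rw [hφ]; module
  have hB' : A + φ (b, h) = B := by rw [hφ, hB, add_sub_cancel]
  have hC' : A + φ (1, 0) = C := by rw [hφ]; module
  have hD' : A + φ (1, -d) = D := by rw [hφ]; linear_combination (norm := module) hdCD
  have hE' : A + φ (0, -1) = E := by rw [hφ]; module
  refine ⟨φ, b, h, d, hb, hh, hd, ?_⟩
  rw [normalPentagon, ← LinearEquiv.coe_coe, LinearMap.image_convexHull, ← convexHull_vadd]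
  simp only [Set.image_insert_eq, Set.image_singleton, LinearEquiv.coe_coe, Set.vadd_set_insert,
    Set.vadd_set_singleton, vadd_eq_add, hA', hB', hC', hD', hE']

end NormalForm

section ClosedRegion

/-- The part of the strip over `s` lying between the graphs of `f` and `g`, graphs included: the
closed counterpart of `regionBetween`. -/
def closedRegionBetween {α : Type*} (f g : α → ℝ) (s : Set α) : Set (α × ℝ) :=
  {p | p.1 ∈ s ∧ p.2 ∈ Set.Icc (f p.1) (g p.1)}

lemma interior_closedRegionBetween_subset {α : Type*} [TopologicalSpace α] {f g : α → ℝ}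
    {s : Set α} : interior (closedRegionBetween f g s) ⊆ regionBetween f g (interior s) := by
  rintro ⟨x, y⟩ hxy
  refine ⟨isOpenMap_fst.interior_preimage_subset_preimage_interior
    (interior_mono (fun p hp ↦ hp.1) hxy), ?_⟩
  have hslice : y ∈ interior (Prod.mk x ⁻¹' closedRegionBetween f g s) :=
    preimage_interior_subset_interior_preimage (by fun_prop) hxy
  rw [← interior_Icc]
  exact interior_mono (fun z hz ↦ hz.2) hslice

lemma convex_closedRegionBetween {α : Type*} [AddCommGroup α] [Module ℝ α]
    {f g : α → ℝ} {s : Set α} (hf : ConvexOn ℝ s f) (hg : ConcaveOn ℝ s g) :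
    Convex ℝ (closedRegionBetween f g s) := by
  convert hf.convex_epigraph.inter hg.convex_hypograph using 1
  ext p
  exact and_and_left

lemma closedRegionBetween_subset_of_convex {α : Type*} [AddCommGroup α] [Module ℝ α]
    {f g : α → ℝ} {s : Set α} {K : Set (α × ℝ)} (hK : Convex ℝ K)
    (hf : ∀ x ∈ s, (x, f x) ∈ K) (hg : ∀ x ∈ s, (x, g x) ∈ K) :
    closedRegionBetween f g s ⊆ K := by
  rintro ⟨x, y⟩ ⟨hx, hy⟩
  apply hK.segment_subset (hf x hx) (hg x hx)
  rw [← Prod.image_mk_segment_right, segment_eq_Icc (hy.1.trans hy.2)]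
  exact Set.mem_image_of_mem _ hy

end ClosedRegion

section Tent

/-- The height at abscissa `x` of the side `DE` of `normalPentagon b h d`. -/
def base (d x : ℝ) : ℝ := -(1 - x) - d * x

/-- The height at abscissa `x` of the broken line `ABC` in `normalPentagon b h d`. -/
def tent (b h x : ℝ) : ℝ := min (h / b * x) (h / (1 - b) * (1 - x))

variable {b h d x : ℝ}

lemma tent_of_le (hb : b ∈ Set.Ioo 0 1) (hh : 0 < h) (hx : x ≤ b) : tent b h x = h / b * x := by
  refine min_eq_left ?_
  have hb1 : 0 < 1 - b := sub_pos.mpr hb.2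
  calc h / b * x ≤ h / b * b := by have := hb.1; gcongr
    _ = h / (1 - b) * (1 - b) := by rw [div_mul_cancel₀ h hb.1.ne', div_mul_cancel₀ h hb1.ne']
    _ ≤ h / (1 - b) * (1 - x) := by gcongr

lemma tent_of_ge (hb : b ∈ Set.Ioo 0 1) (hh : 0 < h) (hx : b ≤ x) :
    tent b h x = h / (1 - b) * (1 - x) := by
  refine min_eq_right ?_
  have hb1 : 0 < 1 - b := sub_pos.mpr hb.2
  calc h / (1 - b) * (1 - x) ≤ h / (1 - b) * (1 - b) := by gcongr
    _ = h / b * b := by rw [div_mul_cancel₀ h hb.1.ne', div_mul_cancel₀ h hb1.ne']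
    _ ≤ h / b * x := by have := hb.1; gcongr

lemma tent_nonneg (hb : b ∈ Set.Ioo 0 1) (hh : 0 < h) (hx : x ∈ Set.Icc 0 1) : 0 ≤ tent b h x :=
  le_min (mul_nonneg (div_pos hh hb.1).le hx.1)
    (mul_nonneg (div_pos hh (sub_pos.mpr hb.2)).le (sub_nonneg.mpr hx.2))

lemma base_nonpos (hd : 0 < d) (hx : x ∈ Set.Icc 0 1) : base d x ≤ 0 := by
  have := mul_nonneg hd.le hx.1
  rw [base]
  linarith [hx.2]

lemma base_one_sub (d x : ℝ) : base d (1 - x) = -(1 + d) - base d x := by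
  rw [base, base]
  ring

lemma concaveOn_tent (b h : ℝ) : ConcaveOn ℝ (Set.Icc 0 1) (tent b h) := by
  have hright : ConcaveOn ℝ (Set.Icc 0 1) fun x ↦ h / (1 - b) * (1 - x) :=
    (((LinearMap.mulLeft ℝ (-(h / (1 - b)))).concaveOn (convex_Icc 0 1)).add_const
      (h / (1 - b))).congr fun x _ ↦ by simp only [LinearMap.mulLeft_apply, Pi.add_apply]; ring
  exact ((LinearMap.mulLeft ℝ (h / b)).concaveOn (convex_Icc 0 1)).inf hright

lemma convexOn_base (d : ℝ) : ConvexOn ℝ (Set.Icc 0 1) (base d) :=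
  (((LinearMap.mulLeft ℝ (1 - d)).convexOn (convex_Icc 0 1)).add_const (-1)).congr fun x _ ↦ by
    simp only [LinearMap.mulLeft_apply, Pi.add_apply, base]; ring

lemma mk_base_mem_segment (hx : x ∈ Set.Icc 0 1) :
    (x, base d x) ∈ segment ℝ ((0, -1) : ℝ × ℝ) (1, -d) := by
  refine ⟨1 - x, x, sub_nonneg.mpr hx.2, hx.1, sub_add_cancel 1 x, ?_⟩
  simp only [Prod.smul_mk, Prod.mk_add_mk, smul_eq_mul, Prod.mk.injEq, base]
  constructor <;> ring

lemma mk_tent_mem_segment_left (hb : b ∈ Set.Ioo 0 1) (hh : 0 < h) (hx0 : 0 ≤ x) (hxb : x ≤ b) :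
    (x, tent b h x) ∈ segment ℝ ((0, 0) : ℝ × ℝ) (b, h) := by
  refine ⟨1 - x / b, x / b, sub_nonneg.mpr (div_le_one_of_le₀ hxb hb.1.le),
    div_nonneg hx0 hb.1.le, sub_add_cancel _ _, ?_⟩
  have hb0 : b ≠ 0 := hb.1.ne'
  simp only [Prod.smul_mk, Prod.mk_add_mk, smul_eq_mul, Prod.mk.injEq, tent_of_le hb hh hxb]
  constructor <;> field_simp <;> ring

lemma mk_tent_mem_segment_right (hb : b ∈ Set.Ioo 0 1) (hh : 0 < h) (hxb : b ≤ x) (hx1 : x ≤ 1) :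
    (x, tent b h x) ∈ segment ℝ ((b, h) : ℝ × ℝ) (1, 0) := by
  have hb1 : 0 < 1 - b := sub_pos.mpr hb.2
  refine ⟨(1 - x) / (1 - b), (x - b) / (1 - b), div_nonneg (sub_nonneg.mpr hx1) hb1.le,
    div_nonneg (sub_nonneg.mpr hxb) hb1.le, ?_, ?_⟩
  · field_simp
    ring
  · simp only [Prod.smul_mk, Prod.mk_add_mk, smul_eq_mul, Prod.mk.injEq, tent_of_ge hb hh hxb]
    constructor <;> field_simp <;> ring

lemma normalPentagon_eq_closedRegionBetween (hb : b ∈ Set.Ioo 0 1) (hh : 0 < h) (hd : 0 < d) :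
    normalPentagon b h d = closedRegionBetween (base d) (tent b h) (Set.Icc 0 1) := by
  refine (convexHull_min ?_ (convex_closedRegionBetween (convexOn_base d)
    (concaveOn_tent b h))).antisymm (closedRegionBetween_subset_of_convex (convex_convexHull ℝ _)
      (fun x hx ↦ segment_subset_convexHull (by simp) (by simp) (mk_base_mem_segment hx))
      fun x hx ↦ ?_)
  · have htent0 : tent b h 0 = 0 := by simp [tent_of_le hb hh hb.1.le]
    have htentb : tent b h b = h := by
      rw [tent_of_le hb hh le_rfl, div_mul_cancel₀ h hb.1.ne']
    have htent1 : tent b h 1 = 0 := by simp [tent_of_ge hb hh hb.2.le]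
    have hbase0 : base d 0 = -1 := by simp [base]
    have hbase1 : base d 1 = -d := by simp [base]
    have hbaseb : base d b ≤ 0 := base_nonpos hd ⟨hb.1.le, hb.2.le⟩
    simp only [Set.insert_subset_iff, Set.singleton_subset_iff, closedRegionBetween,
      Set.mem_ofPred_eq, Set.mem_Icc, htent0, htentb, htent1, hbase0, hbase1]
    refine ⟨?_, ?_, ?_, ?_, ?_⟩ <;> refine ⟨⟨?_, ?_⟩, ?_, ?_⟩ <;> linarith [hb.1, hb.2]
  · rcases le_total x b with hxb | hxb
    · exact segment_subset_convexHull (by simp) (by simp)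
        (mk_tent_mem_segment_left hb hh hx.1 hxb)
    · exact segment_subset_convexHull (by simp) (by simp)
        (mk_tent_mem_segment_right hb hh hxb hx.2)

/-- The height at abscissa `x` of the row of translates by `(m, 0)`, `m : ℤ`, of the broken line
`ABC`. -/
def wave (b h x : ℝ) : ℝ := tent b h (Int.fract x)

lemma periodic_wave (b h : ℝ) : Function.Periodic (wave b h) 1 := fun x ↦ by
  rw [wave, wave, Int.fract_add_one]

lemma wave_nonneg (hb : b ∈ Set.Ioo 0 1) (hh : 0 < h) (x : ℝ) : 0 ≤ wave b h x :=
  tent_nonneg hb hh ⟨Int.fract_nonneg x, (Int.fract_lt_one x).le⟩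

lemma wave_eq_tent (hb : b ∈ Set.Ioo 0 1) (hh : 0 < h) (hx : x ∈ Set.Icc 0 1) :
    wave b h x = tent b h x := by
  rcases hx.2.lt_or_eq with hx1 | rfl
  · rw [wave, Int.fract_eq_self.mpr ⟨hx.1, hx1⟩]
  · rw [wave, Int.fract_one, tent_of_le hb hh hb.1.le, tent_of_ge hb hh hb.2.le, sub_self,
      mul_zero, mul_zero]

-- The graph of `wave` is invariant under the half-turn about the midpoint of `AB`.
lemma wave_sub_left (hb : b ∈ Set.Ioo 0 1) (hh : 0 < h) (x : ℝ) :
    wave b h (b - x) = h - wave b h x := by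
  have hb0 : b ≠ 0 := hb.1.ne'
  have hb1 : 1 - b ≠ 0 := (sub_pos.mpr hb.2).ne'
  have hx0 := Int.fract_nonneg x
  have hx1 := Int.fract_lt_one x
  have hfloor := Int.self_sub_fract x
  rcases le_or_gt (Int.fract x) b with hxb | hxb
  · have hfract : Int.fract (b - x) = b - Int.fract x :=
      Int.fract_eq_iff.mpr ⟨by linarith, by linarith [hb.2], -⌊x⌋, by push_cast; linarith⟩
    rw [wave, wave, hfract, tent_of_le hb hh hxb, tent_of_le hb hh (by linarith)]
    field_simp
  · have hfract : Int.fract (b - x) = b - Int.fract x + 1 :=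
      Int.fract_eq_iff.mpr ⟨by linarith [hb.1], by linarith, -⌊x⌋ - 1, by push_cast; linarith⟩
    rw [wave, wave, hfract, tent_of_ge hb hh hxb.le, tent_of_ge hb hh (by linarith)]
    field_simp
    ring

lemma normalPentagon_eq_closedRegionBetween_wave (hb : b ∈ Set.Ioo 0 1) (hh : 0 < h)
    (hd : 0 < d) :
    normalPentagon b h d = closedRegionBetween (base d) (wave b h) (Set.Icc 0 1) := by
  rw [normalPentagon_eq_closedRegionBetween hb hh hd]
  ext p
  exact and_congr_right fun hp ↦ by rw [wave_eq_tent hb hh hp]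

end Tent

section HalfTurnTiles

open scoped Pointwise

/-- A tiling of a topological space: the tiles cover, and distinct tiles have disjoint
interiors. -/
def IsTiling {X : Type*} [TopologicalSpace X] (T : Set (Set X)) : Prop :=
  ⋃₀ T = Set.univ ∧ T.Pairwise fun s t ↦ Disjoint (interior s) (interior t)

lemma IsTiling.image_homeomorph {X Y : Type*} [TopologicalSpace X] [TopologicalSpace Y]
    {T : Set (Set X)} (hT : IsTiling T) (φ : X ≃ₜ Y) : IsTiling (Set.image φ '' T) := by
  refine ⟨by rw [← Set.image_sUnion, hT.1, Set.image_univ, φ.range_coe], ?_⟩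
  rintro _ ⟨s, hs, rfl⟩ _ ⟨t, ht, rfl⟩ hne
  rw [← φ.image_interior, ← φ.image_interior, Set.disjoint_image_iff φ.injective]
  exact hT.2 hs ht fun h ↦ hne (h ▸ rfl)

variable {E : Type*} [AddCommGroup E]

lemma isTiling_image2_vadd [TopologicalSpace E] [ContinuousAdd E] {L Ω : Set E}
    {cells : Set (Set E)} (hcover : ∀ p, ∃ v ∈ L, ∃ K ∈ cells, p ∈ v +ᵥ K)
    (hL : L.PairwiseDisjoint (· +ᵥ Ω)) (hΩ : ∀ K ∈ cells, interior K ⊆ Ω)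
    (hcells : cells.Pairwise fun s t ↦ Disjoint (interior s) (interior t)) :
    IsTiling (Set.image2 (· +ᵥ ·) L cells) := by
  refine ⟨Set.eq_univ_of_forall fun p ↦ ?_, ?_⟩
  · obtain ⟨v, hv, K, hK, hp⟩ := hcover p
    exact ⟨v +ᵥ K, Set.mem_image2_of_mem hv hK, hp⟩
  · rintro _ ⟨v, hv, K, hK, rfl⟩ _ ⟨v', hv', K', hK', rfl⟩ hne
    simp only [interior_vadd]
    rcases eq_or_ne v v' with rfl | hvv'
    · exact Set.disjoint_vadd_set.mpr (hcells hK hK' fun h ↦ hne (h ▸ rfl))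
    · exact (hL hv hv' hvv').mono (Set.vadd_set_mono (hΩ K hK)) (Set.vadd_set_mono (hΩ K' hK'))

/-- The translates, by the vectors of `L`, of the cell `K` and of its image under the half-turn
`p ↦ a - p`. -/
def halfTurnTiles (L : AddSubgroup E) (a : E) (K : Set E) : Set (Set E) :=
  Set.image2 (· +ᵥ ·) (L : Set E) {K, a +ᵥ -K}

lemma vadd_mem_halfTurnTiles {L : AddSubgroup E} {a v : E} {K t : Set E} (hv : v ∈ L)
    (ht : t ∈ halfTurnTiles L a K) : v +ᵥ t ∈ halfTurnTiles L a K := by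
  obtain ⟨u, hu, K', hK', rfl⟩ := ht
  rw [vadd_vadd]
  exact Set.mem_image2_of_mem (L.add_mem hv hu) hK'

lemma image_halfTurnTiles {F : Type*} [AddCommGroup F] (φ : E →+ F) (L : AddSubgroup E) (a : E)
    (K : Set E) :
    Set.image φ '' halfTurnTiles L a K = halfTurnTiles (L.map φ) (φ a) (φ '' K) := by
  have hvadd : ∀ v (S : Set E), φ '' (v +ᵥ S) = φ v +ᵥ φ '' S := fun v S ↦ by
    simp only [← Set.image_vadd, Set.image_image, vadd_eq_add, map_add]
  rw [halfTurnTiles, halfTurnTiles, AddSubgroup.coe_map, Set.image_image2_distrib hvadd,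
    Set.image_pair, hvadd, Set.image_neg]

end HalfTurnTiles

section PlaneTilings

open scoped Pointwise

lemma isMonohedralTiling_halfTurnTiles {L : AddSubgroup Plane} {a : Plane} {K : Set Plane}
    (hT : IsTiling (halfTurnTiles L a K)) : IsMonohedralTiling K (halfTurnTiles L a K) := by
  refine ⟨?_, hT⟩
  rintro _ ⟨v, -, K', rfl | rfl, rfl⟩
  · exact ⟨IsometryEquiv.constVAdd v, rfl⟩
  · refine ⟨(IsometryEquiv.neg Plane).trans (IsometryEquiv.constVAdd (v + a)), ?_⟩
    beta_reduce
    rw [vadd_vadd, ← Set.image_neg_eq_neg, ← Set.image_vadd, Set.image_image]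
    rfl

lemma IsMonohedralTiling.vadd_prototile {P : Set Plane} {T : Set (Set Plane)}
    (hT : IsMonohedralTiling P T) (A : Plane) : IsMonohedralTiling (A +ᵥ P) T := by
  refine ⟨fun t ht ↦ ?_, hT.2⟩
  obtain ⟨f, rfl⟩ := hT.1 t ht
  refine ⟨(IsometryEquiv.constVAdd A).symm.trans f, ?_⟩
  calc f '' P = f '' ((IsometryEquiv.constVAdd A).symm '' (IsometryEquiv.constVAdd A '' P)) := by
        rw [← Set.image_comp (IsometryEquiv.symm _), IsometryEquiv.symm_comp_self, Set.image_id]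
    _ = (IsometryEquiv.constVAdd A).symm.trans f '' (A +ᵥ P) := by
        rw [← Set.image_comp]; rfl

lemma isPeriodicTiling_halfTurnTiles {L : AddSubgroup Plane} {a v w : Plane} {K : Set Plane}
    (hv : v ∈ L) (hw : w ∈ L) (hvw : LinearIndependent ℝ ![v, w]) :
    IsPeriodicTiling (halfTurnTiles L a K) := by
  have htrans : ∀ (u : Plane) (t : Set Plane), TranslateSet u t = u +ᵥ t := fun u t ↦ by
    simp only [TranslateSet, ← Set.image_vadd, vadd_eq_add, add_comm]
  refine ⟨v, w, hvw, fun t ht ↦ ?_, fun t ht ↦ ?_⟩ <;> rw [htrans]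
  exacts [vadd_mem_halfTurnTiles hv ht, vadd_mem_halfTurnTiles hw ht]

end PlaneTilings

section HalfTurnProfile

open scoped Pointwise

/-- The graphs of `f` and `w` bound, over `[0, 1]`, a cell whose upper boundary continues
periodically to a curve with a half-turn about `(b / 2, h / 2)`, and whose lower boundary has a
half-turn about `(1 / 2, -c / 2)`. -/
structure IsHalfTurnProfile (f w : ℝ → ℝ) (b c h : ℝ) : Prop where
  periodic : Function.Periodic w 1
  upper_sub : ∀ x, w (b - x) = h - w x
  lower_sub : ∀ x, f (1 - x) = -c - f x
  upper_nonneg : ∀ x, 0 ≤ w x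
  lower_nonpos : ∀ x ∈ Set.Icc 0 1, f x ≤ 0
  height_pos : 0 < h + c

/-- The upper boundary of the `n`-th row: the graph of `w` translated by `n • (b, k)`. -/
def roof (w : ℝ → ℝ) (b k : ℝ) (n : ℤ) (x : ℝ) : ℝ := w (x - n * b) + n * k

lemma roof_zero (w : ℝ → ℝ) (b k : ℝ) : roof w b k 0 = w := by
  funext x
  simp [roof]

/-- The open cell of `rowLattice b k` cut out by the lines `x = 0`, `x = 1` and by the row
boundaries of index `-1` and `0`. -/
def unitCell (w : ℝ → ℝ) (b k : ℝ) : Set (ℝ × ℝ) :=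
  regionBetween (roof w b k (-1)) w (Set.Ioo 0 1)

/-- The lattice spanned by the step `(1, 0)` along a row and the step `(b, k)` to the next row. -/
def rowLattice (b k : ℝ) : AddSubgroup (ℝ × ℝ) := AddSubgroup.closure {(1, 0), (b, k)}

lemma mem_rowLattice {b k : ℝ} {v : ℝ × ℝ} :
    v ∈ rowLattice b k ↔ ∃ m n : ℤ, (m + n * b, n * k) = v := by
  simp [rowLattice, AddSubgroup.mem_closure_pair]

lemma roof_translate {w : ℝ → ℝ} (hw : Function.Periodic w 1) (b k : ℝ) (m n j : ℤ)
    (x : ℝ) :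
    roof w b k (n + j) x = roof w b k j (x - (m + n * b)) + n * k := by
  have harg : x - (m + n * b) - j * b = x - (n + j : ℤ) * b - m * 1 := by push_cast; ring
  rw [roof, roof, harg, hw.sub_int_mul_eq]
  push_cast
  ring

lemma of_mem_vadd_unitCell {w : ℝ → ℝ} {b k : ℝ} (hw : Function.Periodic w 1) {m n : ℤ}
    {p : ℝ × ℝ} (hp : p ∈ ((m + n * b, n * k) : ℝ × ℝ) +ᵥ unitCell w b k) :
    ⌊p.1 - n * b⌋ = m ∧ p.2 ∈ Set.Ioo (roof w b k (n - 1) p.1) (roof w b k n p.1) := by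
  rw [Set.mem_vadd_set_iff_neg_vadd_mem] at hp
  obtain ⟨hx, hy⟩ := hp
  simp only [vadd_eq_add, neg_add_eq_sub, Prod.fst_sub, Prod.snd_sub] at hx hy
  have htop := roof_translate hw b k m n 0 p.1
  have hbot := roof_translate hw b k m n (-1) p.1
  rw [add_zero, roof_zero] at htop
  rw [← sub_eq_add_neg] at hbot
  refine ⟨Int.floor_eq_iff.mpr ⟨by linarith [hx.1], by linarith [hx.2]⟩, ?_, ?_⟩
  · linarith [hy.1]
  · linarith [hy.2]

lemma exists_mem_Ioc_of_tendsto {α : Type*} [LinearOrder α] [NoMaxOrder α] [NoMinOrder α]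
    {a : ℤ → α}
    (htop : Filter.Tendsto a Filter.atTop Filter.atTop)
    (hbot : Filter.Tendsto a Filter.atBot Filter.atBot) (y : α) :
    ∃ n, y ∈ Set.Ioc (a (n - 1)) (a n) := by
  obtain ⟨N, hN⟩ := Filter.eventually_atBot.mp (hbot.eventually_lt_atBot y)
  obtain ⟨n, hn, hmin⟩ := Int.exists_least_of_bdd (P := fun n ↦ y ≤ a n)
    ⟨N, fun z hz ↦ le_of_not_ge fun hzN ↦ (hN z hzN).not_ge hz⟩ (htop.eventually_ge_atTop y).exists
  exact ⟨n, lt_of_not_ge fun h ↦ (hmin _ h).not_gt (sub_one_lt n), hn⟩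

namespace IsHalfTurnProfile

variable {f w : ℝ → ℝ} {b c h : ℝ}

lemma upper_le (H : IsHalfTurnProfile f w b c h) (x : ℝ) : w x ≤ h := by
  linarith [H.upper_sub x, H.upper_nonneg (b - x)]

lemma neg_le_lower (H : IsHalfTurnProfile f w b c h) {x : ℝ} (hx : x ∈ Set.Icc 0 1) :
    -c ≤ f x := by
  have hx' : 1 - x ∈ Set.Icc (0 : ℝ) 1 := ⟨sub_nonneg.mpr hx.2, sub_le_self 1 hx.1⟩
  linarith [H.lower_sub x, H.lower_nonpos (1 - x) hx']

lemma depth_nonneg (H : IsHalfTurnProfile f w b c h) : 0 ≤ c := by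
  have h0 : (0 : ℝ) ∈ Set.Icc 0 1 := ⟨le_rfl, zero_le_one⟩
  linarith [H.neg_le_lower h0, H.lower_nonpos 0 h0]

lemma monotone_roof (H : IsHalfTurnProfile f w b c h) (x : ℝ) :
    Monotone fun n ↦ roof w b (h + c) n x := by
  refine monotone_int_of_le_succ fun n ↦ ?_
  have hlow := H.upper_nonneg (x - (n + 1 : ℤ) * b)
  have hup := H.upper_le (x - n * b)
  simp only [roof, Int.cast_add, Int.cast_one] at hlow ⊢
  linarith [H.depth_nonneg]

lemma exists_mem_Ioc_roof (H : IsHalfTurnProfile f w b c h) (x y : ℝ) :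
    ∃ n, y ∈ Set.Ioc (roof w b (h + c) (n - 1) x) (roof w b (h + c) n x) := by
  have htop : Filter.Tendsto (fun n ↦ roof w b (h + c) n x) Filter.atTop Filter.atTop :=
    Filter.tendsto_atTop_mono (fun n ↦ le_add_of_nonneg_left (H.upper_nonneg _))
      (tendsto_intCast_atTop_atTop.atTop_mul_const H.height_pos)
  have hbot : Filter.Tendsto (fun n ↦ roof w b (h + c) n x) Filter.atBot Filter.atBot :=
    Filter.tendsto_atBot_mono (fun n ↦ add_le_add_left (H.upper_le _) _)
      (Filter.tendsto_atBot_add_const_left _ h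
        ((tendsto_intCast_atBot_iff.mpr Filter.tendsto_id).atBot_mul_const H.height_pos))
  exact exists_mem_Ioc_of_tendsto htop hbot y

lemma vadd_neg_cell (H : IsHalfTurnProfile f w b c h) :
    ((1, -c) : ℝ × ℝ) +ᵥ -closedRegionBetween f w (Set.Icc 0 1) =
      closedRegionBetween (roof w b (h + c) (-1)) f (Set.Icc 0 1) := by
  ext ⟨x, y⟩
  have hw : w (1 - x) = -c - roof w b (h + c) (-1) x := by
    have hturn : w (b - (x + b)) = h - w (x + b) := H.upper_sub _
    rw [sub_add_cancel_right, ← H.periodic.sub_eq'] at hturn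
    rw [roof, hturn]
    norm_num
    ring
  have hf := H.lower_sub x
  rw [Set.mem_vadd_set_iff_neg_vadd_mem, Set.mem_neg]
  simp only [closedRegionBetween, Set.mem_Icc, vadd_eq_add, Set.mem_ofPred_eq,
    Prod.neg_mk, Prod.mk_add_mk, neg_add_rev, neg_neg, neg_add_eq_sub, neg_sub, hw, hf]
  constructor <;> rintro ⟨⟨hx0, hx1⟩, hy0, hy1⟩ <;> refine ⟨⟨?_, ?_⟩, ?_, ?_⟩ <;> linarith

lemma pairwiseDisjoint_vadd_unitCell (H : IsHalfTurnProfile f w b c h) :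
    (rowLattice b (h + c) : Set (ℝ × ℝ)).PairwiseDisjoint (· +ᵥ unitCell w b (h + c)) := by
  intro v hv v' hv' hne
  refine Set.disjoint_left.mpr fun p hp hp' ↦ hne ?_
  obtain ⟨m, n, rfl⟩ := mem_rowLattice.mp hv
  obtain ⟨m', n', rfl⟩ := mem_rowLattice.mp hv'
  obtain ⟨hm, hn⟩ := of_mem_vadd_unitCell H.periodic hp
  obtain ⟨hm', hn'⟩ := of_mem_vadd_unitCell H.periodic hp'
  obtain rfl : n = n' := by
    by_contra hnn'
    exact Set.disjoint_left.mp ((H.monotone_roof p.1).pairwise_disjoint_on_Ioo_pred hnn') hn hn'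
  rw [← hm, hm']

lemma exists_mem_vadd_cell (H : IsHalfTurnProfile f w b c h) (p : ℝ × ℝ) :
    ∃ v ∈ rowLattice b (h + c), p ∈ v +ᵥ closedRegionBetween f w (Set.Icc 0 1) ∨
      p ∈ v +ᵥ closedRegionBetween (roof w b (h + c) (-1)) f (Set.Icc 0 1) := by
  obtain ⟨n, hn⟩ := H.exists_mem_Ioc_roof p.1 p.2
  set m := ⌊p.1 - n * b⌋
  refine ⟨_, mem_rowLattice.mpr ⟨m, n, rfl⟩, ?_⟩
  have hx : p.1 - (m + n * b) ∈ Set.Icc (0 : ℝ) 1 := by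
    have := Int.floor_le (p.1 - n * b)
    have := Int.lt_floor_add_one (p.1 - n * b)
    constructor <;> linarith
  have htop := roof_translate H.periodic b (h + c) m n 0 p.1
  have hbot := roof_translate H.periodic b (h + c) m n (-1) p.1
  rw [add_zero, roof_zero] at htop
  rw [← sub_eq_add_neg] at hbot
  simp only [Set.mem_vadd_set_iff_neg_vadd_mem, closedRegionBetween, Set.mem_Icc, vadd_eq_add,
    Set.mem_ofPred_eq, neg_add_eq_sub, Prod.fst_sub, Prod.snd_sub]
  rcases le_total (f (p.1 - (m + n * b))) (p.2 - n * (h + c)) with hle | hle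
  · exact .inl ⟨hx, hle, by linarith [hn.2]⟩
  · exact .inr ⟨hx, by linarith [hn.1], hle⟩

lemma interior_upperCell_subset (H : IsHalfTurnProfile f w b c h) :
    interior (closedRegionBetween f w (Set.Icc 0 1)) ⊆ unitCell w b (h + c) := fun p hp ↦ by
  obtain ⟨hx, hy⟩ := interior_closedRegionBetween_subset hp
  have hx' := interior_subset hx
  rw [interior_Icc] at hx
  have hlow : roof w b (h + c) (-1) p.1 ≤ f p.1 := by
    have hw := H.upper_le (p.1 - (-1 : ℤ) * b)
    have hf := H.neg_le_lower hx'
    rw [roof, Int.cast_neg, Int.cast_one] at *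
    linarith
  exact ⟨hx, hlow.trans_lt hy.1, hy.2⟩

lemma interior_lowerCell_subset (H : IsHalfTurnProfile f w b c h) :
    interior (closedRegionBetween (roof w b (h + c) (-1)) f (Set.Icc 0 1)) ⊆
      unitCell w b (h + c) := fun p hp ↦ by
  obtain ⟨hx, hy⟩ := interior_closedRegionBetween_subset hp
  have hup : f p.1 ≤ w p.1 :=
    (H.lower_nonpos p.1 (interior_subset hx)).trans (H.upper_nonneg p.1)
  rw [interior_Icc] at hx
  exact ⟨hx, hy.1, hy.2.trans_le hup⟩

lemma isTiling_halfTurnTiles (H : IsHalfTurnProfile f w b c h) :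
    IsTiling (halfTurnTiles (rowLattice b (h + c)) (1, -c)
      (closedRegionBetween f w (Set.Icc 0 1))) := by
  have hdisj : Disjoint (interior (closedRegionBetween f w (Set.Icc 0 1)))
      (interior (closedRegionBetween (roof w b (h + c) (-1)) f (Set.Icc 0 1))) :=
    Set.disjoint_left.mpr fun p hp hp' ↦ (interior_closedRegionBetween_subset hp).2.1.not_gt
      (interior_closedRegionBetween_subset hp').2.2
  rw [halfTurnTiles, H.vadd_neg_cell]
  refine isTiling_image2_vadd (fun p ↦ ?_) H.pairwiseDisjoint_vadd_unitCell ?_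
    (Set.pairwise_pair.mpr fun _ ↦ ⟨hdisj, hdisj.symm⟩)
  · obtain ⟨v, hv, hp | hp⟩ := H.exists_mem_vadd_cell p
    exacts [⟨v, hv, _, .inl rfl, hp⟩, ⟨v, hv, _, .inr rfl, hp⟩]
  · rintro _ (rfl | rfl)
    exacts [H.interior_upperCell_subset, H.interior_lowerCell_subset]

end IsHalfTurnProfile

end HalfTurnProfile

section Pentagon

lemma isHalfTurnProfile_base_wave {b h d : ℝ} (hb : b ∈ Set.Ioo 0 1) (hh : 0 < h) (hd : 0 < d) :
    IsHalfTurnProfile (base d) (wave b h) b (1 + d) h where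
  periodic := periodic_wave b h
  upper_sub := wave_sub_left hb hh
  lower_sub := base_one_sub d
  upper_nonneg := wave_nonneg hb hh
  lower_nonpos _ hx := base_nonpos hd hx
  height_pos := by linarith

lemma linearIndependent_rowLattice_basis {b k : ℝ} (hk : k ≠ 0) :
    LinearIndependent ℝ ![((1, 0) : ℝ × ℝ), (b, k)] := by
  rw [LinearIndependent.pair_iff]
  intro s t hst
  simp only [Prod.smul_mk, Prod.mk_add_mk, smul_eq_mul, mul_one, mul_zero, zero_add,
    Prod.mk_eq_zero, mul_eq_zero, hk, or_false] at hst
  simpa [hst.2] using hst.1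

lemma exists_periodic_tiling_image_normalPentagon (φ : (ℝ × ℝ) ≃ₗ[ℝ] Plane) {b h d : ℝ}
    (hb : b ∈ Set.Ioo 0 1) (hh : 0 < h) (hd : 0 < d) :
    ∃ T, IsMonohedralTiling (φ '' normalPentagon b h d) T ∧ IsPeriodicTiling T := by
  let L := (rowLattice b (h + (1 + d))).map (φ : ℝ × ℝ →+ Plane)
  have hT : IsTiling (halfTurnTiles L (φ (1, -(1 + d))) (φ '' normalPentagon b h d)) := by
    rw [normalPentagon_eq_closedRegionBetween_wave hb hh hd]
    convert! (isHalfTurnProfile_base_wave hb hh hd).isTiling_halfTurnTiles.image_homeomorph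
      φ.toContinuousLinearEquiv.toHomeomorph using 1
    exact (image_halfTurnTiles (φ : ℝ × ℝ →+ Plane) _ _ _).symm
  have hmem : ∀ v ∈ ({(1, 0), (b, h + (1 + d))} : Set (ℝ × ℝ)), φ v ∈ L := fun v hv ↦
    AddSubgroup.mem_map_of_mem _ (AddSubgroup.subset_closure hv)
  have hli : LinearIndependent ℝ ![φ (1, 0), φ (b, h + (1 + d))] := by
    convert! (linearIndependent_rowLattice_basis (b := b) (k := h + (1 + d)) (by positivity)).map'
      φ.toLinearMap φ.ker using 1
    ext1 i; fin_cases i <;> rfl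
  exact ⟨_, isMonohedralTiling_halfTurnTiles hT,
    isPeriodicTiling_halfTurnTiles (hmem _ (by simp)) (hmem _ (by simp)) hli⟩

lemma finrank_plane : Module.finrank ℝ Plane = 2 := finrank_euclideanSpace_fin

lemma IsEdgeOf.sSameSide {P : Set Plane} {A B X Y : Plane} (hAB : IsEdgeOf (segment ℝ A B) P)
    (hP : Convex ℝ P) (hne : A ≠ B) (hX : X ∈ P.extremePoints ℝ) (hXAB : X ∉ ({A, B} : Set Plane))
    (hY : Y ∈ P.extremePoints ℝ) (hYAB : Y ∉ ({A, B} : Set Plane)) :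
    line[ℝ, A, B].SSameSide X Y := by
  obtain ⟨-, -, -, -, hext⟩ := hAB
  have hA : A ∈ P := hext.subset (left_mem_segment ℝ A B)
  have hB : B ∈ P := hext.subset (right_mem_segment ℝ A B)
  have hnotMem : ∀ Z ∈ P.extremePoints ℝ, Z ∉ ({A, B} : Set Plane) → Z ∈ P \ segment ℝ A B :=
    fun Z hZ hZAB ↦ ⟨hZ.1, fun hseg ↦ hZAB <|
      ((mem_extremePoints_iff_forall_segment.mp hZ).2 A hA B hB hseg).imp Eq.symm Eq.symm⟩
  exact sSameSide_of_isExtreme_segment finrank_plane hP hext hne (hnotMem X hX hXAB)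
    (hnotMem Y hY hYAB)

namespace IsConvexPentagonWithVertices

variable {A B C D E : Plane} {P : Set Plane}

lemma nodup (hP : IsConvexPentagonWithVertices A B C D E P) : [A, B, C, D, E].Nodup := by
  classical
  have hlist : (([A, B, C, D, E].toFinset : Finset Plane) : Set Plane) = {A, B, C, D, E} := by
    simp
  have hcard := hP.2.2.1
  rw [← hlist, Set.ncard_coe_finset] at hcard
  exact Multiset.toFinset_card_eq_card_iff_nodup.mp hcard

lemma sSameSide (hP : IsConvexPentagonWithVertices A B C D E P) :
    line[ℝ, A, B].SSameSide E C ∧ line[ℝ, B, C].SSameSide A D ∧ line[ℝ, C, D].SSameSide A B ∧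
      line[ℝ, E, A].SSameSide C B := by
  have hne := hP.nodup
  simp only [List.nodup_cons, List.mem_cons, List.not_mem_nil, or_false, not_or, not_false_eq_true,
    List.nodup_nil, and_true] at hne
  obtain ⟨hhull, hvert, -, hAB, hBC, hCD, -, hEA⟩ := hP
  have hconv : Convex ℝ P := hhull ▸ convex_convexHull ℝ _
  have hext : ∀ X ∈ ({A, B, C, D, E} : Set Plane), X ∈ P.extremePoints ℝ := fun X hX ↦ hvert ▸ hX
  refine ⟨hAB.sSameSide hconv ?_ (hext E ?_) ?_ (hext C ?_) ?_,
    hBC.sSameSide hconv ?_ (hext A ?_) ?_ (hext D ?_) ?_,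
    hCD.sSameSide hconv ?_ (hext A ?_) ?_ (hext B ?_) ?_,
    hEA.sSameSide hconv ?_ (hext C ?_) ?_ (hext B ?_) ?_⟩ <;>
    simp [hne, eq_comm]

end IsConvexPentagonWithVertices

end Pentagon

/-- Every convex pentagon `ABCDE` of type 1 (`A + B + C = 360°`) admits a
periodic monohedral tiling of the plane. -/
theorem type1_pentagon_admits_periodic_tiling
    (A B C D E : Plane) (P : Set Plane)
    (hP : IsConvexPentagonWithVertices A B C D E P)
    (hangle : EuclideanGeometry.angle E A B + EuclideanGeometry.angle A B C +
        EuclideanGeometry.angle B C D = 2 * Real.pi) :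
    ∃ T : Set (Set Plane), IsMonohedralTiling P T ∧ IsPeriodicTiling T := by
  have : Fact (Module.finrank ℝ Plane = 2) := ⟨finrank_plane⟩
  obtain ⟨hEC, hAD, hAB, hCB⟩ := hP.sSameSide
  have hCD : C ≠ D := by rintro rfl; exact hAD.right_notMem (right_mem_affineSpan_pair ℝ B C)
  have hpar : SameRay ℝ (E - A) (D - C) := sameRay_of_angle_sum_eq_two_pi hEC hAD hangle
  obtain ⟨φ, b, h, d, hb, hh, hd, hnormal⟩ :=
    exists_eq_vadd_image_normalPentagon finrank_plane hCD hEC hAB hCB hpar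
  obtain ⟨T, hT, hperiodic⟩ := exists_periodic_tiling_image_normalPentagon φ hb hh hd
  rw [hP.1, hnormal]
  exact ⟨T, hT.vadd_prototile A, hperiodic⟩
end
end
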